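/- Let U ⊆ ℝⁿ be open and let E be a minimal set of dimension d in U, i.e., an A-almost-minimal set of dimension d in U with gauge function h = 0. Let x ∈ U and R > 0 be such that B(x,R) ⊆ U. Then the function r ↦ r^{−d} H^d(E ∩ B(x,r)) is nondecreasing on (0,R]. -/

import Mathlib

/-!
The proof compares `E` with its images under Lipschitz maps that are the identity outside a closed
ball of `U` and preserve that ball (`minimal_le`).

**Monotonicity on rectifiable sets.** The competitor is the radial map about `x` which is a
homothety of Jacobian `1 / 2` on `B(x, r₁)` and whose profile in the shell `r₁ ≤ ρ ≤ r₂` is chosen so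
that its `d`-dimensional Jacobian on any `d`-plane is at most a constant `α` (`exists_profile`). The
value of `α` is exactly the one for which the inequality `H(E ∩ W) ≤ H(φ(E ∩ W))` rearranges to
`r₁⁻ᵈ H(E ∩ B(x, r₁)) ≤ r₂⁻ᵈ H(E ∩ B(x, r₂))`, so no limit, coarea formula or cone comparison is
needed (`monotone_of_rect`). What is needed is that Jacobians may be measured on `d`-planes, which
holds on pieces of Lipschitz graphs (`GraphPiece.hausdorff_image_le`), hence on a set covered up to a
null set by countably many of them.

**Rectifiability of minimal sets.** By exhaustion (`minimal_rect`) it is enough that a compact part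
`K` of `E` meeting every graph piece in a null set is null (`unrect_null`). Push a neighbourhood of
`K` onto the `d`-skeleton of a fine grid of parallelepipeds by the Federer–Fleming retraction,
regularised near the dual skeleton and cut off close to `K`. The grid is given by a *frame* of `n`
affine functions, averaged over a box of frames. On average the image of the part of `E` near `K` has
measure at most a constant times the original measure, and the regularised region contributes little
(`avg_cost`); in the remaining region the retraction factors through the projective maps
`(ℓ_{I i} / ℓ_j)_i`, which send `K` to null sets for almost every frame (`defo_null`). A frame with
cost at most the average (`exists_frame`) gives a competitor that contradicts minimality.

**A Besicovitch–Federer projection theorem.** That almost every frame projects `K` to null sets is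
`goodFrame_ae`. For almost every frame, at almost every point of `K` thin cones around the fibre of
the projective map have density zero, or infinite upper density, or the fibre meets `K` again
arbitrarily close by (`tame_ae`, by a one-point argument over shears of the frame and the dichotomy
`tri`). Points of the first kind form a null set because `K` contains no graph piece
(`zero_density_null`); the other two kinds have null image, by differentiation of the projected
measure and by finiteness of almost every fibre (`infinite_density_null`, `infinite_fibre_null`).
-/

open MeasureTheory Metric Set Filter Bornology
open scoped ENNReal NNReal Topology InnerProductSpace

noncomputable section

/-- `ℝⁿ` as a Euclidean space. -/
abbrev Euc (n : ℕ) : Type := EuclideanSpace ℝ (Fin n)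

/-- The set `W_t = {x ∈ U : φ_t x ≠ x}` associated with a one-parameter family of maps. -/
def defW {n : ℕ} (U : Set (Euc n)) (φ : ℝ → Euc n → Euc n) (t : ℝ) : Set (Euc n) :=
  {x ∈ U | φ t x ≠ x}

/-- The set `Ŵ = ⋃_{t ∈ [0,1]} (W_t ∪ φ_t(W_t))`. -/
def defWhat {n : ℕ} (U : Set (Euc n)) (φ : ℝ → Euc n → Euc n) : Set (Euc n) :=
  ⋃ t ∈ Icc (0:ℝ) 1, (defW U φ t ∪ φ t '' defW U φ t)

/-- An admissible `δ`-deformation in `U`: a one-parameter family `φ_t : U → U`,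
`t ∈ [0,1]`, with `φ_0 = id`, jointly continuous, `φ_1` Lipschitz, and such that
`Ŵ` is relatively compact in `U` with `diam Ŵ < δ`. -/
def IsAdmissibleDef {n : ℕ} (U : Set (Euc n)) (δ : ℝ) (φ : ℝ → Euc n → Euc n) : Prop :=
  (∀ t ∈ Icc (0:ℝ) 1, MapsTo (φ t) U U) ∧
  (∀ x ∈ U, φ 0 x = x) ∧
  ContinuousOn (fun p : ℝ × Euc n => φ p.1 p.2) (Icc (0:ℝ) 1 ×ˢ U) ∧
  (∃ K : ℝ≥0, LipschitzOnWith K (φ 1) U) ∧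
  IsCompact (closure (defWhat U φ)) ∧
  closure (defWhat U φ) ⊆ U ∧
  Metric.diam (defWhat U φ) < δ

/-- `E` is an A-almost-minimal set of dimension `d` in the open set `U`, with gauge
function `h`: `E` is closed in `U`, has locally finite `H^d`-measure, and for every
`δ > 0` and every admissible `δ`-deformation `{φ_t}` in `U`,
`H^d(E ∩ W₁) ≤ H^d(φ₁(E ∩ W₁)) + h(δ) δ^d`. -/
def IsAAlmostMinimal (n d : ℕ) (U E : Set (Euc n)) (h : ℝ → ℝ≥0∞) : Prop :=
  E ⊆ U ∧ closure E ∩ U ⊆ E ∧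
  (∀ (x : Euc n) (r : ℝ), closedBall x r ⊆ U → μH[(d:ℝ)] (E ∩ closedBall x r) < ⊤) ∧
  ∀ δ : ℝ, 0 < δ → ∀ φ : ℝ → Euc n → Euc n, IsAdmissibleDef U δ φ →
    μH[(d:ℝ)] (E ∩ defW U φ 1) ≤
      μH[(d:ℝ)] (φ 1 '' (E ∩ defW U φ 1)) + h δ * ENNReal.ofReal (δ ^ d)

/-! ### Hausdorff measure and linear maps -/

/-- Comparing two images of the same set: if `f` expands distances at most `K` times as much as
`g` does, then the image of `S` under `f` is a `K`-Lipschitz image of its image under `g`. -/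
lemma hausdorff_image_le_image {α X Y : Type*} [MetricSpace X] [MeasurableSpace X] [BorelSpace X]
    [MetricSpace Y] [MeasurableSpace Y] [BorelSpace Y] (f : α → X) (g : α → Y) (S : Set α)
    (K : ℝ) (hK : 0 ≤ K) (d : ℕ)
    (h : ∀ x ∈ S, ∀ y ∈ S, dist (f x) (f y) ≤ K * dist (g x) (g y)) :
    μH[(d:ℝ)] (f '' S) ≤ ENNReal.ofReal (K ^ d) * μH[(d:ℝ)] (g '' S) := by
  rcases S.eq_empty_or_nonempty with rfl | ⟨x0, hx0⟩
  · simp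
  have : Nonempty α := ⟨x0⟩
  have hinv : ∀ y ∈ g '' S, Function.invFunOn g S y ∈ S ∧ g (Function.invFunOn g S y) = y :=
    fun y hy => ⟨Function.invFunOn_mem hy, Function.invFunOn_eq hy⟩
  have hL : LipschitzOnWith K.toNNReal (f ∘ Function.invFunOn g S) (g '' S) := by
    refine LipschitzOnWith.of_dist_le_mul fun y hy z hz => ?_
    have := h _ (hinv y hy).1 _ (hinv z hz).1
    rw [(hinv y hy).2, (hinv z hz).2] at this
    rwa [Real.coe_toNNReal _ hK]
  have hsub : f '' S ⊆ (f ∘ Function.invFunOn g S) '' (g '' S) := by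
    rintro _ ⟨x, hx, rfl⟩
    refine ⟨g x, ⟨x, hx, rfl⟩, ?_⟩
    have h1 := hinv (g x) ⟨x, hx, rfl⟩
    have := h _ h1.1 _ hx
    rw [h1.2, dist_self, mul_zero] at this
    exact dist_le_zero.1 this
  refine (measure_mono hsub).trans ?_
  have := hL.hausdorffMeasure_image_le (d := (d:ℝ)) (Nat.cast_nonneg d)
  rw [ENNReal.ofReal_pow hK, ENNReal.ofReal]
  simpa using this

/-- A rank-one stretching of factor `c ≥ 1` along a unit vector increases the measure of subsets of
a `d`-plane at most by the factor `c`. -/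
lemma hausdorff_stretch_le {n d : ℕ} (J : Euc d →ₗᵢ[ℝ] Euc n) (e : Euc n) (he : ‖e‖ = 1)
    (c : ℝ) (hc : 1 ≤ c) (S : Set (Euc d)) :
    μH[(d:ℝ)] ((fun w => J w + ((c - 1) * ⟪e, J w⟫_ℝ) • e) '' S)
      ≤ ENNReal.ofReal c * μH[(d:ℝ)] S := by
  set p : Euc d := (J.toContinuousLinearMap).adjoint e with hp
  have hpe : ∀ w, ⟪e, J w⟫_ℝ = ⟪p, w⟫_ℝ := fun w => by
    rw [hp, ContinuousLinearMap.adjoint_inner_left]; rfl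
  have hp1 : ‖p‖ ^ 2 ≤ 1 := by
    have h1 : ‖p‖ ^ 2 = ⟪e, J p⟫_ℝ := by rw [hpe, real_inner_self_eq_norm_sq]
    have h2 : ⟪e, J p⟫_ℝ ≤ ‖e‖ * ‖J p‖ := real_inner_le_norm _ _
    rw [he, J.norm_map, one_mul] at h2
    nlinarith [norm_nonneg p]
  set q := ‖p‖ ^ 2 with hq
  have hq0 : 0 ≤ q := by positivity
  -- `κ` is the Jacobian of the stretching restricted to the plane
  set κ := Real.sqrt (1 + q * (c ^ 2 - 1)) with hκ
  have hc2 : 0 ≤ c ^ 2 - 1 := by nlinarith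
  have hκ2 : κ ^ 2 = 1 + q * (c ^ 2 - 1) := Real.sq_sqrt (by positivity)
  have hκ0 : 0 ≤ κ := Real.sqrt_nonneg _
  have hκ1 : 1 ≤ κ := by
    by_contra hh
    nlinarith [mul_nonneg hq0 hc2]
  have hκc : κ ≤ c := by
    by_contra hh
    nlinarith
  obtain ⟨γ, hγ1, hγ2⟩ : ∃ γ : ℝ, 1 + γ * q = κ ∧
      ∀ w : Euc d, (2 * γ + γ ^ 2 * q) * ⟪p, w⟫_ℝ ^ 2 = (c ^ 2 - 1) * ⟪p, w⟫_ℝ ^ 2 := by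
    by_cases h0 : q = 0
    · have hp0 : p = 0 := by
        rw [hq] at h0
        exact norm_eq_zero.1 (pow_eq_zero_iff (two_ne_zero)|>.1 h0)
      refine ⟨0, ?_, fun w => by simp [hp0]⟩
      rw [hκ, h0]; simp
    · refine ⟨(κ - 1) / q, by field_simp; ring, fun w => ?_⟩
      have : 2 * ((κ - 1) / q) + ((κ - 1) / q) ^ 2 * q = (κ ^ 2 - 1) / q := by
        field_simp; ring
      rw [this, hκ2]; field_simp; ring
  set N : Euc d →ₗ[ℝ] Euc d := LinearMap.transvection (innerSL ℝ p).toLinearMap (γ • p) with hN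
  have hNw : ∀ w, N w = w + (⟪p, w⟫_ℝ * γ) • p := fun w => by
    rw [hN, LinearMap.transvection.apply]; simp [smul_smul]
  have hdet : LinearMap.det N = κ := by
    rw [hN, LinearMap.transvection.det, ← hγ1]
    simp [hq]
  set M : Euc d →ₗ[ℝ] Euc n :=
    { toFun := fun w => J w + ((c - 1) * ⟪e, J w⟫_ℝ) • e
      map_add' := fun x y => by simp [inner_add_right, mul_add, add_smul]; abel
      map_smul' := fun r x => by
        simp [inner_smul_right, smul_smul]
        congr 1; ring } with hM
  have hnorm : ∀ w, ‖M w‖ = ‖N w‖ := by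
    intro w
    have e1 : ‖M w‖ ^ 2 = ‖w‖ ^ 2 + (c ^ 2 - 1) * ⟪p, w⟫_ℝ ^ 2 := by
      change ‖J w + ((c - 1) * ⟪e, J w⟫_ℝ) • e‖ ^ 2 = _
      rw [norm_add_sq_real, inner_smul_right, norm_smul, he, real_inner_comm e (J w), hpe, J.norm_map,
        mul_one, Real.norm_eq_abs, sq_abs]
      ring
    have e2 : ‖N w‖ ^ 2 = ‖w‖ ^ 2 + (c ^ 2 - 1) * ⟪p, w⟫_ℝ ^ 2 := by
      rw [hNw, norm_add_sq_real, inner_smul_right, norm_smul, real_inner_comm p w, ← hγ2, mul_pow,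
        Real.norm_eq_abs, sq_abs]
      ring
    exact (sq_eq_sq₀ (norm_nonneg _) (norm_nonneg _)).1 (e1.trans e2.symm)
  have h1 := hausdorff_image_le_image (fun w => M w) (fun w => N w) S 1 zero_le_one d (fun x _ y _ => by
    rw [dist_eq_norm, dist_eq_norm, ← map_sub, ← map_sub, hnorm]; simp)
  have hh : (μH[(d:ℝ)] : Measure (Euc d)).IsAddHaarMeasure := by
    have := isAddHaarMeasure_hausdorffMeasure (E := Euc d)
    simpa using this
  have h2 : μH[(d:ℝ)] ((fun w => N w) '' S) = ENNReal.ofReal κ * μH[(d:ℝ)] S := by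
    have := Measure.addHaar_image_linearMap (μH[(d:ℝ)] : Measure (Euc d)) N S
    rw [hdet, abs_of_nonneg hκ0] at this
    exact this
  rw [h2] at h1
  calc _ ≤ _ := h1
    _ ≤ _ := by
      simp only [ENNReal.ofReal_one, one_pow, one_mul]
      gcongr

/-- The measure of a subset of a `d`-plane grows at most by the factor `b ^ d * c` under
`b • (id + (c - 1) e ⊗ e)`. -/
lemma hausdorff_plane_stretch_le {n d : ℕ} (V : Submodule ℝ (Euc n)) (hV : Module.finrank ℝ V = d)
    (e : Euc n) (he : ‖e‖ = 1) (b c : ℝ) (hb : 0 ≤ b) (hc : 1 ≤ c) (A : Set (Euc n))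
    (hA : A ⊆ V) :
    μH[(d:ℝ)] ((fun w => b • (w + ((c - 1) * ⟪e, w⟫_ℝ) • e)) '' A)
      ≤ ENNReal.ofReal (b ^ d * c) * μH[(d:ℝ)] A := by
  let B := (stdOrthonormalBasis ℝ V).reindex (finCongr hV)
  let J : Euc d →ₗᵢ[ℝ] Euc n := V.subtypeₗᵢ.comp B.repr.symm.toLinearIsometry
  have hAJ : A = J '' (J ⁻¹' A) := by
    rw [image_preimage_eq_of_subset]
    intro a ha
    exact ⟨B.repr ⟨a, hA ha⟩, by simp [J]⟩
  set S := J ⁻¹' A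
  have h1 : (fun w => b • (w + ((c - 1) * ⟪e, w⟫_ℝ) • e)) '' A =
      (fun v => b • v) '' ((fun w => J w + ((c - 1) * ⟪e, J w⟫_ℝ) • e) '' S) := by
    rw [hAJ, image_image, image_image]
  rw [h1]
  have h2 := hausdorff_image_le_image (fun v : Euc n => b • v) (fun v => v)
    ((fun w => J w + ((c - 1) * ⟪e, J w⟫_ℝ) • e) '' S) b hb d (fun x _ y _ => by
      rw [dist_smul₀]; simp [abs_of_nonneg hb])
  rw [image_id'] at h2
  have h3 := hausdorff_stretch_le J e he c hc S
  have h4 : μH[(d:ℝ)] A = μH[(d:ℝ)] S := by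
    rw [hAJ]
    exact J.isometry.hausdorffMeasure_image (Or.inl (Nat.cast_nonneg d)) S
  rw [h4]
  refine h2.trans ((mul_le_mul_right h3 _).trans (le_of_eq ?_))
  rw [ENNReal.ofReal_mul (by positivity), mul_assoc]

/-! ### Area inequality on graph pieces -/

/-- A set on which some surjective linear map to `ℝᵈ` is bi-Lipschitz; equivalently, a subset of a
Lipschitz graph over a `d`-plane. -/
def GraphPiece (n d : ℕ) (P : Set (Euc n)) : Prop :=
  ∃ π : Euc n →L[ℝ] Euc d, Function.Surjective π ∧ ∃ s : ℝ, 0 < s ∧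
    ∀ x ∈ P, ∀ y ∈ P, s * ‖x - y‖ ≤ ‖π (x - y)‖

lemma GraphPiece.mono {n d : ℕ} {P Q : Set (Euc n)} (h : GraphPiece n d P) (hQ : Q ⊆ P) :
    GraphPiece n d Q := by
  obtain ⟨π, hπ, s, hs, h⟩ := h
  exact ⟨π, hπ, s, hs, fun x hx y hy => h x (hQ hx) y (hQ hy)⟩

lemma graphPiece_closure {n d : ℕ} {P : Set (Euc n)} (h : GraphPiece n d P) :
    GraphPiece n d (closure P) := by
  obtain ⟨π, hπ, s, hs, h⟩ := h
  refine ⟨π, hπ, s, hs, fun x hx y hy => ?_⟩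
  have hc : IsClosed {p : Euc n × Euc n | s * ‖p.1 - p.2‖ ≤ ‖π (p.1 - p.2)‖} :=
    isClosed_le (by fun_prop) (by fun_prop)
  have hsub : P ×ˢ P ⊆ {p : Euc n × Euc n | s * ‖p.1 - p.2‖ ≤ ‖π (p.1 - p.2)‖} :=
    fun p hp => h _ hp.1 _ hp.2
  have hxy : (x, y) ∈ closure (P ×ˢ P) := by
    rw [closure_prod_eq]; exact ⟨hx, hy⟩
  have := closure_minimal hsub hc hxy
  simpa only [mem_ofPred_eq] using this

lemma hausdorff_image_glue {X Y : Type*} [MeasurableSpace X] [MeasurableSpace Y] (μ : Measure X)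
    (ν : Measure Y) (φ : X → Y) (A : Set X) (c : ℝ≥0∞) (t : ℕ → Set X)
    (ht : ∀ k, MeasurableSet (t k)) (hd : Pairwise (Function.onFun Disjoint t)) (hA : A ⊆ ⋃ k, t k)
    (h : ∀ k, ν (φ '' (A ∩ t k)) ≤ c * μ (A ∩ t k)) : ν (φ '' A) ≤ c * μ A := by
  have h1 : A = ⋃ k, A ∩ t k := by rw [← inter_iUnion, inter_eq_left.2 hA]
  have h2 : μ A = ∑' k, μ (A ∩ t k) := by
    have := measure_iUnion (μ := μ.restrict A) hd ht
    rw [Measure.restrict_apply (MeasurableSet.iUnion ht), inter_comm, inter_eq_left.2 hA] at this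
    rw [this]
    exact tsum_congr fun k => by rw [Measure.restrict_apply (ht k), inter_comm]
  calc ν (φ '' A) = ν (⋃ k, φ '' (A ∩ t k)) := by
        conv_lhs => rw [h1, image_iUnion]
    _ ≤ ∑' k, ν (φ '' (A ∩ t k)) := measure_iUnion_le _
    _ ≤ ∑' k, c * μ (A ∩ t k) := ENNReal.tsum_le_tsum h
    _ = c * μ A := by rw [ENNReal.tsum_mul_left, h2]

lemma hausdorff_image_local {X Y : Type*} [TopologicalSpace X] [SecondCountableTopology X]
    [MeasurableSpace X] [OpensMeasurableSpace X] [MeasurableSpace Y] (μ : Measure X)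
    (ν : Measure Y) (φ : X → Y) (A : Set X) (c : ℝ≥0∞)
    (h : ∀ y ∈ A, ∃ V ∈ 𝓝 y, ∀ A' ⊆ A ∩ V, ν (φ '' A') ≤ c * μ A') : ν (φ '' A) ≤ c * μ A := by
  rcases A.eq_empty_or_nonempty with rfl | ⟨a0, ha0⟩
  · simp
  have h' : ∀ y : X, ∃ V : Set X, IsOpen V ∧ (y ∈ A → y ∈ V) ∧
      ∀ A' ⊆ A ∩ V, ν (φ '' A') ≤ c * μ A' := by
    intro y
    by_cases hy : y ∈ A
    · obtain ⟨V, hV, h⟩ := h y hy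
      obtain ⟨W, hWV, hW, hyW⟩ := mem_nhds_iff.1 hV
      exact ⟨W, hW, fun _ => hyW, fun A' hA' => h A' (hA'.trans (inter_subset_inter_right _ hWV))⟩
    · refine ⟨∅, isOpen_empty, fun h => absurd h hy, fun A' hA' => ?_⟩
      have : A' = ∅ := by simpa using hA'
      simp [this]
  choose V hVo hVm hV using h'
  obtain ⟨t, htA, htc, ht⟩ := TopologicalSpace.countable_cover_nhdsWithin
    (f := V) (s := A) (fun x hx => mem_nhdsWithin_of_mem_nhds ((hVo x).mem_nhds (hVm x hx)))
  have htne : t.Nonempty := by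
    have := ht ha0
    simp only [mem_iUnion] at this
    obtain ⟨i, hi, -⟩ := this
    exact ⟨i, hi⟩
  obtain ⟨s, rfl⟩ := htc.exists_eq_range htne
  refine hausdorff_image_glue μ ν φ A c (disjointed fun k => V (s k)) ?_ (disjoint_disjointed _)
    ?_ ?_
  · exact fun k => MeasurableSet.disjointed (fun k => (hVo _).measurableSet) k
  · rw [iUnion_disjointed]
    simpa using ht
  · exact fun k => hV (s k) _ (inter_subset_inter_right _ (disjointed_subset _ k))

lemma GraphPiece.exists_param {n d : ℕ} {P : Set (Euc n)} (h : GraphPiece n d P) :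
    ∃ (π : Euc n →L[ℝ] Euc d) (g : Euc d → Euc n) (C : ℝ≥0), LipschitzWith C g ∧
      (∀ z, π (g z) = z) ∧ ∀ x ∈ P, g (π x) = x := by
  obtain ⟨π, hπ, s, hs, h⟩ := h
  obtain ⟨ρ, hρ⟩ := π.toLinearMap.exists_rightInverse_of_surjective (LinearMap.range_eq_top.2 hπ)
  have hinj : InjOn π P := by
    intro x hx y hy hxy
    have := h x hx y hy
    rw [map_sub, hxy, sub_self, norm_zero] at this
    have h0 : ‖x - y‖ ≤ 0 := by nlinarith
    exact sub_eq_zero.1 (norm_le_zero_iff.1 h0)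
  have hinv : ∀ x ∈ P, Function.invFunOn π P (π x) = x := fun x hx => hinj.leftInvOn_invFunOn hx
  have hL : LipschitzOnWith (s⁻¹).toNNReal (Function.invFunOn π P) (π '' P) := by
    refine LipschitzOnWith.of_dist_le_mul ?_
    rintro _ ⟨x, hx, rfl⟩ _ ⟨y, hy, rfl⟩
    rw [hinv x hx, hinv y hy, dist_eq_norm, dist_eq_norm, ← map_sub,
      Real.coe_toNNReal _ (by positivity), inv_mul_eq_div, le_div_iff₀ hs, mul_comm]
    exact h x hx y hy
  obtain ⟨g, hg, hgP⟩ := hL.extend_finite_dimension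
  let ρ' : Euc d →L[ℝ] Euc n := LinearMap.toContinuousLinearMap ρ
  have hρ' : ∀ z, π (ρ' z) = z := fun z => by
    have := congrArg (fun f => f z) hρ
    simpa [ρ'] using this
  refine ⟨π, fun z => g z + ρ' (z - π (g z)), _, hg.add (ρ'.lipschitz.comp
    (LipschitzWith.id.sub (π.lipschitz.comp hg))), fun z => ?_, fun x hx => ?_⟩
  · rw [map_add, hρ']; abel
  · have : g (π x) = x := by rw [← hgP ⟨x, hx, rfl⟩, hinv x hx]
    simp only [this, sub_self, map_zero, add_zero]

/-- A Lipschitz map whose strict derivatives increase the measure of planar sets at most by the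
factor `α` increases the measure of subsets of graph pieces at most by the factor `α`. -/
lemma GraphPiece.hausdorff_image_le {n d : ℕ} {P A : Set (Euc n)} (hP : GraphPiece n d P)
    (hA : A ⊆ P) (φ : Euc n → Euc n) (Cφ : ℝ≥0) (hφL : LipschitzWith Cφ φ) (α : ℝ≥0∞)
    (hα : α ≠ ⊤)
    (hφ : ∀ y ∈ A, ∃ L : Euc n →L[ℝ] Euc n, HasStrictFDerivAt φ L y ∧
      (∃ m : ℝ, 0 < m ∧ ∀ w, m * ‖w‖ ≤ ‖L w‖) ∧
      ∀ V : Submodule ℝ (Euc n), Module.finrank ℝ V = d → ∀ S : Set (Euc n), S ⊆ V →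
        μH[(d:ℝ)] (L '' S) ≤ α * μH[(d:ℝ)] S) :
    μH[(d:ℝ)] (φ '' A) ≤ α * μH[(d:ℝ)] A := by
  obtain ⟨π, g, C, hgL, hπg, hgP⟩ := hP.exists_param
  set s : Set (Euc d) := {z | DifferentiableAt ℝ g z} with hs
  have hHaar : (μH[(d:ℝ)] : Measure (Euc d)).IsAddHaarMeasure := by
    have := isAddHaarMeasure_hausdorffMeasure (E := Euc d)
    simpa using this
  have hnull : μH[(d:ℝ)] sᶜ = 0 := by
    have := hgL.ae_differentiableAt (μ := (μH[(d:ℝ)] : Measure (Euc d)))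
    exact this
  have hsne : s.Nonempty := by
    by_contra hh
    rw [not_nonempty_iff_eq_empty] at hh
    rw [hh, compl_empty] at hnull
    exact (IsOpen.measure_pos _ isOpen_univ univ_nonempty).ne' hnull
  have hT : ∀ z ∈ s, ∀ w, ‖w‖ ≤ ‖π‖ * ‖fderiv ℝ g z w‖ := by
    intro z hz w
    have h1 : HasFDerivAt (fun z => π (g z)) (π.comp (fderiv ℝ g z)) z :=
      π.hasFDerivAt.comp z hz.hasFDerivAt
    have h2 : HasFDerivAt (fun z => π (g z)) (ContinuousLinearMap.id ℝ (Euc d)) z := by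
      simp only [hπg]; exact hasFDerivAt_id z
    have h3 := congrArg (fun f => f w) (h1.unique h2)
    simp only [ContinuousLinearMap.comp_apply, ContinuousLinearMap.id_apply] at h3
    calc ‖w‖ = ‖π (fderiv ℝ g z w)‖ := by rw [h3]
      _ ≤ _ := π.le_opNorm _
  -- the estimate with an arbitrarily small loss
  have key : ∀ δ : ℝ, 0 < δ → δ < 1 →
      μH[(d:ℝ)] (φ '' A) ≤ (ENNReal.ofReal ((1 + δ) ^ d) * (α * ENNReal.ofReal ((1 + δ) ^ d)))
        * μH[(d:ℝ)] A := by
    intro δ hδ hδ1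
    set c := ENNReal.ofReal ((1 + δ) ^ d) * (α * ENNReal.ofReal ((1 + δ) ^ d)) with hc
    refine hausdorff_image_local _ _ φ A c fun y hy => ?_
    obtain ⟨L, hL, ⟨m, hm, hmL⟩, hLα⟩ := hφ y hy
    set ε1 : ℝ≥0 := ⟨δ * m / 4, by positivity⟩ with hε1
    have hε1' : (ε1:ℝ) = δ * m / 4 := rfl
    obtain ⟨V, hV, hVL⟩ := hL.approximates_deriv_on_nhds (c := ε1)
      (Or.inr (by rw [← NNReal.coe_pos, hε1']; positivity))
    refine ⟨V, hV, fun A' hA' => ?_⟩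
    set εs : ℝ := δ * min 1 (m / 4) / ((1 + ‖π‖) * (1 + ‖L‖)) with hεs
    have hεpos : 0 < εs := by positivity
    set ε2 : ℝ≥0 := ⟨εs, hεpos.le⟩ with hε2
    have hε2' : (ε2:ℝ) = εs := rfl
    have e1 : εs * ‖π‖ ≤ δ := by
      rw [hεs, div_mul_eq_mul_div, div_le_iff₀ (by positivity)]
      have := min_le_left 1 (m / 4)
      have h0 : 0 ≤ min 1 (m / 4) := by positivity
      have : δ * min 1 (m / 4) ≤ δ := by nlinarith
      nlinarith [norm_nonneg π, norm_nonneg L, mul_nonneg (norm_nonneg π) (norm_nonneg L),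
        mul_nonneg hδ.le (norm_nonneg L), mul_nonneg hδ.le (mul_nonneg (norm_nonneg π) (norm_nonneg L))]
    have e2 : ‖L‖ * (εs * ‖π‖) ≤ δ * m / 4 := by
      rw [hεs, div_mul_eq_mul_div, mul_div_assoc', div_le_iff₀ (by positivity)]
      have := min_le_right 1 (m / 4)
      have h0 : 0 ≤ min 1 (m / 4) := by positivity
      have h1 : δ * min 1 (m / 4) ≤ δ * m / 4 := by nlinarith
      have h2 : 0 ≤ δ * m / 4 := by positivity
      have h3 : ‖L‖ * ‖π‖ ≤ (1 + ‖π‖) * (1 + ‖L‖) := by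
        nlinarith [norm_nonneg π, norm_nonneg L]
      calc ‖L‖ * (δ * min 1 (m / 4) * ‖π‖) = (δ * min 1 (m / 4)) * (‖L‖ * ‖π‖) := by ring
        _ ≤ (δ * m / 4) * ((1 + ‖π‖) * (1 + ‖L‖)) := by gcongr
    obtain ⟨t, B, htd, htm, hts, htB, htB'⟩ :=
      exists_partition_approximatesLinearOn_of_hasFDerivWithinAt g s (fderiv ℝ g)
        (fun z hz => (DifferentiableAt.hasFDerivAt hz).hasFDerivWithinAt) (fun _ => ε2)
        (fun _ => by rw [← NNReal.coe_ne_zero, hε2']; exact hεpos.ne')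
    have hsm : MeasurableSet s := measurableSet_of_differentiableAt ℝ g
    -- the part of `A'` over the exceptional set
    have hexc : μH[(d:ℝ)] (φ '' (A' ∩ π ⁻¹' sᶜ)) = 0 := by
      have h1 : φ '' (A' ∩ π ⁻¹' sᶜ) ⊆ (φ ∘ g) '' sᶜ := by
        rintro _ ⟨x, ⟨hxA, hxs⟩, rfl⟩
        exact ⟨π x, hxs, by simp [hgP x (hA (hA' hxA).1)]⟩
      have h2 := (hφL.comp hgL).hausdorffMeasure_image_le (d := (d:ℝ)) (Nat.cast_nonneg d) sᶜ
      rw [hnull, mul_zero] at h2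
      exact le_antisymm ((measure_mono h1).trans h2) bot_le
    have hmain : μH[(d:ℝ)] (φ '' (A' ∩ π ⁻¹' s)) ≤ c * μH[(d:ℝ)] (A' ∩ π ⁻¹' s) := by
      refine hausdorff_image_glue _ _ φ _ c (fun k => π ⁻¹' (t k)) (fun k =>
        π.continuous.measurable (htm k)) (fun i j hij => (htd hij).preimage _) ?_ fun k => ?_
      · rw [← preimage_iUnion]
        exact fun x hx => hts hx.2
      obtain ⟨z0, hz0, hBz⟩ := htB' hsne k
      have hBn : ∀ w, ‖w‖ ≤ ‖π‖ * ‖B k w‖ := by rw [hBz]; exact hT z0 hz0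
      set S := A' ∩ π ⁻¹' s ∩ π ⁻¹' t k with hS
      have hapx : ∀ x ∈ S, ∀ y ∈ S, ‖(x - y) - B k (π (x - y))‖ ≤ εs * ‖π (x - y)‖ := by
        intro x hx y hy
        have := htB k (π x) ⟨hx.1.2, hx.2⟩ (π y) ⟨hy.1.2, hy.2⟩
        rw [hgP x (hA (hA' hx.1.1).1), hgP y (hA (hA' hy.1.1).1), ← map_sub] at this
        exact this
      have i1 : ∀ x ∈ S, ∀ y ∈ S, ‖π (x - y)‖ ≤ ‖π‖ * ‖B k (π (x - y))‖ := fun x _ y _ => hBn _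
      have st1 := hausdorff_image_le_image φ (fun x => L (B k (π x))) S (1 + δ) (by positivity) d
        (fun x hx y hy => by
          rw [dist_eq_norm, dist_eq_norm, ← map_sub, ← map_sub, ← map_sub]
          have a1 := hVL x (hA' hx.1.1).2 y (hA' hy.1.1).2
          rw [hε1'] at a1
          have a2 := hapx x hx y hy
          have a3 := i1 x hx y hy
          have a4 := hmL (B k (π (x - y)))
          set v := x - y
          set b := B k (π v)
          have a5 : εs * ‖π v‖ ≤ (εs * ‖π‖) * ‖b‖ := by
            calc εs * ‖π v‖ ≤ εs * (‖π‖ * ‖b‖) := by gcongr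
              _ = _ := by ring
          have a6 : ‖v‖ ≤ 2 * ‖b‖ := by
            calc ‖v‖ = ‖(v - b) + b‖ := by rw [sub_add_cancel]
              _ ≤ ‖v - b‖ + ‖b‖ := norm_add_le _ _
              _ ≤ (εs * ‖π‖) * ‖b‖ + ‖b‖ := by linarith
              _ ≤ 1 * ‖b‖ + ‖b‖ := by gcongr; linarith
              _ = _ := by ring
          have a7 : ‖L (v - b)‖ ≤ δ * m / 4 * ‖b‖ := by
            calc ‖L (v - b)‖ ≤ ‖L‖ * ‖v - b‖ := L.le_opNorm _
              _ ≤ ‖L‖ * ((εs * ‖π‖) * ‖b‖) := by gcongr; linarith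
              _ = ‖L‖ * (εs * ‖π‖) * ‖b‖ := by ring
              _ ≤ _ := by gcongr
          calc ‖φ x - φ y‖ = ‖(φ x - φ y - L v) + L (v - b) + L b‖ := by
                congr 1; rw [map_sub L v b]; abel
            _ ≤ ‖φ x - φ y - L v‖ + ‖L (v - b)‖ + ‖L b‖ := norm_add₃_le
            _ ≤ δ * m / 4 * ‖v‖ + δ * m / 4 * ‖b‖ + ‖L b‖ := by gcongr
            _ ≤ δ * m / 4 * (2 * ‖b‖) + δ * m / 4 * ‖b‖ + ‖L b‖ := by gcongr
            _ = 3 / 4 * δ * (m * ‖b‖) + ‖L b‖ := by ring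
            _ ≤ 3 / 4 * δ * ‖L b‖ + ‖L b‖ := by gcongr
            _ ≤ (1 + δ) * ‖L b‖ := by nlinarith [mul_nonneg hδ.le (norm_nonneg (L b))])
      have st3 := hausdorff_image_le_image (fun x => B k (π x)) (fun x => x) S (1 + δ)
        (by positivity) d
        (fun x hx y hy => by
          rw [dist_eq_norm, dist_eq_norm, ← map_sub, ← map_sub]
          have a2 := hapx x hx y hy
          have a3 : εs * ‖π (x - y)‖ ≤ δ * ‖x - y‖ := by
            calc εs * ‖π (x - y)‖ ≤ εs * (‖π‖ * ‖x - y‖) := by gcongr; exact π.le_opNorm _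
              _ = (εs * ‖π‖) * ‖x - y‖ := by ring
              _ ≤ _ := by gcongr
          have a4 := norm_sub_norm_le (B k (π (x - y))) (x - y)
          rw [norm_sub_rev (B k (π (x - y)))] at a4
          linarith)
      have hrank : Module.finrank ℝ (LinearMap.range (B k).toLinearMap) = d := by
        rw [LinearMap.finrank_range_of_inj]
        · simp
        · intro u v huv
          have h1 := hBn (u - v)
          have h2 : B k (u - v) = 0 := by rw [map_sub, sub_eq_zero]; exact huv
          rw [h2, norm_zero, mul_zero] at h1
          exact sub_eq_zero.1 (norm_le_zero_iff.1 h1)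
      have st2 := hLα (LinearMap.range (B k).toLinearMap) hrank ((fun x => B k (π x)) '' S) (by
        rintro _ ⟨x, -, rfl⟩
        exact ⟨π x, rfl⟩)
      rw [image_image] at st2
      rw [image_id'] at st3
      calc μH[(d:ℝ)] (φ '' S) ≤ _ := st1
        _ ≤ ENNReal.ofReal ((1 + δ) ^ d) * (α * (ENNReal.ofReal ((1 + δ) ^ d) * μH[(d:ℝ)] S)) := by
          gcongr
          exact st2.trans (by gcongr)
        _ = c * μH[(d:ℝ)] S := by rw [hc]; ring
    calc μH[(d:ℝ)] (φ '' A') ≤ μH[(d:ℝ)] (φ '' (A' ∩ π ⁻¹' s) ∪ φ '' (A' ∩ π ⁻¹' sᶜ)) := by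
          apply measure_mono
          rw [← image_union, ← inter_union_distrib_left, ← preimage_union, union_compl_self]
          simp
      _ ≤ μH[(d:ℝ)] (φ '' (A' ∩ π ⁻¹' s)) + μH[(d:ℝ)] (φ '' (A' ∩ π ⁻¹' sᶜ)) :=
          measure_union_le _ _
      _ ≤ c * μH[(d:ℝ)] (A' ∩ π ⁻¹' s) := by rw [hexc, add_zero]; exact hmain
      _ ≤ c * μH[(d:ℝ)] A' := by gcongr; exact inter_subset_left
  by_cases hAfin : μH[(d:ℝ)] A = ⊤
  · by_cases hα0 : α = 0
    · have := key (1/2) (by norm_num) (by norm_num)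
      simpa [hα0] using this
    · rw [hAfin, ENNReal.mul_top hα0]; exact le_top
  have hcont : Tendsto (fun δ : ℝ => (ENNReal.ofReal ((1 + δ) ^ d) *
      (α * ENNReal.ofReal ((1 + δ) ^ d))) * μH[(d:ℝ)] A) (𝓝[>] 0)
      (𝓝 ((1 * (α * 1)) * μH[(d:ℝ)] A)) := by
    have h0 : Tendsto (fun δ : ℝ => ENNReal.ofReal ((1 + δ) ^ d)) (𝓝[>] 0) (𝓝 1) := by
      have : Continuous (fun δ : ℝ => ENNReal.ofReal ((1 + δ) ^ d)) :=
        ENNReal.continuous_ofReal.comp (by fun_prop)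
      have := (this.tendsto 0).mono_left (nhdsWithin_le_nhds (s := Ioi 0))
      simpa using this
    refine ENNReal.Tendsto.mul_const ?_ (Or.inr hAfin)
    refine ENNReal.Tendsto.mul h0 (Or.inl one_ne_zero) ?_ (Or.inr ENNReal.one_ne_top)
    exact ENNReal.Tendsto.const_mul h0 (Or.inr hα)
  simp only [mul_one, one_mul] at hcont
  refine ge_of_tendsto hcont ?_
  filter_upwards [Ioo_mem_nhdsGT (zero_lt_one' ℝ)] with δ hδ
  exact key δ hδ.1 hδ.2

/-! ### Radial competitors and the reduction to rectifiability -/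

/-- Minimality in a convenient form: a Lipschitz map preserving a closed ball and equal to the
identity outside is the end of a straight-line deformation, hence a competitor. -/
lemma minimal_le {n d : ℕ} {U E : Set (Euc n)} (hmin : IsAAlmostMinimal n d U E (fun _ => 0))
    (φ : Euc n → Euc n) (K : ℝ≥0) (hφ : LipschitzWith K φ) (c : Euc n) (r : ℝ)
    (hc : closedBall c r ⊆ U) (hoff : ∀ y ∉ closedBall c r, φ y = y)
    (hon : ∀ y ∈ closedBall c r, φ y ∈ closedBall c r) :
    μH[(d:ℝ)] (E ∩ {y | φ y ≠ y}) ≤ μH[(d:ℝ)] (φ '' (E ∩ {y | φ y ≠ y})) := by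
  obtain ⟨hEU, -, -, hmin⟩ := hmin
  set Φ : ℝ → Euc n → Euc n := fun t y => y + t • (φ y - y) with hΦ
  have hΦ1 : Φ 1 = φ := by funext y; simp [hΦ]
  have hΦon : ∀ t ∈ Icc (0:ℝ) 1, ∀ y ∈ closedBall c r, Φ t y ∈ closedBall c r := fun t ht y hy =>
    (convex_closedBall c r).add_smul_sub_mem hy (hon y hy) ht
  have hΦoff : ∀ t, ∀ y ∉ closedBall c r, Φ t y = y := fun t y hy => by simp [hΦ, hoff y hy]
  have hW : ∀ t, defW U Φ t ⊆ closedBall c r := by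
    intro t y hy
    by_contra hh
    exact hy.2 (hΦoff t y hh)
  have hWhat : defWhat U Φ ⊆ closedBall c r := by
    refine iUnion₂_subset fun t ht => union_subset (hW t) ?_
    rintro _ ⟨y, hy, rfl⟩
    exact hΦon t ht y (hW t hy)
  have hcl : closure (defWhat U Φ) ⊆ closedBall c r := closure_minimal hWhat isClosed_closedBall
  have hadm : IsAdmissibleDef U (Metric.diam (defWhat U Φ) + 1) Φ := by
    refine ⟨fun t ht y hy => ?_, fun y _ => by simp [hΦ], ?_, ⟨K, ?_⟩, ?_, hcl.trans hc, by linarith⟩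
    · by_cases h : y ∈ closedBall c r
      · exact hc (hΦon t ht y h)
      · rw [hΦoff t y h]; exact hy
    · have := hφ.continuous
      exact Continuous.continuousOn (by fun_prop)
    · rw [hΦ1]; exact hφ.lipschitzOnWith
    · exact (isCompact_closedBall c r).of_isClosed_subset isClosed_closure hcl
  have h := hmin _ (by positivity) Φ hadm
  have hEq : E ∩ defW U Φ 1 = E ∩ {y | φ y ≠ y} := by
    rw [defW, hΦ1]
    ext y
    constructor
    · rintro ⟨h1, h2, h3⟩; exact ⟨h1, h3⟩
    · rintro ⟨h1, h3⟩; exact ⟨h1, hEU h1, h3⟩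
  rw [hEq, hΦ1] at h
  simpa using h

lemma rect_image_le {n d : ℕ} {A : Set (Euc n)} (P : ℕ → Set (Euc n))
    (hP : ∀ i, GraphPiece n d (P i)) (hPc : ∀ i, IsClosed (P i))
    (hAP : μH[(d:ℝ)] (A \ ⋃ i, P i) = 0)
    (φ : Euc n → Euc n) (Cφ : ℝ≥0) (hφL : LipschitzWith Cφ φ) (α : ℝ≥0∞)
    (hα : α ≠ ⊤)
    (hφ : ∀ y ∈ A, ∃ L : Euc n →L[ℝ] Euc n, HasStrictFDerivAt φ L y ∧
      (∃ m : ℝ, 0 < m ∧ ∀ w, m * ‖w‖ ≤ ‖L w‖) ∧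
      ∀ V : Submodule ℝ (Euc n), Module.finrank ℝ V = d → ∀ S : Set (Euc n), S ⊆ V →
        μH[(d:ℝ)] (L '' S) ≤ α * μH[(d:ℝ)] S) :
    μH[(d:ℝ)] (φ '' A) ≤ α * μH[(d:ℝ)] A := by
  set A1 := A ∩ ⋃ i, P i with hA1
  have h1 : μH[(d:ℝ)] (φ '' A1) ≤ α * μH[(d:ℝ)] A1 := by
    refine hausdorff_image_glue _ _ φ A1 α (disjointed P)
      (fun k => MeasurableSet.disjointed (fun k => (hPc k).measurableSet) k)
      (disjoint_disjointed _) (by rw [iUnion_disjointed]; exact inter_subset_right) fun k => ?_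
    refine (hP k).hausdorff_image_le (fun y hy => disjointed_subset _ k hy.2) φ Cφ hφL α hα
      fun y hy => hφ y hy.1.1
  have h2 : μH[(d:ℝ)] (φ '' (A \ ⋃ i, P i)) = 0 := by
    have := hφL.hausdorffMeasure_image_le (d := (d:ℝ)) (Nat.cast_nonneg d) (A \ ⋃ i, P i)
    rw [hAP, mul_zero] at this
    exact le_antisymm this bot_le
  calc μH[(d:ℝ)] (φ '' A) = μH[(d:ℝ)] (φ '' A1 ∪ φ '' (A \ ⋃ i, P i)) := by
        rw [← image_union, hA1, inter_union_sdiff]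
    _ ≤ μH[(d:ℝ)] (φ '' A1) + μH[(d:ℝ)] (φ '' (A \ ⋃ i, P i)) := measure_union_le _ _
    _ ≤ α * μH[(d:ℝ)] A1 := by rw [h2, add_zero]; exact h1
    _ ≤ _ := by gcongr; exact inter_subset_left

/-- The radial profile of the competitor: it interpolates between a homothety of Jacobian `1 / 2`
inside `B(x, r₁)` and the identity outside `B(x, r₂)`, with `(ρ k(ρ))ᵈ = α ρᵈ - β`, so that the
largest `d`-dimensional Jacobian in the shell is the constant `α`. -/
lemma exists_profile (d : ℕ) (hd : 1 ≤ d) (r₁ r₂ : ℝ) (h0 : 0 < r₁) (h12 : r₁ < r₂) (α : ℝ)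
    (hα : α = (r₂ ^ d - r₁ ^ d / 2) / (r₂ ^ d - r₁ ^ d)) :
    ∃ k : ℝ → ℝ, (∀ ρ ∈ Icc r₁ r₂, 0 < k ρ ∧ k ρ ≤ 1) ∧ (∀ ρ ∈ Ico r₁ r₂, k ρ < 1) ∧
      k r₁ ^ d = 1 / 2 ∧ k r₂ = 1 ∧ (∃ K : ℝ≥0, LipschitzOnWith K k (Icc r₁ r₂)) ∧
      ∀ ρ ∈ Ioo r₁ r₂, ∃ k' : ℝ, 0 ≤ k' ∧ HasStrictDerivAt k k' ρ ∧
        k ρ ^ d * (1 + ρ * k' / k ρ) = α := by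
  have hd0 : d ≠ 0 := by omega
  have hu : r₁ ^ d < r₂ ^ d := pow_lt_pow_left₀ h12 h0.le hd0
  have hu1 : 0 < r₁ ^ d := by positivity
  have hD : 0 < r₂ ^ d - r₁ ^ d := by linarith
  set β := (α - 1 / 2) * r₁ ^ d with hβ
  have hα1 : 1 < α := by rw [hα, lt_div_iff₀ hD]; linarith
  have hβ0 : 0 < β := by rw [hβ]; apply mul_pos _ hu1; linarith
  set f : ℝ → ℝ := fun ρ => α - β * (ρ ^ d)⁻¹ with hf
  have hfr1 : f r₁ = 1 / 2 := by simp only [hf, hβ]; field_simp; ring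
  have hfr2 : f r₂ = 1 := by
    simp only [hf, hβ, hα]
    have : r₂ ^ d ≠ 0 := by linarith
    have := hD.ne'
    field_simp
    ring
  have hfmono : ∀ ρ σ, 0 < ρ → ρ < σ → f ρ < f σ := by
    intro ρ σ h1 h2
    have h3 : ρ ^ d < σ ^ d := pow_lt_pow_left₀ h2 h1.le hd0
    have : (σ ^ d)⁻¹ < (ρ ^ d)⁻¹ := inv_strictAnti₀ (by positivity) h3
    simp only [hf]
    nlinarith
  have hfle : ∀ ρ ∈ Icc r₁ r₂, 1 / 2 ≤ f ρ ∧ f ρ ≤ 1 := by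
    intro ρ hρ
    constructor
    · rcases hρ.1.eq_or_lt with h | h
      · rw [← h, hfr1]
      · rw [← hfr1]; exact (hfmono _ _ h0 h).le
    · rcases hρ.2.eq_or_lt with h | h
      · rw [h, hfr2]
      · rw [← hfr2]; exact (hfmono _ _ (h0.trans_le hρ.1) h).le
  set k : ℝ → ℝ := fun ρ => f ρ ^ ((d:ℝ)⁻¹) with hk
  have hkd : ∀ ρ, 0 ≤ f ρ → k ρ ^ d = f ρ := fun ρ h => Real.rpow_inv_natCast_pow h hd0
  have hkpos : ∀ ρ ∈ Icc r₁ r₂, 0 < k ρ := fun ρ hρ =>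
    Real.rpow_pos_of_pos (by linarith [(hfle ρ hρ).1]) _
  have hstrict : ∀ ρ ∈ Icc r₁ r₂, ∃ k', HasStrictDerivAt k k' ρ ∧
      d * k ρ ^ (d - 1) * k' = β * (d * ρ ^ (d - 1)) / (ρ ^ d) ^ 2 := by
    intro ρ hρ
    have hρ0 : 0 < ρ := h0.trans_le hρ.1
    have hfρ : 0 < f ρ := by linarith [(hfle ρ hρ).1]
    have h1 : HasStrictDerivAt (fun ρ : ℝ => ρ ^ d) (d * ρ ^ (d - 1)) ρ := hasStrictDerivAt_pow d ρ
    have h2 : HasStrictDerivAt f (-(β * (-(d * ρ ^ (d - 1)) / (ρ ^ d) ^ 2))) ρ := by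
      have := ((((hasStrictDerivAt_inv (x := ρ ^ d) (by positivity)).comp ρ h1)).const_mul
        β).const_sub α
      convert! this using 1
      ring
    have h3 := (Real.hasStrictDerivAt_rpow_const (x := f ρ) (p := (d:ℝ)⁻¹) (Or.inl hfρ.ne')).comp
      ρ h2
    refine ⟨_, h3, ?_⟩
    have h4 : HasDerivAt (fun ρ => k ρ ^ d) (d * k ρ ^ (d - 1) * _) ρ := (h3.fun_pow d).hasDerivAt
    have h5 : (fun ρ => k ρ ^ d) =ᶠ[𝓝 ρ] f := by
      filter_upwards [h2.hasDerivAt.continuousAt.eventually (lt_mem_nhds hfρ)] with x hx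
      exact hkd x hx.le
    have h6 := (h4.congr_of_eventuallyEq h5.symm).unique h2.hasDerivAt
    rw [h6]; ring
  refine ⟨k, fun ρ hρ => ⟨hkpos ρ hρ, ?_⟩, fun ρ hρ => ?_, ?_, ?_, ?_, fun ρ hρ => ?_⟩
  · exact Real.rpow_le_one (by linarith [(hfle ρ hρ).1]) (hfle ρ hρ).2 (by positivity)
  · refine Real.rpow_lt_one (by linarith [(hfle ρ ⟨hρ.1, hρ.2.le⟩).1]) ?_ (by positivity)
    rw [← hfr2]
    exact hfmono _ _ (h0.trans_le hρ.1) hρ.2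
  · rw [hkd _ (by rw [hfr1]; norm_num), hfr1]
  · simp only [hk, hfr2, Real.one_rpow]
  · refine LocallyLipschitzOn.exists_lipschitzOnWith_of_compact isCompact_Icc fun ρ hρ => ?_
    obtain ⟨k', hk', -⟩ := hstrict ρ hρ
    obtain ⟨K, s, hs, hL⟩ := hk'.hasStrictFDerivAt.exists_lipschitzOnWith
    exact ⟨K, s, mem_nhdsWithin_of_mem_nhds hs, hL⟩
  · have hρ' : ρ ∈ Icc r₁ r₂ := Ioo_subset_Icc_self hρ
    have hρ0 : 0 < ρ := h0.trans hρ.1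
    obtain ⟨k', hk', he⟩ := hstrict ρ hρ'
    have hkp := hkpos ρ hρ'
    have hdp : (0:ℝ) < d := by positivity
    have hk'0 : 0 ≤ k' := by
      have h1 : 0 ≤ d * k ρ ^ (d - 1) * k' := by rw [he]; positivity
      by_contra hh
      push Not at hh
      have : 0 < d * k ρ ^ (d - 1) := by positivity
      nlinarith
    refine ⟨k', hk'0, hk', ?_⟩
    have h1 := hkd ρ (by linarith [(hfle ρ hρ').1])
    obtain ⟨e, rfl⟩ : ∃ e, d = e + 1 := ⟨d - 1, by omega⟩
    simp only [Nat.add_sub_cancel] at he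
    have h2 : k ρ ^ e * k' * ρ = β * (ρ ^ (e + 1))⁻¹ := by
      have he' : (((e + 1 : ℕ) : ℝ)) * (k ρ ^ e * k') = ((e + 1 : ℕ) : ℝ) * (β * ρ ^ e / (ρ ^ (e+1)) ^ 2) := by
        linear_combination he
      have he'' := mul_left_cancel₀ hdp.ne' he'
      rw [he'']
      field_simp
      ring
    have h3 : k ρ ^ (e + 1) * (1 + ρ * k' / k ρ) = k ρ ^ (e + 1) + k ρ ^ e * k' * ρ := by
      field_simp
      ring
    rw [h3, h1, h2]
    simp only [hf]
    ring

/-- Monotonicity between two radii, granted that `E` is rectifiable in the larger ball. -/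
lemma monotone_of_rect {n d : ℕ} (hd : 1 ≤ d) {U E : Set (Euc n)}
    (hmin : IsAAlmostMinimal n d U E (fun _ => 0))
    (x : Euc n) (r₁ r₂ : ℝ) (h0 : 0 < r₁) (h12 : r₁ < r₂) (hball : closedBall x r₂ ⊆ U)
    (P : ℕ → Set (Euc n)) (hP : ∀ i, GraphPiece n d (P i)) (hPc : ∀ i, IsClosed (P i))
    (hEP : μH[(d:ℝ)] ((E ∩ closedBall x r₂) \ ⋃ i, P i) = 0) :
    μH[(d:ℝ)] (E ∩ ball x r₁) * ENNReal.ofReal (r₂ ^ d)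
      ≤ μH[(d:ℝ)] (E ∩ ball x r₂) * ENNReal.ofReal (r₁ ^ d) := by
  set α : ℝ := (r₂ ^ d - r₁ ^ d / 2) / (r₂ ^ d - r₁ ^ d) with hα
  have hd0 : d ≠ 0 := by omega
  have hu : r₁ ^ d < r₂ ^ d := pow_lt_pow_left₀ h12 h0.le hd0
  have hu1 : 0 < r₁ ^ d := by positivity
  have hD : 0 < r₂ ^ d - r₁ ^ d := by linarith
  have hα0 : 0 ≤ α := div_nonneg (by linarith) hD.le
  obtain ⟨k, hk01, hklt, hkr1, hkr2, ⟨K, hK⟩, hkder⟩ := exists_profile d hd r₁ r₂ h0 h12 α hα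
  set κ : ℝ → ℝ := fun ρ => k (max r₁ (min ρ r₂)) with hκ
  have hcl : ∀ ρ, max r₁ (min ρ r₂) ∈ Icc r₁ r₂ := fun ρ =>
    ⟨le_max_left _ _, max_le h12.le (min_le_right _ _)⟩
  have hκ01 : ∀ ρ, 0 < κ ρ ∧ κ ρ ≤ 1 := fun ρ => hk01 _ (hcl ρ)
  have hκL : ∀ ρ σ, |κ ρ - κ σ| ≤ K * |ρ - σ| := by
    intro ρ σ
    have h1 := hK.dist_le_mul _ (hcl ρ) _ (hcl σ)
    rw [Real.dist_eq, Real.dist_eq] at h1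
    refine h1.trans (mul_le_mul_of_nonneg_left ?_ K.2)
    rw [max_comm r₁, max_comm r₁]
    refine (abs_max_sub_max_le_abs _ _ _).trans ?_
    have := abs_min_sub_min_le_max ρ r₂ σ r₂
    simpa using this
  have hκbig : ∀ ρ, r₂ ≤ ρ → κ ρ = 1 := fun ρ h => by
    simp only [hκ]; rw [min_eq_right h, max_eq_right h12.le, hkr2]
  have hκmid : ∀ ρ ∈ Icc r₁ r₂, κ ρ = k ρ := fun ρ h => by
    simp only [hκ]; rw [min_eq_left h.2, max_eq_right h.1]
  have hκsmall : ∀ ρ ≤ r₁, κ ρ = k r₁ := fun ρ h => by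
    simp only [hκ]; rw [min_eq_left (h.trans h12.le), max_eq_left h]
  have hκlt : ∀ ρ < r₂, κ ρ < 1 := fun ρ h => by
    simp only [hκ]
    refine hklt _ ⟨le_max_left _ _, max_lt h12 (min_lt_of_left_lt h)⟩
  set φ : Euc n → Euc n := fun y => x + κ ‖y - x‖ • (y - x) with hφ
  have hφL : LipschitzWith (1 + K * ⟨r₂, (h0.trans h12).le⟩) φ := by
    have aux : ∀ y z : Euc n, ‖z - x‖ ≤ ‖y - x‖ → dist (φ y) (φ z) ≤ (1 + K * r₂) * dist y z := by
      intro y z hyz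
      have h1 : φ y - φ z = κ ‖y - x‖ • (y - z) + (κ ‖y - x‖ - κ ‖z - x‖) • (z - x) := by
        simp only [hφ, sub_smul, smul_sub]; abel
      have h2 : |κ ‖y - x‖ - κ ‖z - x‖| * ‖z - x‖ ≤ K * r₂ * ‖y - z‖ := by
        rcases le_total r₂ ‖z - x‖ with h | h
        · rw [hκbig _ h, hκbig _ (h.trans hyz)]
          simp only [sub_self, abs_zero, zero_mul]
          have := h0.trans h12
          positivity
        · have h3 := hκL ‖y - x‖ ‖z - x‖
          have h4 : |‖y - x‖ - ‖z - x‖| ≤ ‖y - z‖ := by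
            have := abs_norm_sub_norm_le (y - x) (z - x)
            rwa [sub_sub_sub_cancel_right] at this
          calc |κ ‖y - x‖ - κ ‖z - x‖| * ‖z - x‖ ≤ (K * ‖y - z‖) * r₂ := by
                gcongr
                exact h3.trans (by gcongr)
            _ = _ := by ring
      rw [dist_eq_norm, dist_eq_norm, h1]
      refine (norm_add_le _ _).trans ?_
      rw [norm_smul, norm_smul, Real.norm_eq_abs, Real.norm_eq_abs, abs_of_pos (hκ01 _).1]
      have := mul_le_mul_of_nonneg_right (hκ01 ‖y - x‖).2 (norm_nonneg (y - z))
      linarith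
    refine LipschitzWith.of_dist_le_mul fun y z => ?_
    change _ ≤ (1 + (K:ℝ) * r₂) * _
    rcases le_total ‖z - x‖ ‖y - x‖ with h | h
    · exact aux y z h
    · rw [dist_comm (φ y), dist_comm y]; exact aux z y h
  have hφne : {y | φ y ≠ y} = ball x r₂ \ {x} := by
    ext y
    simp only [mem_ofPred_eq, Set.mem_sdiff, mem_singleton_iff, mem_ball, dist_eq_norm]
    have h1 : φ y - y = (κ ‖y - x‖ - 1) • (y - x) := by
      simp only [hφ, sub_smul, one_smul]; abel
    rw [← sub_ne_zero, h1, smul_ne_zero_iff, sub_ne_zero, sub_ne_zero]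
    refine and_congr_left fun _ => ⟨fun h => ?_, fun h => (hκlt _ h).ne⟩
    by_contra hh
    exact h (hκbig _ (not_lt.1 hh))
  have hmain := minimal_le hmin φ _ hφL x r₂ hball
    (fun y hy => by
      by_contra hh
      have : y ∈ {y | φ y ≠ y} := hh
      rw [hφne] at this
      exact hy (ball_subset_closedBall this.1))
    (fun y hy => by
      rw [mem_closedBall, dist_eq_norm] at hy ⊢
      simp only [hφ, add_sub_cancel_left, norm_smul, Real.norm_eq_abs, abs_of_pos (hκ01 _).1]
      have := mul_le_mul_of_nonneg_right (hκ01 ‖y - x‖).2 (norm_nonneg (y - x))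
      linarith)
  rw [hφne] at hmain
  set A := E ∩ {y | r₁ < ‖y - x‖ ∧ ‖y - x‖ < r₂} with hA
  set B := E ∩ closedBall x r₁ with hB
  have hmeas : MeasurableSet (closedBall x r₁) := isClosed_closedBall.measurableSet
  have hsplit : μH[(d:ℝ)] (E ∩ ball x r₂) = μH[(d:ℝ)] B + μH[(d:ℝ)] A := by
    rw [← measure_inter_add_sdiff _ hmeas]
    congr 2
    · rw [inter_assoc, inter_eq_right.2 (closedBall_subset_ball h12)]
    · ext y
      simp only [hA, Set.mem_sdiff, mem_inter_iff, mem_ball, mem_closedBall, dist_eq_norm, not_le,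
        mem_ofPred_eq]
      tauto
  have : NullSingletonClass (μH[(d:ℝ)] : Measure (Euc n)) :=
    Measure.nullSingletonClass_hausdorff _ (by exact_mod_cast hd)
  have hL : μH[(d:ℝ)] (E ∩ (ball x r₂ \ {x})) = μH[(d:ℝ)] B + μH[(d:ℝ)] A := by
    rw [← hsplit, ← inter_sdiff_assoc]
    exact measure_sdiff_null (measure_singleton x)
  have hBim : μH[(d:ℝ)] (φ '' B) ≤ ENNReal.ofReal (1 / 2) * μH[(d:ℝ)] B := by
    have h1 := hausdorff_image_le_image φ (fun y => y) B (k r₁) (hk01 r₁ ⟨le_rfl, h12.le⟩).1.le d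
      (fun y hy z hz => by
        have e1 : ‖y - x‖ ≤ r₁ := by have := hy.2; rwa [mem_closedBall, dist_eq_norm] at this
        have e2 : ‖z - x‖ ≤ r₁ := by have := hz.2; rwa [mem_closedBall, dist_eq_norm] at this
        simp only [hφ, hκsmall _ e1, hκsmall _ e2]
        rw [dist_eq_norm, add_sub_add_left_eq_sub, ← smul_sub, sub_sub_sub_cancel_right, norm_smul,
          Real.norm_eq_abs, abs_of_pos (hk01 r₁ ⟨le_rfl, h12.le⟩).1, dist_eq_norm])
    rwa [hkr1, image_id'] at h1
  have hAim : μH[(d:ℝ)] (φ '' A) ≤ ENNReal.ofReal α * μH[(d:ℝ)] A := by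
    refine rect_image_le P hP hPc (measure_mono_null ?_ hEP) φ _ hφL _ ENNReal.ofReal_ne_top ?_
    · refine sdiff_subset_sdiff_left fun y hy => ⟨hy.1, ?_⟩
      rw [mem_closedBall, dist_eq_norm]; exact hy.2.2.le
    rintro y ⟨-, hy1, hy2⟩
    obtain ⟨k', hk'0, hk', hJ⟩ := hkder _ ⟨hy1, hy2⟩
    set ρ := ‖y - x‖ with hρ
    have hρ0 : 0 < ρ := h0.trans hy1
    have hkp := (hk01 ρ ⟨hy1.le, hy2.le⟩).1
    set e : Euc n := ρ⁻¹ • (y - x) with he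
    have he1 : ‖e‖ = 1 := by
      rw [he, norm_smul, norm_inv, Real.norm_eq_abs, abs_of_pos hρ0, ← hρ, inv_mul_cancel₀ hρ0.ne']
    have hnorm : HasStrictFDerivAt (fun z : Euc n => ‖z - x‖) (innerSL ℝ e) y := by
      have h1 : HasStrictFDerivAt (fun z : Euc n => z - x) (ContinuousLinearMap.id ℝ _) y :=
        (hasStrictFDerivAt_id y).sub_const x
      have h2 := ((hasStrictFDerivAt_norm_sq (y - x)).comp y h1).sqrt
        (by change ‖y - x‖ ^ 2 ≠ 0; rw [← hρ]; positivity)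
      have h3 : (fun z : Euc n => √(‖z - x‖ ^ 2)) = fun z => ‖z - x‖ := by
        funext z; simp [Real.sqrt_sq]
      rw [h3] at h2
      convert! h2 using 1
      ext w
      simp only [← hρ, Real.sqrt_sq hρ0.le, he]
      simp [inner_smul_left]
      field_simp
    have hκ' : HasStrictDerivAt κ k' ρ := by
      refine hk'.congr_of_eventuallyEq ?_
      filter_upwards [Icc_mem_nhds hy1 hy2] with z hz
      exact (hκmid z hz).symm
    have hcomp := hκ'.comp_hasStrictFDerivAt y hnorm
    have hid : HasStrictFDerivAt (fun z : Euc n => z - x) (ContinuousLinearMap.id ℝ _) y :=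
      (hasStrictFDerivAt_id y).sub_const x
    have hder := (hcomp.smul hid).const_add x
    refine ⟨_, hder, ?_, ?_⟩
    all_goals
      have hLw : ∀ w : Euc n, (((κ ∘ fun z => ‖z - x‖) y • ContinuousLinearMap.id ℝ (Euc n) +
          (k' • innerSL ℝ e).smulRight (y - x) : Euc n →L[ℝ] Euc n)) w
          = k ρ • (w + (((1 + ρ * k' / k ρ) - 1) * ⟪e, w⟫_ℝ) • e) := by
        intro w
        have hyx : y - x = ρ • e := by rw [he, smul_smul, mul_inv_cancel₀ hρ0.ne', one_smul]
        have h1 : (κ ∘ fun z => ‖z - x‖) y = k ρ := hκmid ρ ⟨hy1.le, hy2.le⟩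
        rw [h1]
        simp only [_root_.add_apply, _root_.smul_apply,
          ContinuousLinearMap.id_apply, ContinuousLinearMap.smulRight_apply, smul_add, smul_smul,
          innerSL_apply_apply, smul_eq_mul]
        rw [hyx, smul_smul]
        congr 2
        field_simp
        ring
    · refine ⟨k ρ, hkp, fun w => ?_⟩
      rw [hLw, norm_smul, Real.norm_eq_abs, abs_of_pos hkp]
      refine mul_le_mul_of_nonneg_left ?_ hkp.le
      have h1 : ‖w + (((1 + ρ * k' / k ρ) - 1) * ⟪e, w⟫_ℝ) • e‖ ^ 2 =
          ‖w‖ ^ 2 + (2 * (ρ * k' / k ρ) + (ρ * k' / k ρ) ^ 2) * ⟪e, w⟫_ℝ ^ 2 := by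
        rw [norm_add_sq_real, inner_smul_right, norm_smul, he1, real_inner_comm e w, mul_one,
          Real.norm_eq_abs, sq_abs]
        ring
      refine (sq_le_sq₀ (norm_nonneg _) (norm_nonneg _)).1 ?_
      rw [h1]
      have : 0 ≤ ρ * k' / k ρ := by positivity
      nlinarith [mul_nonneg (by positivity : 0 ≤ 2 * (ρ * k' / k ρ) + (ρ * k' / k ρ) ^ 2)
        (sq_nonneg ⟪e, w⟫_ℝ)]
    · intro V hV S hS
      have := hausdorff_plane_stretch_le V hV e he1 (k ρ) (1 + ρ * k' / k ρ) hkp.le (by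
        have : 0 ≤ ρ * k' / k ρ := by positivity
        linarith) S hS
      rw [hJ] at this
      simp only [← hLw] at this
      exact this
  have hfin : μH[(d:ℝ)] (E ∩ closedBall x r₂) < ⊤ := hmin.2.2.1 x r₂ hball
  have hBfin : μH[(d:ℝ)] B ≠ ⊤ := ((measure_mono (inter_subset_inter_right _
    (closedBall_subset_closedBall h12.le))).trans_lt hfin).ne
  have hAfin : μH[(d:ℝ)] A ≠ ⊤ := by
    refine ((measure_mono (t := E ∩ closedBall x r₂) fun y hy => ⟨hy.1, ?_⟩).trans_lt hfin).ne
    rw [mem_closedBall, dist_eq_norm]; exact hy.2.2.le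
  have hfinal : μH[(d:ℝ)] B + μH[(d:ℝ)] A ≤
      ENNReal.ofReal (1 / 2) * μH[(d:ℝ)] B + ENNReal.ofReal α * μH[(d:ℝ)] A := by
    rw [hL] at hmain
    refine hmain.trans ((measure_mono ?_).trans ((measure_union_le _ _).trans
      (add_le_add hBim hAim)))
    rw [← image_union]
    refine image_mono fun y hy => ?_
    have h2 := hy.2.1
    rw [mem_ball, dist_eq_norm] at h2
    rcases le_or_gt ‖y - x‖ r₁ with h | h
    · left; exact ⟨hy.1, by rwa [mem_closedBall, dist_eq_norm]⟩
    · right; exact ⟨hy.1, h, h2⟩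
  have hreal : (μH[(d:ℝ)] B).toReal * r₂ ^ d ≤
      ((μH[(d:ℝ)] B).toReal + (μH[(d:ℝ)] A).toReal) * r₁ ^ d := by
    rw [← ENNReal.ofReal_toReal hBfin, ← ENNReal.ofReal_toReal hAfin,
      ← ENNReal.ofReal_mul (by norm_num), ← ENNReal.ofReal_mul hα0,
      ← ENNReal.ofReal_add (by positivity) (by positivity),
      ← ENNReal.ofReal_add (by positivity) (by positivity),
      ENNReal.ofReal_le_ofReal_iff (by positivity)] at hfinal
    set b := (μH[(d:ℝ)] B).toReal
    set a := (μH[(d:ℝ)] A).toReal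
    have h1 : α * (r₂ ^ d - r₁ ^ d) = r₂ ^ d - r₁ ^ d / 2 := by rw [hα]; field_simp
    have h2 := mul_le_mul_of_nonneg_right hfinal hD.le
    have h3 : α * a * (r₂ ^ d - r₁ ^ d) = a * (r₂ ^ d - r₁ ^ d / 2) := by rw [← h1]; ring
    nlinarith
  calc μH[(d:ℝ)] (E ∩ ball x r₁) * ENNReal.ofReal (r₂ ^ d)
      ≤ μH[(d:ℝ)] B * ENNReal.ofReal (r₂ ^ d) := by
        gcongr; exact inter_subset_inter_right _ ball_subset_closedBall
    _ = ENNReal.ofReal ((μH[(d:ℝ)] B).toReal * r₂ ^ d) := by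
        rw [ENNReal.ofReal_mul (by positivity), ENNReal.ofReal_toReal hBfin]
    _ ≤ ENNReal.ofReal (((μH[(d:ℝ)] B).toReal + (μH[(d:ℝ)] A).toReal) * r₁ ^ d) :=
        ENNReal.ofReal_le_ofReal hreal
    _ = _ := by
        rw [ENNReal.ofReal_mul (by positivity), ENNReal.ofReal_add (by positivity) (by positivity),
          ENNReal.ofReal_toReal hBfin, ENNReal.ofReal_toReal hAfin, hsplit]

/-! ### An outer measure vanishing on a set: almost every point has density zero or infinity -/

/-- If the `Ψ`-mass of small balls centred on `G` is at most `C σ ^ d`, then `Ψ ≤ C · volume` on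
subsets of `G`. -/
lemma outer_le_volume {d : ℕ} (Ψ : OuterMeasure (Fin d → ℝ)) (G : Set (Fin d → ℝ))
    (C : ℝ≥0∞) (hC : C ≠ ⊤) (σ0 : ℝ) (hσ0 : 0 < σ0)
    (h : ∀ θ ∈ G, ∀ σ, 0 < σ → σ ≤ σ0 → Ψ (closedBall θ σ) ≤ C * ENNReal.ofReal (σ ^ d))
    (s : Set (Fin d → ℝ)) (hs : s ⊆ G) : Ψ s ≤ C * volume s := by
  have key : ∀ ε : ℝ≥0∞, ε ≠ 0 → Ψ s ≤ C * (volume s + ε) := by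
    intro ε hε
    obtain ⟨t, r, htc, hts, hr, hcov, hsum⟩ :=
      Besicovitch.exists_closedBall_covering_tsum_measure_le (volume : Measure (Fin d → ℝ)) hε
        (fun _ => Ioc 0 σ0) s (by
          intro x _ δ hδ
          refine ⟨min σ0 (δ / 2), ⟨lt_min hσ0 (by linarith), min_le_left _ _⟩,
            lt_min hσ0 (by linarith), (min_le_right _ _).trans_lt (by linarith)⟩)
    have := htc.to_subtype
    calc Ψ s ≤ Ψ (⋃ x : t, closedBall (x : Fin d → ℝ) (r x)) := by
          refine Ψ.mono ?_
          rwa [biUnion_eq_iUnion] at hcov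
      _ ≤ ∑' x : t, Ψ (closedBall (x : Fin d → ℝ) (r x)) := measure_iUnion_le _
      _ ≤ ∑' x : t, C * volume (closedBall (x : Fin d → ℝ) (r x)) := by
          refine ENNReal.tsum_le_tsum fun x => ?_
          have hx := hr x x.2
          refine (h x (hs (hts x.2)) _ hx.1 hx.2).trans ?_
          rw [Real.volume_pi_closedBall _ hx.1.le, Fintype.card_fin]
          gcongr
          · exact hx.1.le
          · linarith [hx.1]
      _ = C * ∑' x : t, volume (closedBall (x : Fin d → ℝ) (r x)) := ENNReal.tsum_mul_left
      _ ≤ C * (volume s + ε) := by gcongr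
  have ht : Tendsto (fun ε : ℝ≥0∞ => C * (volume s + ε)) (𝓝[>] 0) (𝓝 (C * (volume s + 0))) := by
    refine ENNReal.Tendsto.const_mul ?_ (Or.inr hC)
    exact (tendsto_const_nhds.add tendsto_id).mono_left nhdsWithin_le_nhds
  rw [add_zero] at ht
  refine ge_of_tendsto ht ?_
  filter_upwards [self_mem_nhdsWithin] with ε hε
  exact key ε (ne_of_gt hε)

/-- Whitney-type covering: the mass off a closed set `G` is controlled by the volume off `G`. -/
lemma outer_off_le {d : ℕ} (Ψ : OuterMeasure (Fin d → ℝ)) (G : Set (Fin d → ℝ))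
    (hG : IsClosed G) (C : ℝ≥0∞) (σ0 : ℝ)
    (h : ∀ θ ∈ G, ∀ σ, 0 < σ → σ ≤ σ0 → Ψ (closedBall θ σ) ≤ C * ENNReal.ofReal (σ ^ d))
    (θ : Fin d → ℝ) (hθ : θ ∈ G) (σ : ℝ) (hσ : 0 < σ) (hσ2 : 2 * σ ≤ σ0) :
    Ψ (closedBall θ σ \ G) ≤ C * (10 ^ d * volume (closedBall θ (2 * σ) \ G)) := by
  have hne : G.Nonempty := ⟨θ, hθ⟩
  set τ : (Fin d → ℝ) → ℝ := fun z => infDist z G with hτ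
  have hτpos : ∀ z ∈ closedBall θ σ \ G, 0 < τ z := fun z hz =>
    (hG.notMem_iff_infDist_pos hne).1 hz.2
  have hτle : ∀ z ∈ closedBall θ σ \ G, τ z ≤ σ := fun z hz =>
    (infDist_le_dist_of_mem hθ).trans (mem_closedBall.1 hz.1)
  obtain ⟨u, hut, hdisj, hcov⟩ :=
    Vitali.exists_disjoint_subfamily_covering_enlargement_closedBall
      (closedBall θ σ \ G) (fun z => z) (fun z => τ z / 10) (σ / 10)
      (fun z hz => by have := hτle z hz; linarith) 5 (by norm_num)
  have huc : u.Countable := by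
    refine hdisj.countable_of_nonempty_interior fun z hz => ?_
    refine ⟨z, ball_subset_interior_closedBall (mem_ball_self ?_)⟩
    have := hτpos z (hut hz); positivity
  have := huc.to_subtype
  calc Ψ (closedBall θ σ \ G) ≤ Ψ (⋃ z : u, closedBall (z : Fin d → ℝ) (5 * (τ z / 10))) := by
        refine Ψ.mono fun z hz => ?_
        obtain ⟨b, hb, hsub⟩ := hcov z hz
        refine mem_iUnion.2 ⟨⟨b, hb⟩, hsub (mem_closedBall_self ?_)⟩
        have := hτpos z hz; positivity
    _ ≤ ∑' z : u, Ψ (closedBall (z : Fin d → ℝ) (5 * (τ z / 10))) := measure_iUnion_le _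
    _ ≤ ∑' z : u, C * (10 ^ d * volume (closedBall (z : Fin d → ℝ) (τ z / 10))) := by
        refine ENNReal.tsum_le_tsum fun z => ?_
        have hp := hτpos z (hut z.2)
        have hl := hτle z (hut z.2)
        obtain ⟨g, hg, hgd⟩ := hG.exists_infDist_eq_dist hne (z : Fin d → ℝ)
        calc Ψ (closedBall (z : Fin d → ℝ) (5 * (τ z / 10))) ≤ Ψ (closedBall g (2 * τ z)) := by
              refine Ψ.mono (closedBall_subset_closedBall' ?_)
              rw [← hgd]
              change _ + τ z ≤ _
              linarith
          _ ≤ C * ENNReal.ofReal ((2 * τ z) ^ d) := h g hg _ (by linarith) (by linarith)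
          _ = _ := by
              rw [Real.volume_pi_closedBall _ (by positivity), Fintype.card_fin]
              congr 1
              rw [show (10 : ℝ≥0∞) = ENNReal.ofReal 10 by simp, ← ENNReal.ofReal_pow (by norm_num),
                ← ENNReal.ofReal_mul (by positivity), ← mul_pow]
              congr 2; ring
    _ = C * (10 ^ d * ∑' z : u, volume (closedBall (z : Fin d → ℝ) (τ z / 10))) := by
        rw [ENNReal.tsum_mul_left, ENNReal.tsum_mul_left]
    _ = C * (10 ^ d * volume (⋃ z : u, closedBall (z : Fin d → ℝ) (τ z / 10))) := by
        rw [measure_iUnion]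
        · intro a b hab
          exact hdisj a.2 b.2 (fun h => hab (Subtype.ext h))
        · exact fun z => isClosed_closedBall.measurableSet
    _ ≤ _ := by
        gcongr
        refine iUnion_subset fun z w hw => ?_
        have hp := hτpos z (hut z.2)
        have hl := hτle z (hut z.2)
        rw [mem_closedBall] at hw
        refine ⟨?_, fun hwG => ?_⟩
        · rw [mem_closedBall]
          have h1 := mem_closedBall.1 (hut z.2).1
          have := dist_triangle w z θ
          linarith
        · have : τ z ≤ dist (z : Fin d → ℝ) w := infDist_le_dist_of_mem hwG
          rw [dist_comm] at this
          linarith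

lemma tri_core {d : ℕ} (Ψ : OuterMeasure (Fin d → ℝ)) (N : Set (Fin d → ℝ))
    (hNm : MeasurableSet N) (hN : Ψ N = 0) (G : Set (Fin d → ℝ))
    (hG : IsClosed G) (C : ℝ≥0∞) (hC : C ≠ ⊤) (σ0 : ℝ) (hσ0 : 0 < σ0)
    (h : ∀ θ ∈ G, ∀ σ, 0 < σ → σ ≤ σ0 → Ψ (closedBall θ σ) ≤ C * ENNReal.ofReal (σ ^ d)) :
    ∀ᵐ θ, θ ∈ N ∩ G →
      Tendsto (fun σ => Ψ (closedBall θ σ) / ENNReal.ofReal (σ ^ d)) (𝓝[>] 0) (𝓝 0) := by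
  have hm : MeasurableSet (N ∩ G) := hNm.inter hG.measurableSet
  filter_upwards [Besicovitch.ae_tendsto_measure_inter_div_of_measurableSet
    (volume : Measure (Fin d → ℝ)) hm.compl] with θ hθ hmem
  rw [indicator_of_notMem (by simpa using hmem)] at hθ
  set A : ℝ≥0∞ := C * (1 + 10 ^ d) * ENNReal.ofReal (4 ^ d) with hA
  have hAtop : A ≠ ⊤ := by
    refine ENNReal.mul_ne_top (ENNReal.mul_ne_top hC ?_) ENNReal.ofReal_ne_top
    exact ENNReal.add_ne_top.2 ⟨by simp, by simp⟩
  have h2 : Tendsto (fun σ : ℝ => 2 * σ) (𝓝[>] 0) (𝓝[>] 0) := by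
    refine tendsto_nhdsWithin_iff.2 ⟨?_, ?_⟩
    · have : Tendsto (fun σ : ℝ => 2 * σ) (𝓝 0) (𝓝 (2 * 0)) := tendsto_id.const_mul 2
      rw [mul_zero] at this
      exact this.mono_left nhdsWithin_le_nhds
    · filter_upwards [self_mem_nhdsWithin] with σ hσ
      have : (0 : ℝ) < σ := hσ
      exact mul_pos two_pos this
  have hlim := ENNReal.Tendsto.const_mul (hθ.comp h2) (Or.inr hAtop)
  rw [mul_zero] at hlim
  refine tendsto_of_tendsto_of_tendsto_of_le_of_le' tendsto_const_nhds hlim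
    (Eventually.of_forall fun _ => zero_le) ?_
  have hsm : ∀ᶠ σ in 𝓝[>] (0 : ℝ), σ ∈ Ioc 0 (σ0 / 2) :=
    Ioc_mem_nhdsGT (by positivity)
  filter_upwards [hsm] with σ hσ
  have hσp : 0 < σ := hσ.1
  have hσ2 : 2 * σ ≤ σ0 := by linarith [hσ.2]
  have hB : Ψ (closedBall θ σ) ≤
      C * (1 + 10 ^ d) * volume ((N ∩ G)ᶜ ∩ closedBall θ (2 * σ)) := by
    calc Ψ (closedBall θ σ)
        ≤ Ψ (N ∪ ((closedBall θ σ ∩ G) \ N ∪ closedBall θ σ \ G)) := by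
          refine Ψ.mono fun z hz => ?_
          by_cases h1 : z ∈ N
          · exact Or.inl h1
          · by_cases h2 : z ∈ G
            · exact Or.inr (Or.inl ⟨⟨hz, h2⟩, h1⟩)
            · exact Or.inr (Or.inr ⟨hz, h2⟩)
      _ ≤ Ψ N + (Ψ ((closedBall θ σ ∩ G) \ N) + Ψ (closedBall θ σ \ G)) :=
          (measure_union_le _ _).trans (by gcongr; exact measure_union_le _ _)
      _ ≤ 0 + (C * volume ((N ∩ G)ᶜ ∩ closedBall θ (2 * σ)) +
            C * (10 ^ d * volume ((N ∩ G)ᶜ ∩ closedBall θ (2 * σ)))) := by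
          rw [hN]
          gcongr
          · refine (outer_le_volume Ψ G C hC σ0 hσ0 h _ (fun z hz => hz.1.2)).trans ?_
            gcongr
            intro z hz
            exact ⟨fun hh => hz.2 hh.1, closedBall_subset_closedBall (by linarith) hz.1.1⟩
          · refine (outer_off_le Ψ G hG C σ0 h θ hmem.2 σ hσp hσ2).trans ?_
            gcongr
            intro z hz
            exact ⟨fun hh => hz.2 hh.2, hz.1⟩
      _ = _ := by ring
  have hvol : volume (closedBall θ (2 * σ)) = ENNReal.ofReal (4 ^ d) * ENNReal.ofReal (σ ^ d) := by
    rw [Real.volume_pi_closedBall _ (by positivity), Fintype.card_fin,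
      ← ENNReal.ofReal_mul (by positivity), ← mul_pow]
    congr 2; ring
  have h4 : ENNReal.ofReal ((4 : ℝ) ^ d) ≠ 0 := by simp
  calc Ψ (closedBall θ σ) / ENNReal.ofReal (σ ^ d)
      ≤ C * (1 + 10 ^ d) * volume ((N ∩ G)ᶜ ∩ closedBall θ (2 * σ)) / ENNReal.ofReal (σ ^ d) := by
        gcongr
    _ = A * (volume ((N ∩ G)ᶜ ∩ closedBall θ (2 * σ)) / volume (closedBall θ (2 * σ))) := by
        rw [hvol, hA, ENNReal.div_eq_inv_mul, ENNReal.div_eq_inv_mul,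
          ENNReal.mul_inv (Or.inl h4) (Or.inl ENNReal.ofReal_ne_top)]
        have : ENNReal.ofReal ((4 : ℝ) ^ d) * (ENNReal.ofReal ((4 : ℝ) ^ d))⁻¹ = 1 :=
          ENNReal.mul_inv_cancel h4 ENNReal.ofReal_ne_top
        set O := ENNReal.ofReal ((4 : ℝ) ^ d)
        set v := volume ((N ∩ G)ᶜ ∩ closedBall θ (2 * σ))
        set q := (ENNReal.ofReal (σ ^ d))⁻¹
        rw [show C * (1 + 10 ^ d) * O * (O⁻¹ * q * v) = (O * O⁻¹) * (q * (C * (1 + 10 ^ d) * v)) by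
          ring, this, one_mul]

/-- Besicovitch's dichotomy in the parameter space `ℝ ^ d`: if `Ψ N = 0`, then at almost every
point of `N` the upper `d`-density of `Ψ` is either `0` or `∞`. -/
lemma tri {d : ℕ} (Ψ : OuterMeasure (Fin d → ℝ)) (N : Set (Fin d → ℝ))
    (hNm : MeasurableSet N) (hN : Ψ N = 0) :
    ∀ᵐ θ, θ ∈ N →
      Tendsto (fun k : ℕ => Ψ (closedBall θ ((1 / 2) ^ k)) * 2 ^ (k * d)) atTop (𝓝 0) ∨
      ∀ C : ℕ, ∃ᶠ k : ℕ in atTop, (C : ℝ≥0∞) < Ψ (closedBall θ ((1 / 2) ^ k)) * 2 ^ (k * d) := by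
  set G : ℕ → Set (Fin d → ℝ) := fun j =>
    {θ | ∀ k ≥ j, Ψ (closedBall θ ((1 / 2) ^ k)) * 2 ^ (k * d) ≤ j} with hGdef
  have hpow : ∀ k : ℕ, ENNReal.ofReal (((1 / 2 : ℝ) ^ k) ^ d) = (2 ^ (k * d))⁻¹ := by
    intro k
    rw [← pow_mul, one_div, inv_pow, ENNReal.ofReal_inv_of_pos (by positivity),
      ENNReal.ofReal_pow (by norm_num)]
    simp
  have hcore : ∀ j : ℕ, ∀ᵐ θ, θ ∈ N ∩ closure (G j) →
      Tendsto (fun σ => Ψ (closedBall θ σ) / ENNReal.ofReal (σ ^ d)) (𝓝[>] 0) (𝓝 0) := by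
    intro j
    refine tri_core Ψ N hNm hN _ isClosed_closure ((j : ℝ≥0∞) * ENNReal.ofReal (4 ^ d))
      (ENNReal.mul_ne_top (by simp) ENNReal.ofReal_ne_top) ((1 / 2) ^ (j + 1)) (by positivity) ?_
    intro θ hθ σ hσ hσj
    obtain ⟨k, hk1, hk2⟩ := exists_nat_pow_near_of_lt_one hσ
      (hσj.trans (pow_le_one₀ (by norm_num) (by norm_num))) (y := (1 / 2 : ℝ)) (by norm_num)
      (by norm_num)
    have hjk : j + 1 < k + 1 := by
      by_contra hcon
      have := pow_le_pow_of_le_one (by norm_num : (0 : ℝ) ≤ 1 / 2) (by norm_num)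
        (not_lt.1 hcon)
      linarith
    obtain ⟨m, rfl⟩ : ∃ m, k = m + 1 := ⟨k - 1, by omega⟩
    obtain ⟨θ', hθ', hd⟩ := Metric.mem_closure_iff.1 hθ σ hσ
    have h1 := hθ' m (by omega)
    have h2 : (2 : ℝ≥0∞) ^ (m * d) ≠ 0 := by simp
    have h3 : (2 : ℝ≥0∞) ^ (m * d) ≠ ⊤ := by simp
    have hs4 : (1 / 2 : ℝ) ^ m ≤ 4 * σ := by
      rw [pow_succ, pow_succ] at hk1; linarith
    calc Ψ (closedBall θ σ) ≤ Ψ (closedBall θ' ((1 / 2) ^ m)) := by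
          refine Ψ.mono (closedBall_subset_closedBall' ?_)
          rw [pow_succ] at hk2; linarith
      _ ≤ j * (2 ^ (m * d))⁻¹ := by
          rw [← div_eq_mul_inv]
          exact (ENNReal.le_div_iff_mul_le (Or.inl h2) (Or.inl h3)).2 h1
      _ = j * ENNReal.ofReal (((1 / 2 : ℝ) ^ m) ^ d) := by rw [hpow]
      _ ≤ j * ENNReal.ofReal ((4 * σ) ^ d) := by gcongr
      _ = _ := by
          rw [mul_pow, ENNReal.ofReal_mul (by positivity), mul_assoc]
  filter_upwards [ae_all_iff.2 hcore] with θ hθ hmem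
  by_contra hcon
  push Not at hcon
  obtain ⟨hnt, C, hC⟩ := hcon
  obtain ⟨j0, hj0⟩ := eventually_atTop.1 hC
  have hG : θ ∈ G (max C j0) := by
    intro k hk
    refine (hj0 k (le_of_max_le_right hk)).trans ?_
    exact_mod_cast le_max_left C j0
  have ht := hθ _ ⟨hmem, subset_closure hG⟩
  have hk : Tendsto (fun k : ℕ => (1 / 2 : ℝ) ^ k) atTop (𝓝[>] 0) := by
    refine tendsto_nhdsWithin_iff.2 ⟨tendsto_pow_atTop_nhds_zero_of_lt_one (by norm_num)
      (by norm_num), Eventually.of_forall fun k => ?_⟩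
    exact mem_Ioi.2 (by positivity)
  refine hnt ((ht.comp hk).congr fun k => ?_)
  simp only [Function.comp]
  rw [hpow, div_eq_mul_inv, inv_inv]

/-! ### Small cones and no graph pieces force measure zero -/

/-- The part of `Z` lying, within distance `r` of `a`, in the cone of aperture `σ` around the fibre
direction of `Q` at `a`. -/
def coneIn {X Y : Type*} [PseudoMetricSpace X] [PseudoMetricSpace Y] (Q : X → Y) (Z : Set X)
    (a : X) (σ r : ℝ) : Set X :=
  {x ∈ Z | dist (Q x) (Q a) ≤ σ * dist x a ∧ dist x a ≤ r}

/-- A set `A` of diameter at most `D`, with small cones at each point and no part on which `Q` is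
bi-Lipschitz, has measure at most a small multiple of `D ^ d`. -/
lemma cone_piece {X : Type*} [MetricSpace X] [MeasurableSpace X] [BorelSpace X] {d : ℕ}
    (Q : X → (Fin d → ℝ)) (Z : Set X) (L σ lam ρ0 : ℝ) (hL : 0 ≤ L)
    (hσ : 0 < σ) (hσ1 : σ ≤ 1) (hlam : 0 ≤ lam)
    (hLip : ∀ x ∈ Z, ∀ y ∈ Z, dist (Q x) (Q y) ≤ L * dist x y)
    (hcone : ∀ a ∈ Z, ∀ r, 0 < r → r ≤ ρ0 →
      μH[(d : ℝ)] (coneIn Q Z a σ r) ≤ ENNReal.ofReal (lam * (σ * r) ^ d))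
    (hnull : ∀ P ⊆ Z, (∀ x ∈ P, ∀ y ∈ P, σ / 4 * dist x y ≤ dist (Q x) (Q y)) →
      μH[(d : ℝ)] P = 0)
    (A : Set X) (hAZ : A ⊆ Z) (D : ℝ) (hD0 : 0 ≤ D) (hD : 2 * D ≤ ρ0)
    (hAD : ∀ x ∈ A, ∀ y ∈ A, dist x y ≤ D) :
    μH[(d : ℝ)] A ≤ ENNReal.ofReal (2 * lam * (40 * (L + 1)) ^ d * D ^ d) := by
  classical
  set S : X → Set ℝ := fun a => {t | ∃ x ∈ A, dist (Q x) (Q a) ≤ σ / 4 * dist x a ∧ dist x a = t}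
    with hS
  set hh : X → ℝ := fun a => sSup (S a) with hhdef
  have hSb : ∀ a ∈ A, BddAbove (S a) := by
    rintro a ha
    refine ⟨D, ?_⟩
    rintro _ ⟨x, hx, -, rfl⟩
    exact hAD x hx a ha
  have hSne : ∀ a ∈ A, (0 : ℝ) ∈ S a := fun a ha => ⟨a, ha, by simp, by simp⟩
  have hle : ∀ a ∈ A, hh a ≤ D := by
    intro a ha
    refine csSup_le ⟨0, hSne a ha⟩ ?_
    rintro _ ⟨x, hx, -, rfl⟩
    exact hAD x hx a ha
  have hge : ∀ a ∈ A, ∀ x ∈ A, dist (Q x) (Q a) ≤ σ / 4 * dist x a → dist x a ≤ hh a :=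
    fun a ha x hx hxa => le_csSup (hSb a ha) ⟨x, hx, hxa, rfl⟩
  set B : Set X := {a ∈ A | 0 < hh a} with hB
  have hP0 : μH[(d : ℝ)] (A \ B) = 0 := by
    refine hnull _ (fun x hx => hAZ hx.1) fun x hx y hy => ?_
    by_contra hcon
    push Not at hcon
    have h1 := hge y hy.1 x hx.1 hcon.le
    have h2 : hh y ≤ 0 := not_lt.1 fun h => hy.2 ⟨hy.1, h⟩
    have h3 : dist x y = 0 := le_antisymm (h1.trans h2) dist_nonneg
    rw [h3, mul_zero] at hcon
    exact absurd hcon (not_lt.2 dist_nonneg)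
  set ρ : X → ℝ := fun a => σ * hh a / 20 with hρ
  have hρpos : ∀ a ∈ B, 0 < ρ a := fun a ha => by
    have := ha.2; simp only [hρ]; positivity
  have hρD : ∀ a ∈ B, ρ a ≤ D := fun a ha => by
    have h1 := hle a ha.1
    have h2 := ha.2
    simp only [hρ]
    nlinarith
  obtain ⟨u, huB, hdisj, hcov⟩ :=
    Vitali.exists_disjoint_subfamily_covering_enlargement_closedBall B Q ρ D hρD 5 (by norm_num)
  have huc : u.Countable := by
    refine hdisj.countable_of_nonempty_interior fun z hz => ?_
    exact ⟨Q z, ball_subset_interior_closedBall (mem_ball_self (hρpos z (huB hz)))⟩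
  have := huc.to_subtype
  have htube : ∀ a ∈ B, μH[(d : ℝ)] (A ∩ Q ⁻¹' closedBall (Q a) (5 * ρ a)) ≤
      ENNReal.ofReal (2 * lam * 20 ^ d) * volume (closedBall (Q a) (ρ a)) := by
    intro a ha
    have hpos : 0 < hh a := ha.2
    obtain ⟨_, ⟨b, hb, hbc, rfl⟩, hbl⟩ := exists_lt_of_lt_csSup (s := S a) ⟨0, hSne a ha.1⟩
      (show 3 / 4 * hh a < sSup (S a) by change _ < hh a; linarith)
    have hbh := hge a ha.1 b hb hbc
    have hsub : A ∩ Q ⁻¹' closedBall (Q a) (5 * ρ a) ⊆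
        coneIn Q Z a σ (hh a) ∪ coneIn Q Z b σ (2 * hh a) := by
      rintro x ⟨hxA, hx⟩
      have hx' : dist (Q x) (Q a) ≤ σ * hh a / 4 := by
        have := mem_closedBall.1 hx
        simp only [hρ] at this
        linarith
      by_cases hfar : hh a / 4 ≤ dist x a
      · left
        refine ⟨hAZ hxA, ?_, ?_⟩
        · nlinarith
        · by_contra hcon
          push Not at hcon
          have := hge a ha.1 x hxA (by nlinarith)
          linarith
      · right
        push Not at hfar
        have h1 : dist x b ≤ dist x a + dist b a := dist_triangle_right x b a
        have h2 : dist b a ≤ dist x b + dist x a := by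
          rw [dist_comm x b]; exact dist_triangle b x a
        have h3 : dist (Q x) (Q b) ≤ dist (Q x) (Q a) + dist (Q b) (Q a) :=
          dist_triangle_right _ _ _
        refine ⟨hAZ hxA, ?_, by linarith⟩
        nlinarith
    have hhD := hle a ha.1
    calc μH[(d : ℝ)] (A ∩ Q ⁻¹' closedBall (Q a) (5 * ρ a))
        ≤ μH[(d : ℝ)] (coneIn Q Z a σ (hh a)) + μH[(d : ℝ)] (coneIn Q Z b σ (2 * hh a)) :=
          (measure_mono hsub).trans (measure_union_le _ _)
      _ ≤ ENNReal.ofReal (lam * (σ * hh a) ^ d) + ENNReal.ofReal (lam * (σ * (2 * hh a)) ^ d) := by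
          gcongr
          · exact hcone a (hAZ ha.1) _ hpos (by linarith)
          · exact hcone b (hAZ hb) _ (by linarith) (by linarith)
      _ ≤ ENNReal.ofReal (lam * (σ * (2 * hh a)) ^ d) +
            ENNReal.ofReal (lam * (σ * (2 * hh a)) ^ d) := by
          gcongr
          linarith
      _ = _ := by
          rw [Real.volume_pi_closedBall _ (hρpos a ha).le, Fintype.card_fin,
            ← ENNReal.ofReal_add (by positivity) (by positivity),
            ← ENNReal.ofReal_mul (by positivity), mul_assoc, ← mul_pow]
          congr 1
          have : 20 * (2 * ρ a) = σ * (2 * hh a) := by simp only [hρ]; ring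
          rw [this]; ring
  by_cases hBe : B = ∅
  · rw [hBe, sdiff_empty] at hP0
    rw [hP0]; exact zero_le
  obtain ⟨a0, ha0⟩ := nonempty_iff_ne_empty.2 hBe
  calc μH[(d : ℝ)] A
      ≤ μH[(d : ℝ)] (A \ B ∪ ⋃ a : u, A ∩ Q ⁻¹' closedBall (Q a) (5 * ρ a)) := by
        refine measure_mono fun x hx => ?_
        by_cases hxB : x ∈ B
        · obtain ⟨b, hb, hsub⟩ := hcov x hxB
          exact Or.inr (mem_iUnion.2 ⟨⟨b, hb⟩, hx, hsub (mem_closedBall_self (hρpos x hxB).le)⟩)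
        · exact Or.inl ⟨hx, hxB⟩
    _ ≤ 0 + ∑' a : u, μH[(d : ℝ)] (A ∩ Q ⁻¹' closedBall (Q a) (5 * ρ a)) := by
        refine (measure_union_le _ _).trans ?_
        rw [hP0]
        gcongr
        exact measure_iUnion_le _
    _ ≤ ∑' a : u, ENNReal.ofReal (2 * lam * 20 ^ d) * volume (closedBall (Q a) (ρ a)) := by
        rw [zero_add]
        exact ENNReal.tsum_le_tsum fun a => htube a (huB a.2)
    _ = ENNReal.ofReal (2 * lam * 20 ^ d) * volume (⋃ a : u, closedBall (Q a) (ρ a)) := by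
        rw [ENNReal.tsum_mul_left, measure_iUnion]
        · intro a b hab
          exact hdisj a.2 b.2 (fun h => hab (Subtype.ext h))
        · exact fun z => isClosed_closedBall.measurableSet
    _ ≤ ENNReal.ofReal (2 * lam * 20 ^ d) * volume (closedBall (Q a0) ((L + 1) * D)) := by
        gcongr
        refine iUnion_subset fun a => closedBall_subset_closedBall' ?_
        have h1 := hLip a (hAZ (huB a.2).1) a0 (hAZ ha0.1)
        have h2 := hAD a (huB a.2).1 a0 ha0.1
        have h3 := hρD a (huB a.2)
        nlinarith
    _ = _ := by
        rw [Real.volume_pi_closedBall _ (by positivity), Fintype.card_fin,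
          ← ENNReal.ofReal_mul (by positivity), mul_assoc (2 * lam), ← mul_pow,
          mul_assoc (2 * lam), ← mul_pow]
        congr 3; ring

lemma cone_null {X : Type*} [MetricSpace X] [MeasurableSpace X] [BorelSpace X] {d : ℕ}
    (Q : X → (Fin d → ℝ)) (Z : Set X) (L σ lam ρ0 : ℝ) (hL : 0 ≤ L)
    (hσ : 0 < σ) (hσ1 : σ ≤ 1) (hlam : 0 ≤ lam) (hρ0 : 0 < ρ0)
    (hLip : ∀ x ∈ Z, ∀ y ∈ Z, dist (Q x) (Q y) ≤ L * dist x y)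
    (hcone : ∀ a ∈ Z, ∀ r, 0 < r → r ≤ ρ0 →
      μH[(d : ℝ)] (coneIn Q Z a σ r) ≤ ENNReal.ofReal (lam * (σ * r) ^ d))
    (hnull : ∀ P ⊆ Z, (∀ x ∈ P, ∀ y ∈ P, σ / 4 * dist x y ≤ dist (Q x) (Q y)) →
      μH[(d : ℝ)] P = 0)
    (hfin : μH[(d : ℝ)] Z ≠ ⊤) (hsmall : 2 * lam * (40 * (L + 1)) ^ d < 1) :
    μH[(d : ℝ)] Z = 0 := by
  set c := 2 * lam * (40 * (L + 1)) ^ d with hc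
  have hc0 : 0 ≤ c := by positivity
  have hc1 : 0 < (c + 1) / 2 := by positivity
  have key : μH[(d : ℝ)] Z ≤ ENNReal.ofReal ((c + 1) / 2) * μH[(d : ℝ)] Z := by
    conv_rhs => rw [Measure.hausdorffMeasure_apply]
    have hr : 0 < ENNReal.ofReal (ρ0 / 2) := ENNReal.ofReal_pos.2 (by positivity)
    refine le_trans ?_ (mul_le_mul_right (le_iSup₂ (f := fun (r : ℝ≥0∞) (_ : 0 < r) =>
      ⨅ (t : ℕ → Set X) (_ : Z ⊆ ⋃ n, t n) (_ : ∀ n, ediam (t n) ≤ r),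
        ∑' n, ⨆ _ : (t n).Nonempty, ediam (t n) ^ (d : ℝ)) _ hr) _)
    simp only [ENNReal.mul_iInf_of_ne (ENNReal.ofReal_pos.2 hc1).ne' ENNReal.ofReal_ne_top]
    refine le_iInf fun t => le_iInf fun hcov => le_iInf fun hdiam => ?_
    calc μH[(d : ℝ)] Z ≤ μH[(d : ℝ)] (⋃ i, Z ∩ t i) := by
          rw [← inter_iUnion]; exact measure_mono (subset_inter subset_rfl hcov)
      _ ≤ ∑' i, μH[(d : ℝ)] (Z ∩ t i) := measure_iUnion_le _
      _ ≤ ∑' i, ENNReal.ofReal ((c + 1) / 2) *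
            ⨆ _ : (t i).Nonempty, ediam (t i) ^ (d : ℝ) := by
          refine ENNReal.tsum_le_tsum fun i => ?_
          rcases (t i).eq_empty_or_nonempty with he | hne
          · simp [he]
          rw [iSup_pos hne]
          have htop : ediam (t i) ≠ ⊤ := ((hdiam i).trans_lt ENNReal.ofReal_lt_top).ne
          have hto : (ediam (t i)).toReal ≤ ρ0 / 2 :=
            ENNReal.toReal_le_of_le_ofReal (by positivity) (hdiam i)
          refine (cone_piece Q Z L σ lam ρ0 hL hσ hσ1 hlam hLip hcone hnull (Z ∩ t i)
            inter_subset_left (ediam (t i)).toReal ENNReal.toReal_nonneg (by linarith)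
            fun x hx y hy => ?_).trans ?_
          · rw [dist_edist]
            exact ENNReal.toReal_mono htop (edist_le_ediam_of_mem hx.2 hy.2)
          · rw [ENNReal.ofReal_mul hc0, ENNReal.ofReal_pow ENNReal.toReal_nonneg,
              ENNReal.ofReal_toReal htop, ENNReal.rpow_natCast]
            gcongr
            linarith
      _ = _ := ENNReal.tsum_mul_left
  by_contra h0
  have : ENNReal.ofReal ((c + 1) / 2) * μH[(d : ℝ)] Z < 1 * μH[(d : ℝ)] Z := by
    rw [ENNReal.mul_lt_mul_iff_left h0 hfin, ← ENNReal.ofReal_one]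
    exact (ENNReal.ofReal_lt_ofReal_iff one_pos).2 (by linarith)
  rw [one_mul] at this
  exact absurd key (not_le.2 this)

/-! ### Random affine frames and the projective maps they define -/

/-- A frame: `n` affine functions `x ↦ ⟪v, x⟫ + b`, each encoded by its pair `(v, b)`. -/
abbrev Frame (n : ℕ) : Type := Fin n → Euc n × ℝ

/-- The `i`-th affine function of a frame. -/
def ell {n : ℕ} (ω : Frame n) (i : Fin n) (x : Euc n) : ℝ := ⟪(ω i).1, x⟫_ℝ + (ω i).2

/-- The numerator of `Π x - Π a`, where `Π = (ℓ_{I i} / ℓ_j)_i`: one has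
`Π x - Π a = tilt / (ℓ_j a * ℓ_j x)`. -/
def tilt {n d : ℕ} (I : Fin d → Fin n) (j : Fin n) (ω : Frame n) (a x : Euc n) : Fin d → ℝ :=
  fun i => ell ω j a * (ell ω (I i) x - ell ω (I i) a) - ell ω (I i) a * (ell ω j x - ell ω j a)

/-- The cone at `a` of aperture `σ` and radius `r` around the fibre of `Π`, in which the size of
`x - a` is measured by the increment of `ℓ_t`. -/
def pcone {n d : ℕ} (I : Fin d → Fin n) (j t : Fin n) (ω : Frame n) (a : Euc n) (σ r : ℝ) :
    Set (Euc n) :=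
  {x | ell ω t x ≠ ell ω t a ∧
    ‖tilt I j ω a x‖ ≤ σ * (|ell ω j a| * |ell ω t x - ell ω t a|) ∧ dist x a ≤ r}

/-- The largest normalised mass `μ (cone) / (σ r) ^ d` of the cones at `a` of aperture
`σ = 2 ^ (-k)` and dyadic radius `r ≤ 2 ^ (-p)`. -/
def coneDens {n d : ℕ} (I : Fin d → Fin n) (j t : Fin n) (μ : Measure (Euc n)) (p : ℕ)
    (ω : Frame n) (a : Euc n) (k : ℕ) : ℝ≥0∞ :=
  (⨆ q : ℕ, μ (pcone I j t ω a ((1 / 2) ^ k) ((1 / 2) ^ (p + q))) * 2 ^ ((p + q) * d)) * 2 ^ (k * d)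

/-- Some point of `K` near `a` lies exactly in the fibre of `Π` through `a`. -/
def fibreHit {n d : ℕ} (I : Fin d → Fin n) (j t : Fin n) (K : Set (Euc n)) (p : ℕ)
    (ω : Frame n) (a : Euc n) : Prop :=
  ∃ x ∈ K, ell ω t x ≠ ell ω t a ∧ tilt I j ω a x = 0 ∧ dist x a ≤ (1 / 2) ^ p

/-- The trichotomy at `a`: the cone densities tend to zero, or are unbounded, or the fibre through
`a` meets `K` near `a`. -/
def Tame {n d : ℕ} (I : Fin d → Fin n) (j t : Fin n) (K : Set (Euc n)) (μ : Measure (Euc n))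
    (p : ℕ) (ω : Frame n) (a : Euc n) : Prop :=
  Tendsto (coneDens I j t μ p ω a) atTop (𝓝 0) ∨
  (∀ C : ℕ, ∃ᶠ k : ℕ in atTop, (C : ℝ≥0∞) < coneDens I j t μ p ω a k) ∨
  fibreHit I j t K p ω a

@[fun_prop]
lemma ell_continuous {n : ℕ} {X : Type*} [TopologicalSpace X] (f : X → Frame n) (g : X → Euc n)
    (hf : Continuous f) (hg : Continuous g) (i : Fin n) : Continuous fun p => ell (f p) i (g p) := by
  unfold ell; fun_prop

@[fun_prop]
lemma tilt_continuous {n d : ℕ} {X : Type*} [TopologicalSpace X] (I : Fin d → Fin n) (j : Fin n)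
    (f : X → Frame n) (g h : X → Euc n)
    (hf : Continuous f) (hg : Continuous g) (hh : Continuous h) :
    Continuous fun p => tilt I j (f p) (g p) (h p) := by
  unfold tilt; fun_prop

lemma pcone_measurable {n d : ℕ} (I : Fin d → Fin n) (j t : Fin n) (σ r : ℝ) :
    MeasurableSet {p : (Frame n × Euc n) × Euc n | p.2 ∈ pcone I j t p.1.1 p.1.2 σ r} := by
  have h1 : MeasurableSet {p : (Frame n × Euc n) × Euc n | ell p.1.1 t p.2 = ell p.1.1 t p.1.2} :=
    IsClosed.measurableSet (by apply isClosed_eq <;> fun_prop)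
  have h2 : MeasurableSet {p : (Frame n × Euc n) × Euc n | ‖tilt I j p.1.1 p.1.2 p.2‖ ≤
      σ * (|ell p.1.1 j p.1.2| * |ell p.1.1 t p.2 - ell p.1.1 t p.1.2|)} :=
    IsClosed.measurableSet (by apply isClosed_le <;> fun_prop)
  have h3 : MeasurableSet {p : (Frame n × Euc n) × Euc n | dist p.2 p.1.2 ≤ r} :=
    IsClosed.measurableSet (by apply isClosed_le <;> fun_prop)
  exact h1.compl.inter (h2.inter h3)

lemma coneDens_measurable {n d : ℕ} (I : Fin d → Fin n) (j t : Fin n) (μ : Measure (Euc n))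
    [SFinite μ] (p k : ℕ) :
    Measurable fun z : Frame n × Euc n => coneDens I j t μ p z.1 z.2 k := by
  unfold coneDens
  refine Measurable.mul_const (Measurable.iSup fun q => Measurable.mul_const ?_ _) _
  exact measurable_measure_prodMk_left (pcone_measurable I j t _ _)

lemma fibreHit_measurable {n d : ℕ} (I : Fin d → Fin n) (j t : Fin n) (K : Set (Euc n))
    (hK : IsCompact K) (p : ℕ) :
    MeasurableSet {z : Frame n × Euc n | fibreHit I j t K p z.1 z.2} := by
  have := isCompact_iff_compactSpace.1 hK
  have hEq : {z : Frame n × Euc n | fibreHit I j t K p z.1 z.2} =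
      ⋃ m : ℕ, Prod.fst '' {w : (Frame n × Euc n) × K |
        1 / ((m : ℝ) + 1) ≤ |ell w.1.1 t w.2 - ell w.1.1 t w.1.2| ∧
        tilt I j w.1.1 w.1.2 w.2 = 0 ∧ dist (w.2 : Euc n) w.1.2 ≤ (1 / 2) ^ p} := by
    ext ⟨ω, a⟩
    simp only [mem_ofPred_eq, fibreHit, mem_iUnion, mem_image, Prod.exists]
    constructor
    · rintro ⟨x, hx, h1, h2, h3⟩
      obtain ⟨m, hm⟩ := exists_nat_one_div_lt (abs_pos.2 (sub_ne_zero.2 h1))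
      exact ⟨m, (ω, a).1, (ω, a).2, ⟨x, hx⟩, ⟨hm.le, h2, h3⟩, rfl⟩
    · rintro ⟨m, ω', a', ⟨x, hx⟩, ⟨h1, h2, h3⟩, h4⟩
      obtain ⟨rfl, rfl⟩ := Prod.mk.inj h4
      refine ⟨x, hx, ?_, h2, h3⟩
      have : 0 < 1 / ((m : ℝ) + 1) := by positivity
      exact sub_ne_zero.1 (abs_pos.1 (this.trans_le h1))
  rw [hEq]
  refine MeasurableSet.iUnion fun m => IsClosed.measurableSet ?_
  refine isClosedMap_fst_of_compactSpace _ ?_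
  have h1 : IsClosed {w : (Frame n × Euc n) × K |
      1 / ((m : ℝ) + 1) ≤ |ell w.1.1 t w.2 - ell w.1.1 t w.1.2|} := by
    apply isClosed_le <;> fun_prop
  have h2 : IsClosed {w : (Frame n × Euc n) × K | tilt I j w.1.1 w.1.2 w.2 = 0} := by
    apply isClosed_eq <;> fun_prop
  have h3 : IsClosed {w : (Frame n × Euc n) × K | dist (w.2 : Euc n) w.1.2 ≤ (1 / 2) ^ p} := by
    apply isClosed_le <;> fun_prop
  exact h1.inter (h2.inter h3)

lemma tame_measurable {n d : ℕ} (I : Fin d → Fin n) (j t : Fin n) (K : Set (Euc n))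
    (hK : IsCompact K) (μ : Measure (Euc n)) [SFinite μ] (p : ℕ) :
    MeasurableSet {z : Frame n × Euc n | ell z.1 j z.2 ≠ 0 → Tame I j t K μ p z.1 z.2} := by
  have h0 : MeasurableSet {z : Frame n × Euc n | ell z.1 j z.2 ≠ 0} :=
    (IsClosed.measurableSet (by apply isClosed_eq <;> fun_prop)).compl
  refine h0.imp (MeasurableSet.union ?_ (MeasurableSet.union ?_ (fibreHit_measurable I j t K hK p)))
  · exact measurableSet_tendsto (𝓝 0) (fun k => coneDens_measurable I j t μ p k)
  · have : {z : Frame n × Euc n | ∀ C : ℕ, ∃ᶠ k : ℕ in atTop,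
        (C : ℝ≥0∞) < coneDens I j t μ p z.1 z.2 k} =
        ⋂ C : ℕ, ⋂ l : ℕ, ⋃ k : ℕ, ⋃ _ : l ≤ k,
          {z | (C : ℝ≥0∞) < coneDens I j t μ p z.1 z.2 k} := by
      ext z; simp [frequently_atTop]
    change MeasurableSet {z : Frame n × Euc n | ∀ C : ℕ, ∃ᶠ k : ℕ in atTop,
        (C : ℝ≥0∞) < coneDens I j t μ p z.1 z.2 k}
    rw [this]
    exact MeasurableSet.iInter fun C => MeasurableSet.iInter fun l => MeasurableSet.iUnion fun k =>
      MeasurableSet.iUnion fun _ =>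
        measurableSet_lt measurable_const (coneDens_measurable I j t μ p k)

/-- The linear map of frames adding `c s` times `ℓ_t - ℓ_t(a)` to the function `ℓ_s`. -/
def shear {n : ℕ} (a : Euc n) (t : Fin n) (c : Fin n → ℝ) : Frame n →ₗ[ℝ] Frame n where
  toFun ω := fun s => ω s + c s • (ω t - (0, ell ω t a))
  map_add' ω ω' := by
    funext s
    ext
    · simp; ring
    · simp [ell, inner_add_left]; ring
  map_smul' r ω := by
    funext s
    ext
    · simp; ring
    · simp [ell, inner_smul_left]; ring

lemma ell_shear {n : ℕ} (a : Euc n) (t : Fin n) (c : Fin n → ℝ) (ω : Frame n) (s : Fin n)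
    (x : Euc n) : ell (shear a t c ω) s x = ell ω s x + c s * (ell ω t x - ell ω t a) := by
  simp [ell, shear, inner_add_left, inner_smul_left]
  ring

lemma frame_isAddHaar (n : ℕ) : (volume : Measure (Frame n)).IsAddHaarMeasure := by
  have : (volume : Measure (Euc n × ℝ)).IsAddHaarMeasure :=
    inferInstanceAs ((volume : Measure (Euc n)).prod (volume : Measure ℝ)).IsAddHaarMeasure
  exact Measure.pi.isAddHaarMeasure (fun _ : Fin n => (volume : Measure (Euc n × ℝ)))

lemma shear_null {n : ℕ} (a : Euc n) (t : Fin n) (c : Fin n → ℝ) (hc : c t = 0)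
    (N : Set (Frame n)) (hN : volume (shear a t c ⁻¹' N) = 0) : volume N = 0 := by
  have hsurj : Function.Surjective (shear a t c) := by
    intro ω
    refine ⟨shear a t (-c) ω, ?_⟩
    have h1 : (shear a t (-c) ω) t = ω t := by simp [shear, hc]
    have h2 : ell (shear a t (-c) ω) t a = ell ω t a := by rw [ell_shear]; simp
    funext s
    change (shear a t (-c) ω) s + c s • ((shear a t (-c) ω) t - (0, ell (shear a t (-c) ω) t a)) = ω s
    rw [h1, h2]
    simp [shear]
  have := frame_isAddHaar n
  rw [← image_preimage_eq N hsurj, Measure.addHaar_image_linearMap, hN, mul_zero]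

lemma extend_continuous {n d : ℕ} (I : Fin d → Fin n) (hI : Function.Injective I) (s : Fin n) :
    Continuous fun τ : Fin d → ℝ => Function.extend I τ 0 s := by
  by_cases hs : ∃ i, I i = s
  · obtain ⟨i, rfl⟩ := hs
    simp only [hI.extend_apply]
    fun_prop
  · simp only [Function.extend_apply' _ _ _ hs]
    exact continuous_const

/-- For a fixed frame, almost every shear makes the base point `a` tame. -/
lemma tame_shear {n d : ℕ} (I : Fin d → Fin n) (hI : Function.Injective I) (j t : Fin n)
    (hj : j ∉ range I) (ht : t ∉ range I) (K : Set (Euc n)) (hK : IsCompact K)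
    (μ : Measure (Euc n)) (hμ : μ Kᶜ = 0) (p : ℕ) (ω : Frame n) (a : Euc n)
    (hja : ell ω j a ≠ 0) :
    ∀ᵐ τ : Fin d → ℝ, Tame I j t K μ p (shear a t (Function.extend I τ 0) ω) a := by
  set ω' : (Fin d → ℝ) → Frame n := fun τ => shear a t (Function.extend I τ 0) ω with hω'
  have hcj : ∀ τ : Fin d → ℝ, Function.extend I τ (0 : Fin n → ℝ) j = 0 := fun τ =>
    Function.extend_apply' _ _ _ hj
  have hct : ∀ τ : Fin d → ℝ, Function.extend I τ (0 : Fin n → ℝ) t = 0 := fun τ =>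
    Function.extend_apply' _ _ _ ht
  have hej : ∀ τ x, ell (ω' τ) j x = ell ω j x := fun τ x => by simp [hω', ell_shear, hcj]
  have het : ∀ τ x, ell (ω' τ) t x = ell ω t x := fun τ x => by simp [hω', ell_shear, hct]
  -- the value of the shear parameter that puts `x` in the fibre through `a`
  set Θ : Euc n → Fin d → ℝ := fun x i =>
    -(tilt I j ω a x i) / (ell ω j a * (ell ω t x - ell ω t a)) with hΘ
  have htilt : ∀ τ x, ell ω t x ≠ ell ω t a → tilt I j (ω' τ) a x =
      (ell ω j a * (ell ω t x - ell ω t a)) • (τ - Θ x) := by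
    intro τ x hx
    funext i
    have hne := sub_ne_zero.2 hx
    simp only [tilt, hej, hω', ell_shear, hI.extend_apply, hΘ, Pi.smul_apply, Pi.sub_apply,
      smul_eq_mul, hcj]
    field_simp
    ring
  have hcone : ∀ τ σ r, pcone I j t (ω' τ) a σ r =
      Θ ⁻¹' closedBall τ σ ∩ {x | ell ω t x ≠ ell ω t a ∧ dist x a ≤ r} := by
    intro τ σ r
    ext x
    simp only [pcone, mem_ofPred_eq, mem_inter_iff, mem_preimage, het, hej]
    have : ∀ _ : ell ω t x ≠ ell ω t a, (‖tilt I j (ω' τ) a x‖ ≤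
        σ * (|ell ω j a| * |ell ω t x - ell ω t a|) ↔ Θ x ∈ closedBall τ σ) := by
      intro hx
      have hpos : 0 < |ell ω j a| * |ell ω t x - ell ω t a| :=
        mul_pos (abs_pos.2 hja) (abs_pos.2 (sub_ne_zero.2 hx))
      rw [htilt τ x hx, norm_smul, Real.norm_eq_abs, abs_mul, mem_closedBall, dist_comm,
        dist_eq_norm, mul_comm σ, mul_le_mul_iff_right₀ hpos]
    constructor
    · rintro ⟨h1, h2, h3⟩
      exact ⟨(this h1).1 h2, h1, h3⟩
    · rintro ⟨h1, h2, h3⟩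
      exact ⟨h2, (this h2).2 h1, h3⟩
  set S : ℕ → Set (Euc n) := fun q =>
    {x | ell ω t x ≠ ell ω t a ∧ dist x a ≤ (1 / 2) ^ (p + q)} with hS
  set Ψ : OuterMeasure (Fin d → ℝ) := ⨆ q : ℕ, (2 ^ ((p + q) * d) : ℝ≥0∞) •
    OuterMeasure.map Θ (OuterMeasure.restrict (S q) μ.toOuterMeasure) with hΨ
  have hΨa : ∀ s, Ψ s = ⨆ q : ℕ, μ (Θ ⁻¹' s ∩ S q) * 2 ^ ((p + q) * d) := by
    intro s
    rw [hΨ, OuterMeasure.iSup_apply]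
    refine iSup_congr fun q => ?_
    rw [OuterMeasure.smul_apply, OuterMeasure.map_apply, OuterMeasure.restrict_apply,
      smul_eq_mul, mul_comm]
    rfl
  have hdens : ∀ τ k, coneDens I j t μ p (ω' τ) a k =
      Ψ (closedBall τ ((1 / 2) ^ k)) * 2 ^ (k * d) := by
    intro τ k
    rw [hΨa, coneDens]
    simp only [hcone, hS]
  set N : Set (Fin d → ℝ) := (Θ '' (K ∩ S 0))ᶜ with hN
  have hNm : MeasurableSet N := by
    refine MeasurableSet.compl ?_
    have : K ∩ S 0 = ⋃ m : ℕ, K ∩ ({x | 1 / ((m : ℝ) + 1) ≤ |ell ω t x - ell ω t a|} ∩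
        closedBall a ((1 / 2) ^ (p + 0))) := by
      ext x
      simp only [hS, mem_inter_iff, mem_ofPred_eq, mem_iUnion, mem_closedBall]
      constructor
      · rintro ⟨h0, h1, h2⟩
        obtain ⟨m, hm⟩ := exists_nat_one_div_lt (abs_pos.2 (sub_ne_zero.2 h1))
        exact ⟨m, h0, hm.le, h2⟩
      · rintro ⟨m, h0, h1, h2⟩
        have : 0 < 1 / ((m : ℝ) + 1) := by positivity
        exact ⟨h0, sub_ne_zero.1 (abs_pos.1 (this.trans_le h1)), h2⟩
    rw [this, image_iUnion]
    refine MeasurableSet.iUnion fun m => IsCompact.measurableSet ?_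
    refine IsCompact.image_of_continuousOn (hK.inter_right (IsClosed.inter ?_
      isClosed_closedBall)) ?_
    · apply isClosed_le <;> fun_prop
    · refine continuousOn_pi.2 fun i => ContinuousOn.div ?_ ?_ ?_
      · have : Continuous fun x => tilt I j ω a x := by fun_prop
        exact (((continuous_apply i).comp this).neg).continuousOn
      · exact Continuous.continuousOn (by fun_prop)
      · rintro x ⟨-, hx, -⟩
        have : 0 < 1 / ((m : ℝ) + 1) := by positivity
        exact mul_ne_zero hja (abs_pos.1 (this.trans_le hx))
  have hΨN : Ψ N = 0 := by
    rw [hΨa]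
    refine le_antisymm (iSup_le fun q => ?_) zero_le
    have : μ (Θ ⁻¹' N ∩ S q) = 0 := by
      refine measure_mono_null (fun x hx hxK => hx.1 ⟨x, ⟨hxK, hx.2.1, hx.2.2.trans ?_⟩, rfl⟩) hμ
      exact pow_le_pow_of_le_one (by norm_num) (by norm_num) (by omega)
    rw [this, zero_mul]
  filter_upwards [tri Ψ N hNm hΨN] with τ hτ
  by_cases hτN : τ ∈ N
  · rcases hτ hτN with h | h
    · left
      exact h.congr fun k => (hdens τ k).symm
    · right; left
      intro C
      refine (h C).mono fun k hk => ?_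
      rw [hdens]; exact hk
  · right; right
    simp only [hN, mem_compl_iff, not_not] at hτN
    obtain ⟨x, ⟨hxK, hx1, hx2⟩, rfl⟩ := hτN
    refine ⟨x, hxK, ?_, ?_, by simpa using hx2⟩
    · change ell (ω' (Θ x)) t x ≠ ell (ω' (Θ x)) t a
      rwa [het, het]
    · change tilt I j (ω' (Θ x)) a x = 0
      rw [htilt _ _ hx1, sub_self, smul_zero]

/-- For almost every frame, almost every point is tame. -/
lemma tame_ae {n d : ℕ} (I : Fin d → Fin n) (hI : Function.Injective I) (j t : Fin n)
    (hj : j ∉ range I) (ht : t ∉ range I) (K : Set (Euc n)) (hK : IsCompact K)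
    (μ : Measure (Euc n)) [IsFiniteMeasure μ] (hμ : μ Kᶜ = 0) (p : ℕ) :
    ∀ᵐ ω : Frame n, ∀ᵐ a ∂μ, ell ω j a ≠ 0 → Tame I j t K μ p ω a := by
  rw [Measure.ae_ae_comm (tame_measurable I j t K hK μ p)]
  refine Eventually.of_forall fun a => ?_
  set N : Set (Frame n) := {ω | ¬ (ell ω j a ≠ 0 → Tame I j t K μ p ω a)} with hN
  change volume N = 0
  have hNm : MeasurableSet {ω | ell ω j a ≠ 0 → Tame I j t K μ p ω a} :=
    measurable_prodMk_right (tame_measurable I j t K hK μ p)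
  have hsh : Continuous fun z : Frame n × (Fin d → ℝ) =>
      shear a t (Function.extend I z.2 0) z.1 := by
    refine continuous_pi fun s => ?_
    have h1 := (extend_continuous I hI s).comp (continuous_snd (X := Frame n))
    change Continuous fun z : Frame n × (Fin d → ℝ) =>
      z.1 s + (Function.extend I z.2 0 s) • (z.1 t - (0, ell z.1 t a))
    have h2 : Continuous fun z : Frame n × (Fin d → ℝ) => Function.extend I z.2 0 s := h1
    fun_prop
  have hae : ∀ᵐ ω : Frame n, ∀ᵐ τ : Fin d → ℝ,
      ell (shear a t (Function.extend I τ 0) ω) j a ≠ 0 →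
        Tame I j t K μ p (shear a t (Function.extend I τ 0) ω) a := by
    refine Eventually.of_forall fun ω => ?_
    by_cases hja : ell ω j a = 0
    · refine Eventually.of_forall fun τ h => absurd ?_ h
      rw [ell_shear, hja]; simp
    · filter_upwards [tame_shear I hI j t hj ht K hK μ hμ p ω a hja] with τ hτ _ using hτ
  have hm2 : MeasurableSet {z : Frame n × (Fin d → ℝ) |
      ell (shear a t (Function.extend I z.2 0) z.1) j a ≠ 0 →
        Tame I j t K μ p (shear a t (Function.extend I z.2 0) z.1) a} := hsh.measurable hNm
  rw [Measure.ae_ae_comm hm2] at hae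
  obtain ⟨τ, hτ⟩ := hae.exists
  exact shear_null a t (Function.extend I τ 0) (Function.extend_apply' _ _ _ ht) N hτ

/-! ### Infinite fibres and infinite densities occur over null sets only -/

lemma volume_image_le {X : Type*} [MetricSpace X] [MeasurableSpace X] [BorelSpace X] {d : ℕ}
    (Q : X → (Fin d → ℝ)) (S : Set X) (L : ℝ≥0)
    (hQ : ∀ x ∈ S, ∀ y ∈ S, dist (Q x) (Q y) ≤ L * dist x y) :
    volume (Q '' S) ≤ (L : ℝ≥0∞) ^ d * μH[(d : ℝ)] S := by
  have h := (LipschitzOnWith.of_dist_le_mul hQ).hausdorffMeasure_image_le (Nat.cast_nonneg d)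
  rw [ENNReal.rpow_natCast] at h
  have h2 : (μH[(d : ℝ)] : Measure (Fin d → ℝ)) = volume := by
    have := hausdorffMeasure_pi_real (ι := Fin d)
    rwa [Fintype.card_fin] at this
  rwa [h2] at h

lemma exists_partition {X : Type*} [MetricSpace X] [SecondCountableTopology X] [MeasurableSpace X]
    [BorelSpace X] [Nonempty X] (δ : ℝ) (hδ : 0 < δ) :
    ∃ t : ℕ → Set X, (∀ m, MeasurableSet (t m)) ∧ Pairwise (Function.onFun Disjoint t) ∧
      (⋃ m, t m) = univ ∧ ∀ m, ∀ x ∈ t m, ∀ y ∈ t m, dist x y < δ := by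
  set b : ℕ → Set X := fun m => ball (TopologicalSpace.denseSeq X m) (δ / 2) with hb
  refine ⟨disjointed b, fun m => MeasurableSet.disjointed (fun i => measurableSet_ball) m,
    disjoint_disjointed b, ?_, ?_⟩
  · rw [iUnion_disjointed, eq_univ_iff_forall]
    intro x
    obtain ⟨m, hm⟩ := (TopologicalSpace.denseRange_denseSeq X).exists_dist_lt x (half_pos hδ)
    exact mem_iUnion.2 ⟨m, hm⟩
  · intro m x hx y hy
    have h1 := mem_ball.1 (disjointed_subset b m hx)
    have h2 := mem_ball.1 (disjointed_subset b m hy)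
    have := dist_triangle_right x y (TopologicalSpace.denseSeq X m)
    linarith

/-- A Lipschitz map from a set of finite `d`-dimensional measure to `ℝ ^ d` has finite fibres over
almost every point. -/
lemma infinite_fibre_null {X : Type*} [MetricSpace X] [SecondCountableTopology X]
    [MeasurableSpace X] [BorelSpace X] {d : ℕ}
    (Q : X → (Fin d → ℝ)) (S : Set X) (L : ℝ≥0)
    (hQ : ∀ x ∈ S, ∀ y ∈ S, dist (Q x) (Q y) ≤ L * dist x y)
    (hfin : μH[(d : ℝ)] S ≠ ⊤) :
    volume {y | (S ∩ Q ⁻¹' {y}).Infinite} = 0 := by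
  rcases isEmpty_or_nonempty X with hX | hX
  · have : {y | (S ∩ Q ⁻¹' {y}).Infinite} = ∅ := by
      ext y
      simp only [mem_ofPred_eq, mem_empty_iff_false, iff_false, not_infinite]
      exact toFinite _
    rw [this, measure_empty]
  choose t htm htd htu htδ using fun k : ℕ => exists_partition (X := X) ((1 / 2 : ℝ) ^ k)
    (by positivity)
  set W : ℕ → ℕ → Set (Fin d → ℝ) := fun k m => toMeasurable volume (Q '' (S ∩ t k m)) with hW
  have hWm : ∀ k m, MeasurableSet (W k m) := fun k m => measurableSet_toMeasurable _ _
  set f : ℕ → (Fin d → ℝ) → ℝ≥0∞ := fun k y => ∑' m, (W k m).indicator 1 y with hf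
  have hfm : ∀ k, Measurable (f k) := fun k =>
    Measurable.tsum fun m => measurable_one.indicator (hWm k m)
  have hbound_k : ∀ k, ∫⁻ y, f k y ≤ (L : ℝ≥0∞) ^ d * μH[(d : ℝ)] S := by
    intro k
    calc ∫⁻ y, f k y = ∑' m, volume (W k m) := by
          rw [hf, lintegral_tsum fun m => (measurable_one.indicator (hWm k m)).aemeasurable]
          refine tsum_congr fun m => ?_
          rw [lintegral_indicator_one (hWm k m)]
      _ ≤ ∑' m, (L : ℝ≥0∞) ^ d * (μH[(d : ℝ)]).restrict S (t k m) := by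
          refine ENNReal.tsum_le_tsum fun m => ?_
          rw [hW, measure_toMeasurable, Measure.restrict_apply (htm k m), inter_comm]
          exact volume_image_le Q _ L fun x hx y hy => hQ x hx.2 y hy.2
      _ = (L : ℝ≥0∞) ^ d * μH[(d : ℝ)] S := by
          rw [ENNReal.tsum_mul_left, ← measure_iUnion (htd k) (htm k), htu, Measure.restrict_apply_univ]
  have hlim : ∫⁻ y, liminf (fun k => f k y) atTop ≠ ⊤ := by
    have hb : (L : ℝ≥0∞) ^ d * μH[(d : ℝ)] S ≠ ⊤ := ENNReal.mul_ne_top (by simp) hfin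
    refine ne_top_of_le_ne_top hb ((lintegral_liminf_le hfm).trans ?_)
    refine (liminf_le_limsup).trans (limsup_le_of_le (by isBoundedDefault) ?_)
    exact Eventually.of_forall hbound_k
  have hae := ae_lt_top (Measurable.liminf hfm) hlim
  rw [← compl_mem_ae_iff]
  filter_upwards [hae] with y hy hinf
  refine absurd hy (not_lt.2 (top_le_iff.2 ?_))
  refine ENNReal.eq_top_of_forall_nnreal_le fun r => ?_
  obtain ⟨N, hN⟩ := exists_nat_ge r
  refine (show (r : ℝ≥0∞) ≤ N by exact_mod_cast hN).trans ?_
  obtain ⟨s, hsub, hcard⟩ := hinf.exists_subset_card_eq N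
  -- at scales below the mutual distances, the chosen points lie in distinct cells
  obtain ⟨δ, hδ, hsep⟩ : ∃ δ > 0, ∀ x ∈ s, ∀ y ∈ s, x ≠ y → δ ≤ dist x y := by
    rcases s.offDiag.eq_empty_or_nonempty with he | hne
    · refine ⟨1, one_pos, fun x hx y hy hxy => ?_⟩
      have : (x, y) ∈ s.offDiag := Finset.mem_offDiag.2 ⟨hx, hy, hxy⟩
      simp [he] at this
    · obtain ⟨p, hp, hmin⟩ := s.offDiag.exists_min_image (fun p => dist p.1 p.2) hne
      refine ⟨dist p.1 p.2, dist_pos.2 (Finset.mem_offDiag.1 hp).2.2, fun x hx y hy hxy => ?_⟩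
      exact hmin (x, y) (Finset.mem_offDiag.2 ⟨hx, hy, hxy⟩)
  obtain ⟨k0, hk0⟩ := exists_pow_lt_of_lt_one hδ (by norm_num : (1 / 2 : ℝ) < 1)
  refine le_liminf_of_le (by isBoundedDefault) ?_
  filter_upwards [eventually_ge_atTop k0] with k hk
  have hcell : ∀ x, ∃ m, x ∈ t k m := fun x => mem_iUnion.1 (by rw [htu k]; trivial)
  choose c hc using hcell
  have hinj : Set.InjOn c s := by
    intro x hx z hz hxz
    by_contra hne
    have h1 := hsep x hx z hz hne
    have h2 := htδ k (c x) x (hc x) z (by rw [hxz]; exact hc z)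
    have h3 : (1 / 2 : ℝ) ^ k ≤ (1 / 2) ^ k0 :=
      pow_le_pow_of_le_one (by norm_num) (by norm_num) hk
    linarith
  calc (N : ℝ≥0∞) = ∑ m ∈ s.image c, 1 := by
        rw [Finset.sum_const, Finset.card_image_of_injOn hinj, hcard]; simp
    _ = ∑ m ∈ s.image c, (W k m).indicator 1 y := by
        refine Finset.sum_congr rfl fun m hm => ?_
        obtain ⟨x, hx, rfl⟩ := Finset.mem_image.1 hm
        rw [indicator_of_mem, Pi.one_apply]
        refine subset_toMeasurable _ _ ⟨x, ⟨(hsub hx).1, hc x⟩, (hsub hx).2⟩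
    _ ≤ f k y := ENNReal.sum_le_tsum _

/-- The set of points where a finite measure has infinite upper density is Lebesgue null. -/
lemma infinite_density_null {d : ℕ} (ν : Measure (Fin d → ℝ)) [IsFiniteMeasure ν] :
    ∀ᵐ y : Fin d → ℝ, ∃ C : ℕ, ∃ δ > 0, ∀ r, 0 < r → r < δ →
      ν (closedBall y r) ≤ C * ENNReal.ofReal (r ^ d) := by
  have hlt : ∀ᵐ y, ν.rnDeriv volume y < ⊤ := Measure.rnDeriv_lt_top ν volume
  filter_upwards [Besicovitch.ae_tendsto_rnDeriv ν (volume : Measure (Fin d → ℝ)), hlt] with y hy hy2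
  obtain ⟨C, hC⟩ := ENNReal.exists_nat_gt hy2.ne
  have hev := hy.eventually (gt_mem_nhds hC)
  obtain ⟨δ, hδ, hsub⟩ := mem_nhdsGT_iff_exists_Ioo_subset.1 hev
  refine ⟨C * 2 ^ d, δ, hδ, fun r hr hrδ => ?_⟩
  have h1 : ν (closedBall y r) / volume (closedBall y r) < C := hsub ⟨hr, hrδ⟩
  rw [Real.volume_pi_closedBall _ hr.le, Fintype.card_fin] at h1
  have h2 : ENNReal.ofReal ((2 * r) ^ d) ≠ 0 := (ENNReal.ofReal_pos.2 (by positivity)).ne'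
  have h3 := (ENNReal.div_le_iff h2 ENNReal.ofReal_ne_top).1 h1.le
  refine h3.trans (le_of_eq ?_)
  rw [mul_pow, ENNReal.ofReal_mul (by positivity), ENNReal.ofReal_pow (by norm_num)]
  push_cast
  rw [← mul_assoc]
  simp

/-! ### The projective map of a good frame sends a purely unrectifiable set to a null set -/

/-- The projective map `Π = (ℓ_{I i} / ℓ_j)_i`. -/
def proj {n d : ℕ} (I : Fin d → Fin n) (j : Fin n) (ω : Frame n) (x : Euc n) : Fin d → ℝ :=
  fun i => ell ω (I i) x / ell ω j x

/-- The part of `K` at which the denominator `ℓ_j` of `Π` is at least `ε` in absolute value. -/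
def slab {n : ℕ} (K : Set (Euc n)) (j : Fin n) (ω : Frame n) (ε : ℝ) : Set (Euc n) :=
  {x ∈ K | ε ≤ |ell ω j x|}

/-- The linear parts of the frame control the norm, with constant `c`. -/
def NonDeg {n : ℕ} (ω : Frame n) (c : ℝ) : Prop := ∀ w : Euc n, ∃ s, c * ‖w‖ ≤ |⟪(ω s).1, w⟫_ℝ|

lemma ell_sub {n : ℕ} (ω : Frame n) (s : Fin n) (x y : Euc n) :
    ell ω s x - ell ω s y = ⟪(ω s).1, x - y⟫_ℝ := by
  simp [ell, inner_sub_right]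

lemma ell_lip {n : ℕ} {ω : Frame n} {V : ℝ} (hV : ∀ s, ‖(ω s).1‖ ≤ V) (s : Fin n) (x y : Euc n) :
    |ell ω s x - ell ω s y| ≤ V * dist x y := by
  rw [ell_sub, dist_eq_norm]
  exact (abs_real_inner_le_norm _ _).trans (by gcongr; exact hV s)

lemma tilt_eq {n d : ℕ} (I : Fin d → Fin n) (j : Fin n) (ω : Frame n) (a x : Euc n)
    (ha : ell ω j a ≠ 0) (hx : ell ω j x ≠ 0) :
    tilt I j ω a x = (ell ω j a * ell ω j x) • (proj I j ω x - proj I j ω a) := by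
  funext i
  simp only [tilt, proj, Pi.smul_apply, Pi.sub_apply, smul_eq_mul]
  field_simp
  ring

lemma norm_tilt {n d : ℕ} (I : Fin d → Fin n) (j : Fin n) (ω : Frame n) (a x : Euc n)
    (ha : ell ω j a ≠ 0) (hx : ell ω j x ≠ 0) :
    ‖tilt I j ω a x‖ = |ell ω j a| * |ell ω j x| * dist (proj I j ω x) (proj I j ω a) := by
  rw [tilt_eq I j ω a x ha hx, norm_smul, Real.norm_eq_abs, abs_mul, dist_eq_norm]

lemma ne_zero_of_slab {n : ℕ} {K : Set (Euc n)} {j : Fin n} {ω : Frame n} {ε : ℝ} (hε : 0 < ε)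
    {x : Euc n} (hx : x ∈ slab K j ω ε) : ell ω j x ≠ 0 := abs_pos.1 (hε.trans_le hx.2)

lemma norm_tilt_le {n d : ℕ} (I : Fin d → Fin n) (j : Fin n) (ω : Frame n) (a x : Euc n) {V M : ℝ}
    (hV0 : 0 ≤ V) (hV : ∀ s, ‖(ω s).1‖ ≤ V) (hM0 : 0 ≤ M) (hM : ∀ s, |ell ω s a| ≤ M) :
    ‖tilt I j ω a x‖ ≤ 2 * M * V * dist x a := by
  refine (pi_norm_le_iff_of_nonneg (by positivity)).2 fun i => ?_
  rw [Real.norm_eq_abs]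
  calc |tilt I j ω a x i| ≤ |ell ω j a| * |ell ω (I i) x - ell ω (I i) a| +
        |ell ω (I i) a| * |ell ω j x - ell ω j a| := by
        rw [← abs_mul, ← abs_mul]; exact abs_sub _ _
    _ ≤ M * (V * dist x a) + M * (V * dist x a) := by
        gcongr
        · exact hM j
        · exact ell_lip hV _ _ _
        · exact hM _
        · exact ell_lip hV _ _ _
    _ = _ := by ring

lemma proj_lip {n d : ℕ} (I : Fin d → Fin n) (j : Fin n) (ω : Frame n) (K : Set (Euc n)) {V M ε : ℝ}
    (hV0 : 0 ≤ V) (hV : ∀ s, ‖(ω s).1‖ ≤ V) (hM0 : 0 ≤ M) (hM : ∀ s, ∀ x ∈ K, |ell ω s x| ≤ M)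
    (hε : 0 < ε) : ∀ x ∈ slab K j ω ε, ∀ y ∈ slab K j ω ε,
      dist (proj I j ω x) (proj I j ω y) ≤ 2 * M * V / ε ^ 2 * dist x y := by
  intro x hx y hy
  have h1 := norm_tilt I j ω y x (ne_zero_of_slab hε hy) (ne_zero_of_slab hε hx)
  have h2 := norm_tilt_le I j ω y x hV0 hV hM0 (fun s => hM s y hy.1)
  have h3 : ε ^ 2 ≤ |ell ω j y| * |ell ω j x| := by
    rw [sq]; exact mul_le_mul hy.2 hx.2 hε.le (abs_nonneg _)
  rw [div_mul_eq_mul_div, le_div_iff₀ (by positivity)]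
  calc dist (proj I j ω x) (proj I j ω y) * ε ^ 2
      ≤ dist (proj I j ω x) (proj I j ω y) * (|ell ω j y| * |ell ω j x|) := by gcongr
    _ = ‖tilt I j ω y x‖ := by rw [h1]; ring
    _ ≤ _ := h2

lemma NonDeg.surj {n : ℕ} {ω : Frame n} {c : ℝ} (hc : 0 < c) (h : NonDeg ω c) (u : Fin n → ℝ) :
    ∃ w : Euc n, ∀ s, ⟪(ω s).1, w⟫_ℝ = u s := by
  set A : Euc n →ₗ[ℝ] (Fin n → ℝ) := LinearMap.pi fun s => (innerSL ℝ (ω s).1).toLinearMap with hA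
  have hinj : Function.Injective A := by
    refine (injective_iff_map_eq_zero A).2 fun w hw => ?_
    obtain ⟨s, hs⟩ := h w
    have : ⟪(ω s).1, w⟫_ℝ = 0 := congrFun hw s
    rw [this, abs_zero] at hs
    by_contra hne
    have := mul_pos hc (norm_pos_iff.2 hne)
    linarith
  have hsurj : Function.Surjective A :=
    (LinearMap.injective_iff_surjective_of_finrank_eq_finrank (by simp)).1 hinj
  obtain ⟨w, hw⟩ := hsurj u
  exact ⟨w, fun s => congrFun hw s⟩

/-- A part of `K` on which `Π` is bi-Lipschitz is, locally, a Lipschitz graph. -/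
lemma proj_graph_null {n d : ℕ} (I : Fin d → Fin n) (hI : Function.Injective I) (j : Fin n)
    (hj : j ∉ range I) (ω : Frame n) (K : Set (Euc n)) {c ε s : ℝ} (hc : 0 < c)
    (hnd : NonDeg ω c) (hε : 0 < ε) (hs : 0 < s)
    (hgr : ∀ P, GraphPiece n d P → P ⊆ K → μH[(d : ℝ)] P = 0)
    (P : Set (Euc n)) (hPK : P ⊆ slab K j ω ε)
    (hP : ∀ x ∈ P, ∀ y ∈ P, s * dist x y ≤ dist (proj I j ω x) (proj I j ω y)) :
    μH[(d : ℝ)] P = 0 := by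
  obtain ⟨V, hV1, hV⟩ : ∃ V : ℝ, 1 ≤ V ∧ ∀ s, ‖(ω s).1‖ ≤ V := by
    obtain ⟨V, hV⟩ := (finite_range fun s => ‖(ω s).1‖).bddAbove
    exact ⟨max V 1, le_max_right _ _, fun s => (hV ⟨s, rfl⟩).trans (le_max_left _ _)⟩
  have hV0 : 0 < V := by linarith
  set δ := ε ^ 2 * s / (4 * V ^ 2) with hδ
  have hδ0 : 0 < δ := by positivity
  refine measure_null_of_locally_null P fun a0 ha0 => ⟨P ∩ ball a0 δ,
    inter_mem_nhdsWithin _ (ball_mem_nhds _ hδ0), ?_⟩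
  refine hgr _ ?_ fun x hx => (hPK hx.1).1
  set u : Fin d → Euc n := fun i => ell ω j a0 • (ω (I i)).1 - ell ω (I i) a0 • (ω j).1 with hu
  set π : Euc n →L[ℝ] Euc d := ((EuclideanSpace.equiv (Fin d) ℝ).symm : _ →L[ℝ] _) ∘L
    ContinuousLinearMap.pi fun i => innerSL ℝ (u i) with hπ
  have hπi : ∀ w i, π w i = ell ω j a0 * ⟪(ω (I i)).1, w⟫_ℝ - ell ω (I i) a0 * ⟪(ω j).1, w⟫_ℝ := by
    intro w i
    change ⟪u i, w⟫_ℝ = _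
    simp [hu, inner_sub_left, inner_smul_left]
  have hj0 := ne_zero_of_slab hε (hPK ha0)
  refine ⟨π, ?_, ε ^ 2 * s / 2, by positivity, ?_⟩
  · intro z
    obtain ⟨w, hw⟩ := hnd.surj hc (Function.extend I (fun i => z i / ell ω j a0) 0)
    refine ⟨w, ?_⟩
    ext i
    rw [hπi, hw, hw, hI.extend_apply, Function.extend_apply' _ _ _ hj]
    simp; field_simp
  · intro x hx y hy
    have hxs := hPK hx.1
    have hys := hPK hy.1
    have h1 := norm_tilt I j ω y x (ne_zero_of_slab hε hys) (ne_zero_of_slab hε hxs)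
    have h3 : ε ^ 2 ≤ |ell ω j y| * |ell ω j x| := by
      rw [sq]; exact mul_le_mul hys.2 hxs.2 hε.le (abs_nonneg _)
    have h4 := hP x hx.1 y hy.1
    have hyd : dist y a0 ≤ δ := (mem_ball.1 hy.2).le
    have h5 : ‖tilt I j ω y x‖ ≤ ‖π (x - y)‖ + 2 * V ^ 2 * δ * dist x y := by
      refine (pi_norm_le_iff_of_nonneg (by positivity)).2 fun i => ?_
      have hcoord : |π (x - y) i| ≤ ‖π (x - y)‖ := PiLp.norm_apply_le (π (x - y)) i
      have e1 : tilt I j ω y x i = π (x - y) i +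
          ((ell ω j y - ell ω j a0) * ⟪(ω (I i)).1, x - y⟫_ℝ -
            (ell ω (I i) y - ell ω (I i) a0) * ⟪(ω j).1, x - y⟫_ℝ) := by
        rw [hπi, tilt, ell_sub ω (I i) x y, ell_sub ω j x y]; ring
      have hin : ∀ s, |⟪(ω s).1, x - y⟫_ℝ| ≤ V * dist x y := fun s => by
        rw [← ell_sub]; exact ell_lip hV _ _ _
      have hdl : ∀ s, |ell ω s y - ell ω s a0| ≤ V * δ := fun s =>
        (ell_lip hV s y a0).trans (by gcongr)
      rw [e1, Real.norm_eq_abs]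
      calc _ ≤ |π (x - y) i| + (|ell ω j y - ell ω j a0| * |⟪(ω (I i)).1, x - y⟫_ℝ| +
            |ell ω (I i) y - ell ω (I i) a0| * |⟪(ω j).1, x - y⟫_ℝ|) := by
            rw [← abs_mul, ← abs_mul]
            exact (abs_add_le _ _).trans (by gcongr; exact abs_sub _ _)
        _ ≤ ‖π (x - y)‖ + (V * δ * (V * dist x y) + V * δ * (V * dist x y)) := by
            gcongr
            · exact hdl _
            · exact hin _
            · exact hdl _
            · exact hin _
        _ = _ := by ring
    have h6 : 2 * V ^ 2 * δ = ε ^ 2 * s / 2 := by rw [hδ]; field_simp; ring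
    rw [h6] at h5
    have h7 : ε ^ 2 * (s * dist x y) ≤ ‖tilt I j ω y x‖ := by
      rw [h1]
      exact mul_le_mul h3 h4 (by positivity) (by positivity)
    rw [← dist_eq_norm]
    linarith

/-- Near the fibre direction of `Π`, some `ℓ_t` with `t ∉ range I` controls the displacement. -/
lemma cone_incl {n d : ℕ} (I : Fin d → Fin n) (j : Fin n) (hj : j ∉ range I) (ω : Frame n)
    (K : Set (Euc n)) {M ε c c' σ : ℝ} (hM1 : 1 ≤ M) (hM : ∀ s, ∀ x ∈ K, |ell ω s x| ≤ M)
    (hε : 0 < ε) (hnd : NonDeg ω c) (hc' : 0 < c') (hcc : c' ≤ c)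
    (hcM : c' * 2 * M ≤ ε * c) (hσ : 0 < σ) (hσ1 : σ ≤ 1) (a x : Euc n) (ha : a ∈ slab K j ω ε)
    (hx : x ∈ slab K j ω ε) (hxa : x ≠ a)
    (h : dist (proj I j ω x) (proj I j ω a) ≤ σ * c' / M * dist x a) :
    ∃ t, t ∉ range I ∧ ell ω t x ≠ ell ω t a ∧
      ‖tilt I j ω a x‖ ≤ σ * (|ell ω j a| * |ell ω t x - ell ω t a|) := by
  have hM0 : 0 < M := by linarith
  have hd : 0 < dist x a := dist_pos.2 hxa
  have htl := norm_tilt I j ω a x (ne_zero_of_slab hε ha) (ne_zero_of_slab hε hx)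
  have htl2 : ‖tilt I j ω a x‖ ≤ σ * (|ell ω j a| * (c' * dist x a)) := by
    rw [htl]
    calc |ell ω j a| * |ell ω j x| * dist (proj I j ω x) (proj I j ω a)
        ≤ |ell ω j a| * M * (σ * c' / M * dist x a) := by
          gcongr; exact hM j x hx.1
      _ = _ := by field_simp
  have hmain : ∃ t, t ∉ range I ∧ c' * dist x a ≤ |ell ω t x - ell ω t a| := by
    obtain ⟨s, hs⟩ := hnd (x - a)
    rw [← ell_sub, ← dist_eq_norm] at hs
    by_cases hsI : s ∈ range I
    · obtain ⟨i, rfl⟩ := hsI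
      refine ⟨j, hj, ?_⟩
      have h1 : |tilt I j ω a x i| ≤ ‖tilt I j ω a x‖ := norm_le_pi_norm (tilt I j ω a x) i
      have h2 : |ell ω j a| * |ell ω (I i) x - ell ω (I i) a| ≤ |tilt I j ω a x i| +
          |ell ω (I i) a| * |ell ω j x - ell ω j a| := by
        rw [← abs_mul, ← abs_mul]
        have : ell ω j a * (ell ω (I i) x - ell ω (I i) a) = tilt I j ω a x i +
          ell ω (I i) a * (ell ω j x - ell ω j a) := by simp only [tilt]; ring
        rw [this]; exact abs_add_le _ _
      have h3 : |ell ω (I i) a| * |ell ω j x - ell ω j a| ≤ M * |ell ω j x - ell ω j a| := by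
        gcongr; exact hM _ a ha.1
      have h4 : ε * (c * dist x a) ≤ |ell ω j a| * |ell ω (I i) x - ell ω (I i) a| := by
        refine mul_le_mul ha.2 hs ?_ (abs_nonneg _)
        have : 0 < c := hc'.trans_le hcc
        positivity
      have h5 : ‖tilt I j ω a x‖ ≤ M * (c' * dist x a) := by
        refine htl2.trans ?_
        calc σ * (|ell ω j a| * (c' * dist x a)) ≤ 1 * (M * (c' * dist x a)) := by
              gcongr; exact hM j a ha.1
          _ = _ := one_mul _
      have h6 : c' * 2 * M * dist x a ≤ ε * c * dist x a := by gcongr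
      have h7 : M * (c' * dist x a) ≤ M * |ell ω j x - ell ω j a| := by linarith
      exact le_of_mul_le_mul_left h7 hM0
    · exact ⟨s, hsI, (by gcongr : c' * dist x a ≤ c * dist x a).trans hs⟩
  obtain ⟨t, ht, hle⟩ := hmain
  refine ⟨t, ht, ?_, htl2.trans (by gcongr)⟩
  exact sub_ne_zero.1 (abs_pos.1 ((mul_pos hc' hd).trans_le hle))

lemma half_pow_enn (k d : ℕ) : ENNReal.ofReal (((1 / 2 : ℝ) ^ k) ^ d) * 2 ^ (k * d) = 1 := by
  rw [← pow_mul, one_div, inv_pow, ENNReal.ofReal_inv_of_pos (by positivity),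
    ENNReal.ofReal_pow (by norm_num)]
  simp only [ENNReal.ofReal_ofNat]
  exact ENNReal.inv_mul_cancel (by simp) (by simp)

/-- The points at which all cone densities tend to zero form a null set. -/
lemma zero_density_null {n d : ℕ} (hd : 1 ≤ d) (I : Fin d → Fin n) (hI : Function.Injective I)
    (j : Fin n) (hj : j ∉ range I) (ω : Frame n) (K : Set (Euc n)) (hK : IsCompact K) {V M c ε : ℝ}
    (hV1 : 1 ≤ V) (hV : ∀ s, ‖(ω s).1‖ ≤ V) (hM1 : 1 ≤ M)
    (hM : ∀ s, ∀ x ∈ K, |ell ω s x| ≤ M) (hc : 0 < c) (hnd : NonDeg ω c) (hε : 0 < ε)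
    (hfin : μH[(d : ℝ)] K ≠ ⊤)
    (hgr : ∀ P, GraphPiece n d P → P ⊆ K → μH[(d : ℝ)] P = 0) (p : ℕ) :
    μH[(d : ℝ)] {a ∈ slab K j ω ε | ∀ t, t ∉ range I →
      Tendsto (coneDens I j t ((μH[(d : ℝ)]).restrict K) p ω a) atTop (𝓝 0)} = 0 := by
  have hM0 : 0 < M := by linarith
  have hn : 0 < n := Fin.pos j
  set L := 2 * M * V / ε ^ 2 with hL
  have hL0 : 0 ≤ L := by positivity
  set lam : ℝ := 1 / (4 * (40 * (L + 1)) ^ d) with hlam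
  have hlam0 : 0 < lam := by positivity
  set c' := min c (ε * c / (2 * M)) with hc'
  have hc'0 : 0 < c' := by positivity
  have hcM : c' * 2 * M ≤ ε * c := by
    have : c' ≤ ε * c / (2 * M) := min_le_right _ _
    rw [le_div_iff₀ (by positivity)] at this
    linarith
  -- aperture shrunk so as to be at most one
  set c'' := min 1 c' with hc''
  have hc''0 : 0 < c'' := by positivity
  have hcM'' : c'' * 2 * M ≤ ε * c := le_trans (by gcongr; exact min_le_right _ _) hcM
  set lam' : ℝ := lam / (n * (2 * (M / c'')) ^ d) with hlam'
  have hlam'0 : 0 < lam' := by positivity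
  set Z : ℕ → Set (Euc n) := fun k => {a ∈ slab K j ω ε | ∀ t, t ∉ range I →
    coneDens I j t ((μH[(d : ℝ)]).restrict K) p ω a k ≤ ENNReal.ofReal lam'} with hZ
  refine measure_mono_null (t := ⋃ k, Z k) ?_ (measure_iUnion_null fun k => ?_)
  · rintro a ⟨ha, hta⟩
    have : ∀ᶠ k in atTop, ∀ t, t ∉ range I →
        coneDens I j t ((μH[(d : ℝ)]).restrict K) p ω a k ≤ ENNReal.ofReal lam' := by
      rw [eventually_all]
      intro t
      by_cases ht : t ∈ range I
      · exact Eventually.of_forall fun k h => absurd ht h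
      · filter_upwards [(hta t ht).eventually (ge_mem_nhds (ENNReal.ofReal_pos.2 hlam'0))]
          with k hk _ using hk
    obtain ⟨k, hk⟩ := this.exists
    exact mem_iUnion.2 ⟨k, ha, hk⟩
  have hσ0 : (0 : ℝ) < (1 / 2) ^ k := by positivity
  have hσ1 : ((1 / 2 : ℝ)) ^ k ≤ 1 := pow_le_one₀ (by norm_num) (by norm_num)
  have hZs : Z k ⊆ slab K j ω ε := fun a ha => ha.1
  have hσ' : (1 / 2 : ℝ) ^ k * c'' / M ≤ 1 := by
    rw [div_le_one hM0]
    calc (1 / 2 : ℝ) ^ k * c'' ≤ 1 * 1 := by gcongr; exact min_le_left _ _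
      _ ≤ M := by linarith
  refine cone_null (proj I j ω) (Z k) L ((1 / 2) ^ k * c'' / M) lam ((1 / 2) ^ p) hL0
    (by positivity) hσ' hlam0.le (by positivity)
    (fun x hx y hy => proj_lip I j ω K (by linarith) hV hM0.le hM hε x (hZs hx) y (hZs hy))
    ?_ ?_ ?_ ?_
  · intro a ha r hr hrp
    obtain ⟨m, hm1, hm2⟩ := exists_nat_pow_near_of_lt_one hr
      (hrp.trans (pow_le_one₀ (by norm_num) (by norm_num))) (y := (1 / 2 : ℝ)) (by norm_num)
      (by norm_num)
    have hpm : p < m + 1 := by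
      by_contra hcon
      have := pow_le_pow_of_le_one (by norm_num : (0 : ℝ) ≤ 1 / 2) (by norm_num)
        (not_lt.1 hcon)
      linarith
    obtain ⟨q, rfl⟩ : ∃ q, m = p + q := ⟨m - p, by omega⟩
    have hr2 : (1 / 2 : ℝ) ^ (p + q) ≤ 2 * r := by rw [pow_succ] at hm1; linarith
    set B : ℝ≥0∞ := ENNReal.ofReal (lam' * (((1 / 2 : ℝ) ^ (p + q)) ^ d * ((1 / 2 : ℝ) ^ k) ^ d))
      with hB
    have hpc : ∀ t, t ∉ range I →
        μH[(d : ℝ)] (pcone I j t ω a ((1 / 2) ^ k) ((1 / 2) ^ (p + q)) ∩ K) ≤ B := by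
      intro t ht
      have h1 := ha.2 t ht
      rw [coneDens] at h1
      have h2 := (mul_le_mul_left (le_iSup (fun q : ℕ => ((μH[(d : ℝ)]).restrict K)
        (pcone I j t ω a ((1 / 2) ^ k) ((1 / 2) ^ (p + q))) * 2 ^ ((p + q) * d)) q)
        (2 ^ (k * d))).trans h1
      rw [Measure.restrict_apply' hK.measurableSet] at h2
      set X := μH[(d : ℝ)] (pcone I j t ω a ((1 / 2) ^ k) ((1 / 2) ^ (p + q)) ∩ K)
      calc X = (ENNReal.ofReal (((1 / 2 : ℝ) ^ (p + q)) ^ d) * 2 ^ ((p + q) * d)) *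
            (ENNReal.ofReal (((1 / 2 : ℝ) ^ k) ^ d) * 2 ^ (k * d)) * X := by
            rw [half_pow_enn, half_pow_enn, one_mul, one_mul]
        _ = ENNReal.ofReal (((1 / 2 : ℝ) ^ (p + q)) ^ d) * ENNReal.ofReal (((1 / 2 : ℝ) ^ k) ^ d) *
            (X * 2 ^ ((p + q) * d) * 2 ^ (k * d)) := by ring
        _ ≤ ENNReal.ofReal (((1 / 2 : ℝ) ^ (p + q)) ^ d) * ENNReal.ofReal (((1 / 2 : ℝ) ^ k) ^ d) *
            ENNReal.ofReal lam' := by gcongr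
        _ = B := by
            rw [hB, ENNReal.ofReal_mul hlam'0.le, ENNReal.ofReal_mul (by positivity), mul_comm]
    have hsub : coneIn (proj I j ω) (Z k) a ((1 / 2) ^ k * c'' / M) r ⊆
        {a} ∪ ⋃ t : {t // t ∉ range I}, pcone I j t ω a ((1 / 2) ^ k) ((1 / 2) ^ (p + q)) ∩ K := by
      rintro x ⟨hxZ, hx1, hx2⟩
      by_cases hxa : x = a
      · exact Or.inl hxa
      · obtain ⟨t, ht, h1, h2⟩ := cone_incl I j hj ω K hM1 hM hε hnd hc''0
          ((min_le_right _ _).trans (min_le_left _ _)) hcM'' hσ0 hσ1 a x ha.1 (hZs hxZ) hxa hx1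
        exact Or.inr (mem_iUnion.2 ⟨⟨t, ht⟩, ⟨h1, h2, hx2.trans hm2⟩, (hZs hxZ).1⟩)
    have hsing : μH[(d : ℝ)] ({a} : Set (Euc n)) = 0 := by
      have := Measure.nullSingletonClass_hausdorff (Euc n) (show (0 : ℝ) < d by exact_mod_cast hd)
      exact measure_singleton a
    classical
    calc μH[(d : ℝ)] (coneIn (proj I j ω) (Z k) a ((1 / 2) ^ k * c'' / M) r)
        ≤ 0 + ∑ t : {t // t ∉ range I}, μH[(d : ℝ)]
            (pcone I j t ω a ((1 / 2) ^ k) ((1 / 2) ^ (p + q)) ∩ K) := by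
          refine (measure_mono hsub).trans ((measure_union_le _ _).trans ?_)
          rw [hsing]
          gcongr
          exact measure_iUnion_fintype_le _ _
      _ ≤ ∑ t : {t // t ∉ range I}, B := by
          rw [zero_add]
          exact Finset.sum_le_sum fun t _ => hpc t t.2
      _ ≤ n * B := by
          rw [Finset.sum_const, nsmul_eq_mul]
          gcongr
          refine (Fintype.card_subtype_le _).trans (by simp)
      _ ≤ ENNReal.ofReal (lam * ((1 / 2) ^ k * c'' / M * r) ^ d) := by
          rw [hB, ← ENNReal.ofReal_natCast, ← ENNReal.ofReal_mul (by positivity)]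
          refine ENNReal.ofReal_le_ofReal ?_
          calc (n : ℝ) * (lam' * (((1 / 2 : ℝ) ^ (p + q)) ^ d * ((1 / 2 : ℝ) ^ k) ^ d))
              ≤ n * (lam' * ((2 * r) ^ d * ((1 / 2 : ℝ) ^ k) ^ d)) := by gcongr
            _ = lam * ((1 / 2) ^ k * c'' / M * r) ^ d := by
                rw [hlam']
                simp only [mul_pow, div_pow]
                field_simp
  · intro P hPZ hP
    exact proj_graph_null I hI j hj ω K hc hnd hε
      (by positivity : 0 < (1 / 2 : ℝ) ^ k * c'' / M / 4) hgr P (hPZ.trans hZs) hP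
  · exact ne_top_of_le_ne_top hfin (measure_mono fun x hx => (hZs hx).1)
  · rw [hlam]
    have : 0 < (40 * (L + 1)) ^ d := by positivity
    field_simp
    norm_num

lemma proj_measurable {n d : ℕ} (I : Fin d → Fin n) (j : Fin n) (ω : Frame n) :
    Measurable (proj I j ω : Euc n → (Fin d → ℝ)) := by
  refine measurable_pi_lambda _ fun i => ?_
  have h : ∀ s, Measurable fun x : Euc n => ell ω s x := fun s =>
    Continuous.measurable (by fun_prop)
  exact (h _).div (h _)

/-- Near a point of the slab, a thin cone is mapped by `Π` into a small ball. -/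
lemma pcone_sub {n d : ℕ} (I : Fin d → Fin n) (j t : Fin n) (ω : Frame n) (K : Set (Euc n))
    {V ε σ r : ℝ} (hV1 : 1 ≤ V) (hV : ∀ s, ‖(ω s).1‖ ≤ V) (hε : 0 < ε) (hσ : 0 ≤ σ)
    (hr : V * r ≤ ε / 2) (a : Euc n) (ha : a ∈ slab K j ω ε) :
    pcone I j t ω a σ r ∩ K ⊆
      proj I j ω ⁻¹' closedBall (proj I j ω a) (2 * V / ε * (r * σ)) ∩ slab K j ω (ε / 2) := by
  rintro x ⟨⟨-, hx2, hx3⟩, hxK⟩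
  have hj : ε / 2 ≤ |ell ω j x| := by
    have h1 := ell_lip hV j x a
    have h2 : V * dist x a ≤ V * r := by gcongr
    have h3 := abs_sub_abs_le_abs_sub (ell ω j a) (ell ω j x)
    rw [abs_sub_comm] at h3
    have := ha.2
    linarith
  refine ⟨?_, hxK, hj⟩
  rw [mem_preimage, mem_closedBall]
  have ha0 := ne_zero_of_slab hε ha
  have ha0' : 0 < |ell ω j a| := abs_pos.2 ha0
  rw [norm_tilt I j ω a x ha0 (abs_pos.1 ((half_pos hε).trans_le hj)), mul_assoc] at hx2
  have h5 : |ell ω j a| * (|ell ω j x| * dist (proj I j ω x) (proj I j ω a)) ≤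
      |ell ω j a| * (σ * |ell ω t x - ell ω t a|) := by linarith
  have h6 := le_of_mul_le_mul_left h5 ha0'
  have h7 : |ell ω t x - ell ω t a| ≤ V * r := (ell_lip hV t x a).trans (by gcongr)
  have h8 : ε / 2 * dist (proj I j ω x) (proj I j ω a) ≤ σ * (V * r) :=
    (by gcongr : _ ≤ |ell ω j x| * dist (proj I j ω x) (proj I j ω a)).trans
      (h6.trans (by gcongr))
  calc dist (proj I j ω x) (proj I j ω a)
      = 2 / ε * (ε / 2 * dist (proj I j ω x) (proj I j ω a)) := by field_simp
    _ ≤ 2 / ε * (σ * (V * r)) := by gcongr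
    _ = _ := by ring

/-- Over a point where the projected measure has finite density, cone densities stay bounded. -/
lemma coneDens_bdd {n d : ℕ} (I : Fin d → Fin n) (j t : Fin n) (ω : Frame n) (K : Set (Euc n))
    (hK : IsCompact K) (μ : Measure (Euc n)) {V ε δ : ℝ} (hV1 : 1 ≤ V) (hV : ∀ s, ‖(ω s).1‖ ≤ V)
    (hε : 0 < ε) (p : ℕ) (hp : V * (1 / 2) ^ p ≤ ε / 2) (a : Euc n) (ha : a ∈ slab K j ω ε)
    (C : ℕ) (hδ : 0 < δ)
    (hC : ∀ r, 0 < r → r < δ → Measure.map (proj I j ω) (μ.restrict (slab K j ω (ε / 2)))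
      (closedBall (proj I j ω a) r) ≤ C * ENNReal.ofReal (r ^ d)) :
    ∀ᶠ k in atTop, coneDens I j t (μ.restrict K) p ω a k ≤
      C * ENNReal.ofReal ((2 * V / ε) ^ d) := by
  have hV0 : 0 < V := by linarith
  have hlim : Tendsto (fun k : ℕ => 2 * V / ε * (1 / 2 : ℝ) ^ k) atTop (𝓝 (2 * V / ε * 0)) :=
    (tendsto_pow_atTop_nhds_zero_of_lt_one (by norm_num) (by norm_num)).const_mul _
  rw [mul_zero] at hlim
  have hslab : MeasurableSet (slab K j ω (ε / 2)) := by
    refine hK.measurableSet.inter ?_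
    have : IsClosed {x : Euc n | ε / 2 ≤ |ell ω j x|} := by apply isClosed_le <;> fun_prop
    exact this.measurableSet
  filter_upwards [hlim.eventually (gt_mem_nhds hδ)] with k hk
  unfold coneDens
  rw [ENNReal.iSup_mul]
  refine iSup_le fun q => ?_
  have h1 : (1 / 2 : ℝ) ^ (p + q) ≤ (1 / 2) ^ p :=
    pow_le_pow_of_le_one (by norm_num) (by norm_num) (Nat.le_add_right _ _)
  have h1' : (1 / 2 : ℝ) ^ (p + q) ≤ 1 := pow_le_one₀ (by norm_num) (by norm_num)
  have hsub := pcone_sub I j t ω K hV1 hV hε (σ := (1 / 2) ^ k) (r := (1 / 2) ^ (p + q))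
    (by positivity) ((by gcongr : _ ≤ V * (1 / 2) ^ p).trans hp) a ha
  have h2 := hC (2 * V / ε * ((1 / 2) ^ (p + q) * (1 / 2) ^ k)) (by positivity) (by
    refine lt_of_le_of_lt ?_ hk
    gcongr
    exact mul_le_of_le_one_left (by positivity) h1')
  rw [Measure.map_apply (proj_measurable I j ω) measurableSet_closedBall,
    Measure.restrict_apply' hslab] at h2
  rw [Measure.restrict_apply' hK.measurableSet]
  calc μ (pcone I j t ω a ((1 / 2) ^ k) ((1 / 2) ^ (p + q)) ∩ K) * 2 ^ ((p + q) * d) * 2 ^ (k * d)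
      ≤ (C * ENNReal.ofReal ((2 * V / ε * ((1 / 2) ^ (p + q) * (1 / 2) ^ k)) ^ d)) *
        2 ^ ((p + q) * d) * 2 ^ (k * d) := by
        gcongr
        exact (measure_mono hsub).trans h2
    _ = C * ENNReal.ofReal ((2 * V / ε) ^ d) *
        (ENNReal.ofReal (((1 / 2 : ℝ) ^ (p + q)) ^ d) * 2 ^ ((p + q) * d)) *
        (ENNReal.ofReal (((1 / 2 : ℝ) ^ k) ^ d) * 2 ^ (k * d)) := by
        rw [mul_pow, mul_pow, ENNReal.ofReal_mul (by positivity), ENNReal.ofReal_mul (by positivity)]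
        ring
    _ ≤ _ := by rw [half_pow_enn, half_pow_enn, mul_one, mul_one]

/-- For a frame all of whose points are tame, the slab has null image under `Π`. -/
lemma proj_null {n d : ℕ} (hd : 1 ≤ d) (I : Fin d → Fin n) (hI : Function.Injective I)
    (j : Fin n) (hj : j ∉ range I) (ω : Frame n) (K : Set (Euc n)) (hK : IsCompact K) {V M c ε : ℝ}
    (hV1 : 1 ≤ V) (hV : ∀ s, ‖(ω s).1‖ ≤ V) (hM1 : 1 ≤ M)
    (hM : ∀ s, ∀ x ∈ K, |ell ω s x| ≤ M) (hc : 0 < c) (hnd : NonDeg ω c) (hε : 0 < ε)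
    (hfin : μH[(d : ℝ)] K ≠ ⊤)
    (hgr : ∀ P, GraphPiece n d P → P ⊆ K → μH[(d : ℝ)] P = 0)
    (htame : ∀ p : ℕ, ∀ t, t ∉ range I → ∀ᵐ a ∂((μH[(d : ℝ)]).restrict K), ell ω j a ≠ 0 →
      Tame I j t K ((μH[(d : ℝ)]).restrict K) p ω a) :
    volume (proj I j ω '' slab K j ω ε) = 0 := by
  have hV0 : 0 < V := by linarith
  have hM0 : 0 < M := by linarith
  set μ := (μH[(d : ℝ)]).restrict K with hμ
  have hnull : ∀ (S : Set (Euc n)) (e : ℝ), 0 < e → S ⊆ slab K j ω e → μH[(d : ℝ)] S = 0 →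
      volume (proj I j ω '' S) = 0 := by
    intro S e he hS h0
    have h := volume_image_le (proj I j ω) S ⟨2 * M * V / e ^ 2, by positivity⟩
      (fun x hx y hy => proj_lip I j ω K hV0.le hV hM0.le hM he x (hS hx) y (hS hy))
    rw [h0, mul_zero] at h
    exact le_antisymm h zero_le
  -- the bad points
  set B : Set (Euc n) := {a | ¬ ∀ p : ℕ, ∀ t, t ∉ range I → ell ω j a ≠ 0 →
      Tame I j t K μ p ω a} with hB
  have hB0 : μ B = 0 := by
    have : ∀ᵐ a ∂μ, ∀ p : ℕ, ∀ t, t ∉ range I → ell ω j a ≠ 0 → Tame I j t K μ p ω a := by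
      rw [ae_all_iff]; intro p
      rw [ae_all_iff]; intro t
      by_cases ht : t ∈ range I
      · exact Eventually.of_forall fun a h => absurd ht h
      · filter_upwards [htame p t ht] with a ha _ using ha
    exact this
  have hB1 : μH[(d : ℝ)] (slab K j ω ε ∩ B) = 0 := by
    rw [hμ, Measure.restrict_apply' hK.measurableSet] at hB0
    refine measure_mono_null ?_ hB0
    exact fun x hx => ⟨hx.2, hx.1.1⟩
  obtain ⟨p0, hp0⟩ : ∃ p0 : ℕ, V * (1 / 2) ^ p0 ≤ ε / 2 := by
    obtain ⟨p0, h⟩ := exists_pow_lt_of_lt_one (show 0 < ε / 2 / V by positivity)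
      (by norm_num : (1 / 2 : ℝ) < 1)
    refine ⟨p0, ?_⟩
    rw [lt_div_iff₀ hV0] at h
    linarith
  set S := slab K j ω (ε / 2) with hS
  have hN2 : volume {y | (S ∩ proj I j ω ⁻¹' {y}).Infinite} = 0 :=
    infinite_fibre_null (proj I j ω) S ⟨2 * M * V / (ε / 2) ^ 2, by positivity⟩
      (fun x hx y hy => proj_lip I j ω K hV0.le hV hM0.le hM (half_pos hε) x hx y hy)
      (ne_top_of_le_ne_top hfin (measure_mono fun x hx => hx.1))
  have hfinS : IsFiniteMeasure ((μH[(d : ℝ)]).restrict S) := by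
    refine ⟨?_⟩
    rw [Measure.restrict_apply_univ]
    exact lt_of_le_of_lt (measure_mono fun x hx => hx.1) hfin.lt_top
  have hN1 := infinite_density_null (Measure.map (proj I j ω) ((μH[(d : ℝ)]).restrict S))
  set N1 := {y | ¬ ∃ C : ℕ, ∃ δ > 0, ∀ r, 0 < r → r < δ →
      Measure.map (proj I j ω) ((μH[(d : ℝ)]).restrict S) (closedBall y r) ≤
      C * ENNReal.ofReal (r ^ d)} with hN1def
  have hN1' : volume N1 = 0 := hN1
  set Z : ℕ → Set (Euc n) := fun p => {a ∈ slab K j ω ε | ∀ t, t ∉ range I →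
      Tendsto (coneDens I j t μ p ω a) atTop (𝓝 0)} with hZ
  have hZ0 : ∀ p, volume (proj I j ω '' Z p) = 0 := fun p =>
    hnull _ ε hε (fun x hx => hx.1) (zero_density_null hd I hI j hj ω K hK hV1 hV hM1 hM hc hnd hε
      hfin hgr p)
  have hcov : proj I j ω '' slab K j ω ε ⊆ proj I j ω '' (slab K j ω ε ∩ B) ∪
      (N1 ∪ ({y | (S ∩ proj I j ω ⁻¹' {y}).Infinite} ∪ ⋃ p, proj I j ω '' Z p)) := by
    rintro _ ⟨a, ha, rfl⟩
    by_cases haB : a ∈ B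
    · exact Or.inl ⟨a, ⟨ha, haB⟩, rfl⟩
    right
    by_cases haN1 : proj I j ω a ∈ N1
    · exact Or.inl haN1
    right
    by_cases haN2 : (S ∩ proj I j ω ⁻¹' {proj I j ω a}).Infinite
    · exact Or.inl haN2
    right
    rw [hB, mem_ofPred_eq, not_not] at haB
    rw [hN1def, mem_ofPred_eq, not_not] at haN1
    obtain ⟨C, δ, hδ, hC⟩ := haN1
    have ha0 := ne_zero_of_slab hε ha
    have hnohit : ∃ p ≥ p0, ∀ t, t ∉ range I → ¬ fibreHit I j t K p ω a := by
      by_contra hcon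
      push Not at hcon
      have hF : (S ∩ proj I j ω ⁻¹' {proj I j ω a}).Finite := not_infinite.1 haN2
      have hFc : IsClosed ((S ∩ proj I j ω ⁻¹' {proj I j ω a}) \ {a}) :=
        (hF.subset sdiff_subset).isClosed
      obtain ⟨r, hr, hball⟩ := Metric.isOpen_iff.1 hFc.isOpen_compl a (by simp)
      obtain ⟨p1, hp1⟩ := exists_pow_lt_of_lt_one hr (by norm_num : (1 / 2 : ℝ) < 1)
      obtain ⟨t, ht, x, hxK, hx1, hx2, hx3⟩ := hcon (max p0 p1) (le_max_left _ _)
      have h1 : (1 / 2 : ℝ) ^ (max p0 p1) ≤ (1 / 2) ^ p1 :=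
        pow_le_pow_of_le_one (by norm_num) (by norm_num) (le_max_right _ _)
      have h2 : (1 / 2 : ℝ) ^ (max p0 p1) ≤ (1 / 2) ^ p0 :=
        pow_le_pow_of_le_one (by norm_num) (by norm_num) (le_max_left _ _)
      have hsub := pcone_sub I j t ω K hV1 hV hε (σ := 0) (r := (1 / 2) ^ (max p0 p1))
        le_rfl ((by gcongr : _ ≤ V * (1 / 2) ^ p0).trans hp0) a ha
      have hx : x ∈ pcone I j t ω a 0 ((1 / 2) ^ (max p0 p1)) ∩ K :=
        ⟨⟨hx1, by rw [hx2]; simp, hx3⟩, hxK⟩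
      obtain ⟨hx4, hx5⟩ := hsub hx
      rw [mul_zero, mul_zero, closedBall_zero] at hx4
      refine hball (mem_ball.2 (hx3.trans_lt (h1.trans_lt hp1))) ⟨⟨hx5, hx4⟩, ?_⟩
      rintro rfl
      exact hx1 rfl
    obtain ⟨p, hp, hno⟩ := hnohit
    have hp' : V * (1 / 2) ^ p ≤ ε / 2 := by
      refine le_trans ?_ hp0
      gcongr ?_ * ?_
      exact pow_le_pow_of_le_one (by norm_num) (by norm_num) hp
    refine mem_iUnion.2 ⟨p, a, ⟨ha, fun t ht => ?_⟩, rfl⟩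
    rcases haB p t ht ha0 with h | h | h
    · exact h
    · exfalso
      have hbd := coneDens_bdd I j t ω K hK (μH[(d : ℝ)]) hV1 hV hε p hp' a ha C hδ hC
      obtain ⟨C', hC'⟩ := ENNReal.exists_nat_gt
        (show (C : ℝ≥0∞) * ENNReal.ofReal ((2 * V / ε) ^ d) ≠ ⊤ from
          ENNReal.mul_ne_top (by simp) (by simp))
      obtain ⟨k, hk1, hk2⟩ := ((h C').and_eventually hbd).exists
      exact absurd (hk1.trans_le hk2) (not_lt.2 hC'.le)
    · exact absurd h (hno t ht)
  refine measure_mono_null hcov (measure_union_null (hnull _ ε hε inter_subset_left hB1)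
    (measure_union_null hN1' (measure_union_null hN2 (measure_iUnion_null hZ0))))

/-- A frame all of whose projective maps send the part of `K` where they are defined to a
null set. -/
def GoodFrame (n d : ℕ) (K : Set (Euc n)) (ω : Frame n) : Prop :=
  (∃ c > 0, NonDeg ω c) → ∀ I : Fin d → Fin n, Function.Injective I → ∀ j, j ∉ range I →
    ∀ ε > 0, volume (proj I j ω '' slab K j ω ε) = 0

/-- Almost every frame is good for a purely unrectifiable compact set. -/
lemma goodFrame_ae {n d : ℕ} (hd : 1 ≤ d) (K : Set (Euc n)) (hK : IsCompact K)
    (hfin : μH[(d : ℝ)] K ≠ ⊤)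
    (hgr : ∀ P, GraphPiece n d P → P ⊆ K → μH[(d : ℝ)] P = 0) :
    ∀ᵐ ω : Frame n, GoodFrame n d K ω := by
  have hfinK : IsFiniteMeasure ((μH[(d : ℝ)]).restrict K) := by
    refine ⟨?_⟩
    rw [Measure.restrict_apply_univ]
    exact hfin.lt_top
  have key : ∀ᵐ ω : Frame n, ∀ I : Fin d → Fin n, ∀ j t : Fin n, ∀ p : ℕ,
      Function.Injective I → j ∉ range I → t ∉ range I →
      ∀ᵐ a ∂((μH[(d : ℝ)]).restrict K), ell ω j a ≠ 0 →
      Tame I j t K ((μH[(d : ℝ)]).restrict K) p ω a := by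
    simp only [ae_all_iff]
    intro I j t p hI hj ht
    exact tame_ae I hI j t hj ht K hK _ (by
      rw [Measure.restrict_apply' hK.measurableSet]; simp) p
  filter_upwards [key] with ω hω
  rintro ⟨c, hc, hnd⟩ I hI j hj ε hε
  obtain ⟨V, hV⟩ : ∃ V : ℝ, ∀ s, ‖(ω s).1‖ ≤ V := by
    obtain ⟨V, hV⟩ := (finite_range fun s => ‖(ω s).1‖).bddAbove
    exact ⟨V, fun s => hV ⟨s, rfl⟩⟩
  obtain ⟨M, hM⟩ : ∃ M : ℝ, ∀ s, ∀ x ∈ K, |ell ω s x| ≤ M := by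
    have : ∀ s, ∃ M : ℝ, ∀ x ∈ K, |ell ω s x| ≤ M := fun s => by
      obtain ⟨M, hM⟩ := hK.exists_bound_of_continuousOn (f := fun x => ell ω s x)
        (Continuous.continuousOn (by fun_prop))
      exact ⟨M, hM⟩
    choose M hM using this
    obtain ⟨M', hM'⟩ := (finite_range M).bddAbove
    exact ⟨M', fun s x hx => (hM s x hx).trans (hM' ⟨s, rfl⟩)⟩
  exact proj_null hd I hI j hj ω K hK (le_max_right V 1) (fun s => (hV s).trans (le_max_left _ _))
    (le_max_right M 1) (fun s x hx => (hM s x hx).trans (le_max_left _ _)) hc hnd hε hfin hgr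
    (fun p t ht => hω I j t p hI hj ht)

/-! ### Radial retraction of the cubes of a grid towards their `d`-skeleton -/

/-- The signed distance from `y` to the nearest even integer. -/
def cellOff (y : ℝ) : ℝ := y - 2 * round (y / 2)

lemma abs_cellOff_le_sub (y : ℝ) (z : ℤ) : |cellOff y| ≤ |y - 2 * z| := by
  have h := round_le (y / 2) z
  have h1 : cellOff y = 2 * (y / 2 - round (y / 2)) := by unfold cellOff; ring
  have h2 : y - 2 * z = 2 * (y / 2 - z) := by ring
  rw [h1, h2, abs_mul, abs_mul]
  gcongr

lemma abs_cellOff_le_one (y : ℝ) : |cellOff y| ≤ 1 := by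
  have h := abs_sub_round (y / 2)
  have h1 : cellOff y = 2 * (y / 2 - round (y / 2)) := by unfold cellOff; ring
  rw [h1, abs_mul, abs_two]
  linarith

lemma abs_cellOff_lip (y y' : ℝ) : |cellOff y| ≤ |cellOff y'| + |y - y'| := by
  have h := abs_cellOff_le_sub y (round (y' / 2))
  have h2 : y - 2 * round (y' / 2) = cellOff y' + (y - y') := by unfold cellOff; ring
  rw [h2] at h
  exact h.trans (abs_add_le _ _)

/-- The `(d + 1)`-st smallest of the distances of the coordinates of `y` to the even integers. It
vanishes exactly on the dual skeleton of codimension `d + 1`. -/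
def lowGap {n : ℕ} (d : ℕ) (y : Fin n → ℝ) : ℝ :=
  sInf {t | 0 ≤ t ∧ ∃ J : Finset (Fin n), J.card = d + 1 ∧ ∀ i ∈ J, |cellOff (y i)| ≤ t}

lemma lowGap_le {n d : ℕ} (y : Fin n → ℝ) {t : ℝ} (ht : 0 ≤ t) (J : Finset (Fin n))
    (hJ : J.card = d + 1) (h : ∀ i ∈ J, |cellOff (y i)| ≤ t) : lowGap d y ≤ t :=
  csInf_le ⟨0, fun _ hs => hs.1⟩ ⟨ht, J, hJ, h⟩

lemma lowGap_spec {n d : ℕ} (hdn : d < n) (y : Fin n → ℝ) : 0 ≤ lowGap d y ∧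
    ∃ J : Finset (Fin n), J.card = d + 1 ∧ ∀ i ∈ J, |cellOff (y i)| ≤ lowGap d y := by
  set S := {t : ℝ | 0 ≤ t ∧ ∃ J : Finset (Fin n), J.card = d + 1 ∧ ∀ i ∈ J, |cellOff (y i)| ≤ t}
    with hS
  have hcl : IsClosed S := by
    have : S = Ici 0 ∩ ⋃ J : {J : Finset (Fin n) // J.card = d + 1},
        ⋂ i ∈ J.1, Ici |cellOff (y i)| := by
      ext t; simp [hS]
    rw [this]
    exact isClosed_Ici.inter (isClosed_iUnion_of_finite fun J =>
      isClosed_biInter fun i _ => isClosed_Ici)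
  have hne : S.Nonempty := by
    obtain ⟨J, -, hJ⟩ := Finset.exists_subset_card_eq (s := (Finset.univ : Finset (Fin n)))
      (n := d + 1) (by simpa using hdn)
    exact ⟨1, zero_le_one, J, hJ, fun i _ => abs_cellOff_le_one _⟩
  exact hcl.csInf_mem hne ⟨0, fun _ hs => hs.1⟩

lemma lowGap_le_one {n d : ℕ} (hdn : d < n) (y : Fin n → ℝ) : lowGap d y ≤ 1 := by
  obtain ⟨J, -, hJ⟩ := Finset.exists_subset_card_eq (s := (Finset.univ : Finset (Fin n)))
      (n := d + 1) (by simpa using hdn)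
  exact lowGap_le y zero_le_one J hJ fun i _ => abs_cellOff_le_one _

lemma lowGap_lip {n d : ℕ} (hdn : d < n) (y y' : Fin n → ℝ) :
    |lowGap d y - lowGap d y'| ≤ dist y y' := by
  have key : ∀ y y' : Fin n → ℝ, lowGap d y ≤ lowGap d y' + dist y y' := by
    intro y y'
    obtain ⟨h0, J, hJ, h⟩ := lowGap_spec hdn y'
    refine lowGap_le y (by positivity) J hJ fun i hi => ?_
    have h1 := abs_cellOff_lip (y i) (y' i)
    have h2 : |y i - y' i| ≤ dist y y' := dist_le_pi_dist y y' i
    have := h i hi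
    linarith
  have h1 := key y y'
  have h2 := key y' y
  rw [dist_comm] at h2
  rw [abs_le]
  constructor <;> linarith

lemma lowGap_continuous {n d : ℕ} (hdn : d < n) : Continuous (lowGap d : (Fin n → ℝ) → ℝ) :=
  (LipschitzWith.of_dist_le_mul (K := 1) fun y y' => by
    simpa [Real.dist_eq] using lowGap_lip hdn y y').continuous

/-- A coordinate `j` realising `lowGap` and `d` coordinates outside of which the distances to the
even integers are at least `lowGap`. -/
lemma lowGap_indices {n d : ℕ} (hdn : d < n) (y : Fin n → ℝ) (hpos : 0 < lowGap d y) :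
    ∃ I : Fin d → Fin n, Function.Injective I ∧ ∃ j, j ∉ range I ∧
      |cellOff (y j)| = lowGap d y ∧ ∀ t, t ∉ range I → lowGap d y ≤ |cellOff (y t)| := by
  classical
  obtain ⟨h0, J, hJ, h⟩ := lowGap_spec hdn y
  set L : Finset (Fin n) := Finset.univ.filter fun i => |cellOff (y i)| < lowGap d y with hL
  have hLd : L.card ≤ d := by
    by_contra hcon
    push Not at hcon
    obtain ⟨J', hJ'L, hJ'⟩ := Finset.exists_subset_card_eq (s := L) (n := d + 1) hcon
    have hne : J'.Nonempty := Finset.card_pos.1 (by omega)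
    obtain ⟨i0, hi0, hmax⟩ := J'.exists_max_image (fun i => |cellOff (y i)|) hne
    have h1 := lowGap_le y (abs_nonneg (cellOff (y i0))) J' hJ' hmax
    have h2 := (Finset.mem_filter.1 (hJ'L hi0)).2
    linarith
  obtain ⟨j, hjJ, hjL⟩ : ∃ j ∈ J, j ∉ L := by
    by_contra hcon
    push Not at hcon
    have := Finset.card_le_card hcon
    omega
  have hjm : lowGap d y ≤ |cellOff (y j)| := by
    by_contra hcon
    exact hjL (Finset.mem_filter.2 ⟨Finset.mem_univ _, not_le.1 hcon⟩)
  obtain ⟨I', hLI, hIj, hI'⟩ := Finset.exists_subsuperset_card_eq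
    (show L ⊆ Finset.univ.erase j from fun i hi =>
      Finset.mem_erase.2 ⟨fun h => hjL (h ▸ hi), Finset.mem_univ _⟩) hLd
    (by rw [Finset.card_erase_of_mem (Finset.mem_univ _), Finset.card_univ, Fintype.card_fin]; omega)
  have hrange : range (I'.orderEmbOfFin hI') = I' := Finset.range_orderEmbOfFin _ _
  refine ⟨I'.orderEmbOfFin hI', (I'.orderEmbOfFin hI').injective, j, ?_, le_antisymm (h j hjJ) hjm,
    fun t ht => ?_⟩
  · rw [hrange]
    exact fun hj => (Finset.mem_erase.1 (hIj hj)).1 rfl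
  · rw [hrange] at ht
    by_contra hcon
    exact ht (hLI (Finset.mem_filter.2 ⟨Finset.mem_univ _, not_le.1 hcon⟩))

/-- Lipschitz estimate for the truncated quotient `q / max M |q|`. -/
lemma trunc_lip {q q' M M' Δ : ℝ} (hM : 0 < M) (hM' : 0 < M') (hq : |q - q'| ≤ Δ)
    (hMM : |M - M'| ≤ Δ) : |q / max M (|q|) - q' / max M' (|q'|)| ≤ 2 * Δ / max M M' := by
  have key : ∀ q q' M M' : ℝ, 0 < M → 0 < M' → |q - q'| ≤ Δ → |M - M'| ≤ Δ →
      |q / max M (|q|) - q' / max M' (|q'|)| ≤ 2 * Δ / M := by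
    intro q q' M M' hM hM' hq hMM
    set a := max M |q|
    set a' := max M' |q'|
    have hMa : M ≤ a := le_max_left _ _
    have ha : 0 < a := hM.trans_le hMa
    have ha' : 0 < a' := hM'.trans_le (le_max_left _ _)
    have hqa' : |q'| ≤ a' := le_max_right _ _
    have haa : |a' - a| ≤ Δ := by
      rw [abs_sub_comm]
      refine (abs_max_sub_max_le_max M |q| M' |q'|).trans (max_le hMM ?_)
      exact (abs_abs_sub_abs_le q q').trans hq
    have hid : q / a - q' / a' = (q - q') / a + q' / a' * ((a' - a) / a) := by
      field_simp; ring
    have h1 : |q' / a'| ≤ 1 := by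
      rw [abs_div, abs_of_pos ha']; exact div_le_one_of_le₀ hqa' ha'.le
    have hΔ : 0 ≤ Δ := (abs_nonneg _).trans hq
    calc |q / a - q' / a'| ≤ |(q - q') / a| + |q' / a'| * |(a' - a) / a| := by
          rw [hid, ← abs_mul]; exact abs_add_le _ _
      _ ≤ Δ / a + 1 * (Δ / a) := by
          rw [abs_div (q - q') a, abs_div (a' - a) a, abs_of_pos ha]
          gcongr
      _ = 2 * Δ / a := by ring
      _ ≤ 2 * Δ / M := by gcongr
  rcases le_total M' M with h | h
  · rw [max_eq_left h]; exact key q q' M M' hM hM' hq hMM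
  · rw [max_eq_right h, abs_sub_comm]
    exact key q' q M' M hM' hM (by rwa [abs_sub_comm]) (by rwa [abs_sub_comm])

/-- The displacement, in one coordinate, of the radial retraction of a cell with radial
parameter `M`. -/
def push1 (M y : ℝ) : ℝ := cellOff y / max M |cellOff y| - cellOff y

lemma push1_abs {M y : ℝ} (hM : 0 < M) (hM1 : M ≤ 1) : |push1 M y| ≤ 1 - |cellOff y| := by
  unfold push1
  have h1 := abs_cellOff_le_one y
  set q := cellOff y
  set a := max M |q| with ha
  have ha0 : 0 < a := hM.trans_le (le_max_left _ _)
  have ha1 : a ≤ 1 := max_le hM1 h1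
  have hqa : |q| ≤ a := le_max_right _ _
  have hid : q / a - q = q / a * (1 - a) := by field_simp
  rw [hid, abs_mul, abs_div, abs_of_pos ha0, abs_of_nonneg (by linarith : 0 ≤ 1 - a)]
  have h2 : |q| / a ≤ 1 := div_le_one_of_le₀ hqa ha0.le
  calc |q| / a * (1 - a) ≤ 1 * (1 - a) := by gcongr
    _ ≤ 1 - |q| := by linarith

lemma push1_lip {y y' M M' Δ : ℝ} (hM : 0 < M) (hM1 : M ≤ 1) (hM' : 0 < M') (hM1' : M' ≤ 1)
    (hy : |y - y'| ≤ Δ) (hMM : |M - M'| ≤ Δ) :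
    |push1 M y - push1 M' y'| ≤ 3 * Δ / max M M' := by
  have hmax : 0 < max M M' := hM.trans_le (le_max_left _ _)
  have hmax1 : max M M' ≤ 1 := max_le hM1 hM1'
  have hΔ : 0 ≤ Δ := (abs_nonneg _).trans hy
  have hΔ' : Δ ≤ Δ / max M M' := le_div_self hΔ hmax hmax1
  by_cases hr : round (y / 2) = round (y' / 2)
  · have hq : cellOff y - cellOff y' = y - y' := by unfold cellOff; rw [hr]; ring
    have h1 := trunc_lip hM hM' (hq ▸ hy) hMM
    unfold push1
    have : ∀ u v w z : ℝ, u - v - (w - z) = (u - w) - (v - z) := fun u v w z => by ring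
    rw [this]
    refine (abs_sub _ _).trans ?_
    rw [hq]
    calc _ ≤ 2 * Δ / max M M' + Δ / max M M' := by linarith
      _ = _ := by ring
  · -- different cells: both displacements vanish on the cell boundaries in between
    have h1 := push1_abs (y := y) hM hM1
    have h2 := push1_abs (y := y') hM' hM1'
    have h3 : 2 - |cellOff y| - |cellOff y'| ≤ |y - y'| := by
      have hz : (1 : ℝ) ≤ |((round (y / 2) - round (y' / 2) : ℤ) : ℝ)| := by
        rw [← Int.cast_abs]; exact_mod_cast Int.one_le_abs (sub_ne_zero.2 hr)
      have hid : 2 * ((round (y / 2) - round (y' / 2) : ℤ) : ℝ) =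
          (y - y') - cellOff y + cellOff y' := by unfold cellOff; push_cast; ring
      have h4 : |2 * ((round (y / 2) - round (y' / 2) : ℤ) : ℝ)| ≤
          |y - y'| + |cellOff y| + |cellOff y'| := by
        rw [hid]
        exact (abs_add_le _ _).trans (by gcongr; exact abs_sub _ _)
      rw [abs_mul, abs_two] at h4
      linarith
    calc |push1 M y - push1 M' y'| ≤ |push1 M y| + |push1 M' y'| := abs_sub _ _
      _ ≤ Δ := by linarith
      _ ≤ 3 * (Δ / max M M') := by linarith
      _ = _ := by ring

/-- The displacement of the retraction of the grid of cubes of side two, regularised at scale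
`ε` near the dual skeleton. -/
def gridPush {n : ℕ} (d : ℕ) (ε : ℝ) (y : Fin n → ℝ) : Fin n → ℝ :=
  fun i => push1 (max (lowGap d y) ε) (y i)

lemma gridPush_norm {n d : ℕ} (hdn : d < n) {ε : ℝ} (hε : 0 < ε) (hε1 : ε ≤ 1) (y : Fin n → ℝ) :
    ‖gridPush d ε y‖ ≤ 1 := by
  refine (pi_norm_le_iff_of_nonneg zero_le_one).2 fun i => ?_
  have h := push1_abs (M := max (lowGap d y) ε) (y := y i) (hε.trans_le (le_max_right _ _))
    (max_le (lowGap_le_one hdn y) hε1)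
  have := abs_nonneg (cellOff (y i))
  rw [Real.norm_eq_abs]
  exact h.trans (by linarith)

lemma gridPush_lip {n d : ℕ} (hdn : d < n) {ε : ℝ} (hε : 0 < ε) (hε1 : ε ≤ 1) (y y' : Fin n → ℝ) :
    dist (gridPush d ε y) (gridPush d ε y') ≤
      3 * dist y y' / max (max (lowGap d y) ε) (max (lowGap d y') ε) := by
  have h0 : ∀ y : Fin n → ℝ, 0 < max (lowGap d y) ε := fun y => hε.trans_le (le_max_right _ _)
  have h1 : ∀ y : Fin n → ℝ, max (lowGap d y) ε ≤ 1 := fun y => max_le (lowGap_le_one hdn y) hε1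
  have hpos : 0 < max (max (lowGap d y) ε) (max (lowGap d y') ε) :=
    (h0 y).trans_le (le_max_left _ _)
  refine (dist_pi_le_iff (by positivity)).2 fun i => ?_
  refine push1_lip (h0 y) (h1 y) (h0 y') (h1 y') (dist_le_pi_dist y y' i) ?_
  have hlow := lowGap_lip hdn y y'
  exact (abs_max_sub_max_le_abs _ _ _).trans hlow

/-! ### The deformation attached to a frame -/

/-- The coordinates of a point in the affine frame `ω`. -/
def coords {n : ℕ} (ω : Frame n) (x : Euc n) : Fin n → ℝ := fun i => ell ω i x

lemma coords_lip {n : ℕ} {ω : Frame n} {V : ℝ} (hV0 : 0 ≤ V) (hV : ∀ s, ‖(ω s).1‖ ≤ V)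
    (x y : Euc n) : dist (coords ω x) (coords ω y) ≤ V * dist x y :=
  (dist_pi_le_iff (by positivity)).2 fun i => ell_lip hV i x y

/-- The inverse of the linear part of a nondegenerate frame. -/
lemma frame_inv {n : ℕ} {ω : Frame n} {c : ℝ} (hc : 0 < c) (h : NonDeg ω c) :
    ∃ B : (Fin n → ℝ) →ₗ[ℝ] Euc n, (∀ x, B (fun i => ⟪(ω i).1, x⟫_ℝ) = x) ∧
      ∀ u, c * ‖B u‖ ≤ ‖u‖ := by
  set A : Euc n →ₗ[ℝ] (Fin n → ℝ) := LinearMap.pi fun i => (innerₛₗ ℝ (ω i).1) with hA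
  have hAx : ∀ x i, A x i = ⟪(ω i).1, x⟫_ℝ := fun x i => by simp [hA]
  have hinj : Function.Injective A := by
    refine (injective_iff_map_eq_zero A).2 fun w hw => ?_
    obtain ⟨s, hs⟩ := h w
    rw [← hAx, hw] at hs
    simp only [Pi.zero_apply, abs_zero] at hs
    have : ‖w‖ ≤ 0 := by nlinarith [norm_nonneg w]
    exact norm_le_zero_iff.1 this
  set e := LinearMap.linearEquivOfInjective A hinj (by simp) with he
  have heA : ∀ x, e x = A x := fun x => LinearMap.linearEquivOfInjective_apply _ _ _
  refine ⟨e.symm.toLinearMap, fun x => ?_, fun u => ?_⟩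
  · have : (fun i => ⟪(ω i).1, x⟫_ℝ) = e x := by rw [heA]; funext i; rw [hAx]
    rw [this]; simp
  · obtain ⟨s, hs⟩ := h (e.symm u)
    rw [← hAx, ← heA, e.apply_symm_apply] at hs
    exact hs.trans (norm_le_pi_norm u s)

/-- The retraction of the grid of the frame `ω`, cut off by `χ`; `B` is the inverse of the linear
part of the frame. -/
def defo {n : ℕ} (d : ℕ) (ω : Frame n) (B : (Fin n → ℝ) →ₗ[ℝ] Euc n) (χ : Euc n → ℝ) (ε : ℝ)
    (x : Euc n) : Euc n := x + χ x • B (gridPush d ε (coords ω x))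

lemma defo_lip {n d : ℕ} (hdn : d < n) (ω : Frame n) (B : (Fin n → ℝ) →ₗ[ℝ] Euc n)
    (χ : Euc n → ℝ) {ε V β τ : ℝ} (hε : 0 < ε) (hε1 : ε ≤ 1) (hV0 : 0 ≤ V)
    (hV : ∀ s, ‖(ω s).1‖ ≤ V) (hβ : 0 ≤ β) (hB : ∀ u, ‖B u‖ ≤ β * ‖u‖)
    (hχ0 : ∀ x, 0 ≤ χ x) (hχ1 : ∀ x, χ x ≤ 1) (hτ : 0 ≤ τ)
    (hχ : ∀ x y, |χ x - χ y| ≤ τ * dist x y) (x y : Euc n) :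
    dist (defo d ω B χ ε x) (defo d ω B χ ε y) ≤ (1 + β * τ + 3 * (β * V)) /
      max (max (lowGap d (coords ω x)) ε) (max (lowGap d (coords ω y)) ε) * dist x y := by
  set m := max (max (lowGap d (coords ω x)) ε) (max (lowGap d (coords ω y)) ε) with hm
  have hm0 : 0 < m := (hε.trans_le (le_max_right _ _)).trans_le (le_max_left _ _)
  have hm1 : m ≤ 1 := max_le (max_le (lowGap_le_one hdn _) hε1) (max_le (lowGap_le_one hdn _) hε1)
  set D := gridPush d ε (coords ω x) with hD
  set D' := gridPush d ε (coords ω y) with hD'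
  have h1 : ‖B D‖ ≤ β := (hB D).trans (by
    simpa using mul_le_mul_of_nonneg_left (gridPush_norm hdn hε hε1 (coords ω x)) hβ)
  have h2 : ‖B (D - D')‖ ≤ β * (3 * (V * dist x y) / m) := by
    refine (hB _).trans ?_
    rw [← dist_eq_norm]
    have h3 := gridPush_lip hdn hε hε1 (coords ω x) (coords ω y)
    have h4 := coords_lip hV0 hV x y
    gcongr
    exact h3.trans (by gcongr)
  have hid : defo d ω B χ ε x - defo d ω B χ ε y =
      (x - y) + (χ x - χ y) • B D + χ y • B (D - D') := by
    simp only [defo, ← hD, ← hD', map_sub, sub_smul, smul_sub]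
    abel
  have h5 : dist x y ≤ dist x y / m := le_div_self dist_nonneg hm0 hm1
  rw [dist_eq_norm, hid]
  calc ‖(x - y) + (χ x - χ y) • B D + χ y • B (D - D')‖
      ≤ ‖x - y‖ + |χ x - χ y| * ‖B D‖ + |χ y| * ‖B (D - D')‖ := by
        refine (norm_add₃_le).trans ?_
        rw [norm_smul, norm_smul, Real.norm_eq_abs, Real.norm_eq_abs]
    _ ≤ dist x y + τ * dist x y * β + 1 * (β * (3 * (V * dist x y) / m)) := by
        rw [← dist_eq_norm]
        gcongr
        · exact hχ x y
        · rw [abs_of_nonneg (hχ0 y)]; exact hχ1 y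
    _ ≤ dist x y / m + τ * (dist x y / m) * β + 1 * (β * (3 * (V * dist x y) / m)) := by
        gcongr
    _ = _ := by ring

lemma defo_dist {n d : ℕ} (hdn : d < n) (ω : Frame n) (B : (Fin n → ℝ) →ₗ[ℝ] Euc n)
    (χ : Euc n → ℝ) {ε β : ℝ} (hε : 0 < ε) (hε1 : ε ≤ 1) (hβ : 0 ≤ β) (hB : ∀ u, ‖B u‖ ≤ β * ‖u‖)
    (hχ0 : ∀ x, 0 ≤ χ x) (hχ1 : ∀ x, χ x ≤ 1) (x : Euc n) : dist (defo d ω B χ ε x) x ≤ β := by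
  rw [dist_eq_norm, defo, add_sub_cancel_left, norm_smul, Real.norm_eq_abs, abs_of_nonneg (hχ0 x)]
  have h1 : ‖B (gridPush d ε (coords ω x))‖ ≤ β := (hB _).trans (by
    simpa using mul_le_mul_of_nonneg_left (gridPush_norm hdn hε hε1 (coords ω x)) hβ)
  calc χ x * ‖B (gridPush d ε (coords ω x))‖ ≤ 1 * β := by gcongr; exact hχ1 x
    _ = β := one_mul β

/-- The frame with its affine functions decreased by even integers, which recentres the grid. -/
def shiftF {n : ℕ} (ω : Frame n) (k : Fin n → ℤ) : Frame n :=
  fun i => ((ω i).1, (ω i).2 - 2 * k i)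

lemma ell_shiftF {n : ℕ} (ω : Frame n) (k : Fin n → ℤ) (i : Fin n) (x : Euc n) :
    ell (shiftF ω k) i x = ell ω i x - 2 * k i := by simp [ell, shiftF]; ring

lemma NonDeg.shiftF {n : ℕ} {ω : Frame n} {c : ℝ} (h : NonDeg ω c) (k : Fin n → ℤ) :
    NonDeg (shiftF ω k) c := h

lemma trunc_quot {q p : ℝ} (hp : p ≠ 0) :
    q / max |p| |q| = (if 0 < p then 1 else -1) * (q / p / max 1 |q / p|) := by
  have hp' : 0 < |p| := abs_pos.2 hp
  have h1 : max |p| |q| = |p| * max 1 |q / p| := by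
    rw [mul_max_of_nonneg _ _ hp'.le, mul_one, abs_div, mul_div_cancel₀ _ hp'.ne']
  have h2 : 0 < max 1 |q / p| := zero_lt_one.trans_le (le_max_left _ _)
  rw [h1]
  split_ifs with h
  · rw [abs_of_pos h]; field_simp
  · rw [abs_of_neg (lt_of_le_of_ne (not_lt.1 h) hp)]; field_simp

/-- On the part of `K` away from the dual skeleton, the retraction factors locally through the
projective maps of shifted frames, so its image is null. -/
lemma defo_null {n d : ℕ} (hdn : d < n) (ω : Frame n) (B : (Fin n → ℝ) →ₗ[ℝ] Euc n)
    (hBx : ∀ x, B (fun i => ⟪(ω i).1, x⟫_ℝ) = x)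
    (χ : Euc n → ℝ) (K : Set (Euc n)) (hχ : ∀ x ∈ K, χ x = 1) {ε c : ℝ} (hε : 0 < ε)
    (hc : 0 < c) (hnd : NonDeg ω c) (hgood : ∀ k, GoodFrame n d K (shiftF ω k)) :
    μH[(d : ℝ)] (defo d ω B χ ε '' {x ∈ K | ε < lowGap d (coords ω x)}) = 0 := by
  set G : (Fin d → Fin n) × (Fin n → ℤ) × (Fin n → ℤ) × ℤ → (Fin d → ℝ) → Euc n := fun p z =>
    B (fun t => Function.extend p.1 (fun i => 2 * (p.2.1 (p.1 i) : ℝ) +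
      p.2.2.2 * (z i / max 1 |z i|)) (fun t => (p.2.2.1 t : ℝ)) t - (ω t).2) with hG
  have hGnull : ∀ p, Function.Injective p.1 → ∀ N : Set (Fin d → ℝ), volume N = 0 →
      μH[(d : ℝ)] (G p '' N) = 0 := by
    rintro ⟨I, k, e, σ⟩ hI N hN
    set B' := LinearMap.toContinuousLinearMap B with hB'
    have hlip : ∀ z ∈ N, ∀ z' ∈ N, dist (G (I, k, e, σ) z) (G (I, k, e, σ) z') ≤
        (‖B'‖ * (|(σ : ℝ)| * 2)) * dist z z' := by
      intro z _ z' _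
      rw [dist_eq_norm]
      simp only [hG]
      rw [← map_sub]
      refine (B'.le_opNorm _).trans ?_
      rw [mul_assoc]
      gcongr
      refine (pi_norm_le_iff_of_nonneg (by positivity)).2 fun t => ?_
      rw [Pi.sub_apply, sub_sub_sub_cancel_right]
      by_cases ht : ∃ i, I i = t
      · obtain ⟨i, rfl⟩ := ht
        rw [hI.extend_apply, hI.extend_apply, add_sub_add_left_eq_sub, ← mul_sub, norm_mul,
          Real.norm_eq_abs, mul_assoc]
        gcongr
        have h := trunc_lip (q := z i) (q' := z' i) (M := 1) (M' := 1) (Δ := dist z z') one_pos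
          one_pos (dist_le_pi_dist z z' i) (by simp)
        simpa using h
      · rw [Function.extend_apply' _ _ _ ht, Function.extend_apply' _ _ _ ht, sub_self, norm_zero]
        positivity
    have h := hausdorff_image_le_image (G (I, k, e, σ)) (id : (Fin d → ℝ) → (Fin d → ℝ)) N _
      (by positivity) d hlip
    rw [image_id] at h
    have h2 : (μH[(d : ℝ)] : Measure (Fin d → ℝ)) = volume := by
      have := hausdorffMeasure_pi_real (ι := Fin d)
      rwa [Fintype.card_fin] at this
    rw [h2, hN, mul_zero] at h
    exact le_antisymm h zero_le
  set good := {p : ((Fin d → Fin n) × (Fin n → ℤ) × (Fin n → ℤ) × ℤ) × Fin n //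
    Function.Injective p.1.1 ∧ p.2 ∉ range p.1.1}
  have hsub : defo d ω B χ ε '' {x ∈ K | ε < lowGap d (coords ω x)} ⊆
      ⋃ p : good, G p.1.1 '' (proj p.1.1.1 p.1.2 (shiftF ω p.1.1.2.1) ''
        slab K p.1.2 (shiftF ω p.1.1.2.1) ε) := by
    rintro _ ⟨x, ⟨hxK, hxm⟩, rfl⟩
    set y := coords ω x with hy
    have hm0 : 0 < lowGap d y := hε.trans hxm
    obtain ⟨I, hI, j, hj, hjm, hout⟩ := lowGap_indices hdn y hm0
    set k : Fin n → ℤ := fun i => round (y i / 2) with hk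
    set e : Fin n → ℤ := fun t => 2 * k t + if 0 < cellOff (y t) then 1 else -1 with he
    set σ : ℤ := if 0 < cellOff (y j) then 1 else -1 with hσ
    have hell : ∀ i, ell (shiftF ω k) i x = cellOff (y i) := fun i => by
      rw [ell_shiftF]; rfl
    have hqj : cellOff (y j) ≠ 0 := by rw [← abs_pos, hjm]; exact hm0
    refine mem_iUnion.2 ⟨⟨((I, k, e, σ), j), hI, hj⟩, _, ⟨x, ⟨hxK, ?_⟩, rfl⟩, ?_⟩
    · change ε ≤ |ell (shiftF ω k) j x|
      rw [hell, hjm]; exact hxm.le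
    · simp only [hG, defo]
      rw [hχ x hxK, one_smul]
      have hx2 : x + B (gridPush d ε (coords ω x)) =
          B ((fun i => ⟪(ω i).1, x⟫_ℝ) + gridPush d ε (coords ω x)) := by rw [map_add, hBx]
      rw [hx2]
      congr 1
      funext t
      have hyt : y t = ⟪(ω t).1, x⟫_ℝ + (ω t).2 := rfl
      have hmax : max (lowGap d y) ε = lowGap d y := max_eq_left hxm.le
      have hpush : gridPush d ε y t = cellOff (y t) / max (lowGap d y) |cellOff (y t)| -
          cellOff (y t) := by
        simp only [gridPush, push1, hmax]
      have hcell : y t - cellOff (y t) = 2 * (k t : ℝ) := by simp only [cellOff, hk]; ring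
      rw [Pi.add_apply, hpush]
      have hval : Function.extend I (fun i => 2 * (k (I i) : ℝ) +
          (σ : ℝ) * (proj I j (shiftF ω k) x i / max 1 |proj I j (shiftF ω k) x i|))
          (fun t => (e t : ℝ)) t = 2 * (k t : ℝ) +
            cellOff (y t) / max (lowGap d y) |cellOff (y t)| := by
        by_cases ht : ∃ i, I i = t
        · obtain ⟨i, rfl⟩ := ht
          rw [hI.extend_apply, ← hjm, trunc_quot hqj]
          simp only [proj, hell, hσ]
          push_cast
          rfl
        · rw [Function.extend_apply' _ _ _ ht]
          have h1 := hout t (fun h => ht h)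
          rw [max_eq_right h1]
          have h2 : cellOff (y t) ≠ 0 := abs_pos.1 (hm0.trans_le h1)
          simp only [he]
          push_cast
          congr 1
          split_ifs with h3
          · rw [abs_of_pos h3, div_self h2]
          · rw [abs_of_neg (lt_of_le_of_ne (not_lt.1 h3) h2), div_neg, div_self h2]
      rw [hval]
      linarith
  refine measure_mono_null hsub (measure_iUnion_null fun p => ?_)
  exact hGnull _ p.2.1 _ (hgood _ ⟨c, hc, hnd.shiftF _⟩ _ p.2.1 _ p.2.2 ε hε)

/-! ### Averaging over the position of the grid -/

/-- The set of frames over which the grid is averaged: linear parts near those given by `c`, and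
constant parts in a full period. -/
def box {n : ℕ} (c : Fin n → Euc n) (ρ : ℝ) : Set (Frame n) :=
  Set.pi univ fun i => ball (c i) ρ ×ˢ Ico (0 : ℝ) 2

lemma abs_cellOff_continuous : Continuous fun y : ℝ => |cellOff y| :=
  (LipschitzWith.of_dist_le_mul (K := 1) fun y y' => by
    have h1 := abs_cellOff_lip y y'
    have h2 := abs_cellOff_lip y' y
    rw [abs_sub_comm] at h2
    rw [NNReal.coe_one, one_mul, Real.dist_eq, Real.dist_eq, abs_le]
    constructor <;> linarith).continuous

lemma gap_slice (a t : ℝ) (ht : 0 ≤ t) :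
    volume {b : ℝ | b ∈ Ico (0 : ℝ) 2 ∧ |cellOff (a + b)| ≤ t} ≤ ENNReal.ofReal (6 * t) := by
  set k0 := round (a / 2) with hk0
  have hsub : {b : ℝ | b ∈ Ico (0 : ℝ) 2 ∧ |cellOff (a + b)| ≤ t} ⊆
      closedBall (2 * (k0 - 1) - a) t ∪ (closedBall (2 * k0 - a) t ∪
        closedBall (2 * (k0 + 1) - a) t) := by
    rintro b ⟨⟨hb0, hb2⟩, hb⟩
    have h1 := abs_le.1 (abs_cellOff_le_one a)
    have h2 := abs_le.1 (abs_cellOff_le_one (a + b))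
    set k := round ((a + b) / 2) with hk
    have e1 : cellOff a = a - 2 * k0 := rfl
    have e2 : cellOff (a + b) = a + b - 2 * k := rfl
    rw [e1] at h1
    rw [e2] at h2 hb
    have h3 : (k : ℝ) - k0 < 2 := by linarith
    have h4 : (-2 : ℝ) < k - k0 := by linarith
    have h3' : k - k0 < 2 := by exact_mod_cast h3
    have h4' : -2 < k - k0 := by exact_mod_cast h4
    have h5 : k = k0 - 1 ∨ k = k0 ∨ k = k0 + 1 := by omega
    rcases h5 with h | h | h
    · left
      rw [mem_closedBall, Real.dist_eq]
      rw [h] at hb; push_cast at hb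
      convert hb using 2; ring
    · right; left
      rw [mem_closedBall, Real.dist_eq]
      rw [h] at hb
      convert hb using 2; ring
    · right; right
      rw [mem_closedBall, Real.dist_eq]
      rw [h] at hb; push_cast at hb
      convert hb using 2; ring
  refine (measure_mono hsub).trans ((measure_union_le _ _).trans
    ((add_le_add le_rfl (measure_union_le _ _)).trans ?_))
  rw [Real.volume_closedBall, Real.volume_closedBall, Real.volume_closedBall,
    ← ENNReal.ofReal_add (by positivity) (by positivity),
    ← ENNReal.ofReal_add (by positivity) (by positivity)]
  exact ENNReal.ofReal_le_ofReal (by linarith)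

lemma gap_coord {n : ℕ} (c x : Euc n) (ρ t : ℝ) (ht : 0 ≤ t) :
    volume {p : Euc n × ℝ | p ∈ ball c ρ ×ˢ Ico (0 : ℝ) 2 ∧ |cellOff (⟪p.1, x⟫_ℝ + p.2)| ≤ t} ≤
      ENNReal.ofReal (3 * t) * volume (ball c ρ ×ˢ Ico (0 : ℝ) 2) := by
  have hm : MeasurableSet
      {p : Euc n × ℝ | p ∈ ball c ρ ×ˢ Ico (0 : ℝ) 2 ∧ |cellOff (⟪p.1, x⟫_ℝ + p.2)| ≤ t} := by
    refine (measurableSet_ball.prod measurableSet_Ico).inter ?_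
    have h : Continuous fun p : Euc n × ℝ => |cellOff (⟪p.1, x⟫_ℝ + p.2)| :=
      abs_cellOff_continuous.comp (by fun_prop)
    exact (isClosed_le h continuous_const).measurableSet
  rw [Measure.volume_eq_prod, Measure.prod_apply hm, Measure.prod_prod]
  calc ∫⁻ v, volume (Prod.mk v ⁻¹'
        {p : Euc n × ℝ | p ∈ ball c ρ ×ˢ Ico (0 : ℝ) 2 ∧ |cellOff (⟪p.1, x⟫_ℝ + p.2)| ≤ t})
      ≤ ∫⁻ v, (ball c ρ).indicator (fun _ => ENNReal.ofReal (6 * t)) v := by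
        refine lintegral_mono fun v => ?_
        by_cases hv : v ∈ ball c ρ
        · rw [indicator_of_mem hv]
          refine (measure_mono ?_).trans (gap_slice ⟪v, x⟫_ℝ t ht)
          exact fun b hb => ⟨hb.1.2, hb.2⟩
        · rw [indicator_of_notMem hv]
          refine (measure_mono_null ?_ measure_empty).le
          exact fun b hb => hv hb.1.1
    _ = ENNReal.ofReal (6 * t) * volume (ball c ρ) := by
        rw [lintegral_indicator_const measurableSet_ball]
    _ = ENNReal.ofReal (3 * t) * (volume (ball c ρ) * volume (Ico (0 : ℝ) 2)) := by
        rw [Real.volume_Ico, show 6 * t = 3 * t * (2 - 0) by ring,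
          ENNReal.ofReal_mul (by positivity)]
        ring

/-- A fixed point is close to the dual skeleton of codimension `d + 1` for few frames. -/
lemma gap_box {n d : ℕ} (hdn : d < n) (c : Fin n → Euc n) (ρ t : ℝ) (ht : 0 ≤ t) (x : Euc n) :
    volume {ω ∈ box c ρ | lowGap d (coords ω x) ≤ t} ≤
      2 ^ n * ENNReal.ofReal (3 * t) ^ (d + 1) * volume (box c ρ) := by
  classical
  set T : Fin n → Set (Euc n × ℝ) := fun i => ball (c i) ρ ×ˢ Ico (0 : ℝ) 2 with hT
  set S : Finset (Fin n) → Fin n → Set (Euc n × ℝ) := fun J i =>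
    if i ∈ J then {p | p ∈ T i ∧ |cellOff (⟪p.1, x⟫_ℝ + p.2)| ≤ t} else T i with hS
  have hsub : {ω ∈ box c ρ | lowGap d (coords ω x) ≤ t} ⊆
      ⋃ J ∈ Finset.powersetCard (d + 1) (Finset.univ : Finset (Fin n)), Set.pi univ (S J) := by
    rintro ω ⟨hω, hle⟩
    obtain ⟨-, J, hJ, h⟩ := lowGap_spec hdn (coords ω x)
    refine mem_iUnion₂.2 ⟨J, Finset.mem_powersetCard.2 ⟨Finset.subset_univ _, hJ⟩, fun i _ => ?_⟩
    simp only [hS]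
    split_ifs with hi
    · exact ⟨hω i (mem_univ i), (h i hi).trans hle⟩
    · exact hω i (mem_univ i)
  have hJ : ∀ J ∈ Finset.powersetCard (d + 1) (Finset.univ : Finset (Fin n)),
      volume (Set.pi univ (S J)) ≤ ENNReal.ofReal (3 * t) ^ (d + 1) * volume (box c ρ) := by
    intro J hJ
    rw [box, volume_pi_pi, volume_pi_pi]
    calc ∏ i, volume (S J i)
        ≤ ∏ i, ((if i ∈ J then ENNReal.ofReal (3 * t) else 1) * volume (T i)) := by
          refine Finset.prod_le_prod' fun i _ => ?_
          simp only [hS]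
          split_ifs with hi
          · exact gap_coord (c i) x ρ t ht
          · rw [one_mul]
      _ = _ := by
          rw [Finset.prod_mul_distrib, Finset.prod_ite_mem, Finset.univ_inter, Finset.prod_const,
            (Finset.mem_powersetCard.1 hJ).2]
  calc volume {ω ∈ box c ρ | lowGap d (coords ω x) ≤ t}
      ≤ ∑ J ∈ Finset.powersetCard (d + 1) (Finset.univ : Finset (Fin n)),
          volume (Set.pi univ (S J)) := (measure_mono hsub).trans (measure_biUnion_finset_le _ _)
    _ ≤ ∑ J ∈ Finset.powersetCard (d + 1) (Finset.univ : Finset (Fin n)),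
          ENNReal.ofReal (3 * t) ^ (d + 1) * volume (box c ρ) := Finset.sum_le_sum hJ
    _ ≤ _ := by
        rw [Finset.sum_const, nsmul_eq_mul, Finset.card_powersetCard, Finset.card_univ,
          Fintype.card_fin, ← mul_assoc]
        gcongr
        exact_mod_cast Nat.choose_le_two_pow n (d + 1)

lemma coords_continuous {n : ℕ} : Continuous fun z : Frame n × Euc n => coords z.1 z.2 := by
  unfold coords; fun_prop

lemma gap_measurable {n d : ℕ} (hdn : d < n) (t : ℝ) :
    MeasurableSet {z : Frame n × Euc n | lowGap d (coords z.1 z.2) ≤ t} :=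
  (isClosed_le ((lowGap_continuous hdn).comp coords_continuous) continuous_const).measurableSet

lemma box_measurable {n : ℕ} (c : Fin n → Euc n) (ρ : ℝ) : MeasurableSet (box c ρ) :=
  MeasurableSet.univ_pi fun _ => measurableSet_ball.prod measurableSet_Ico

/-- On average over the frames, few points of a set are close to the dual skeleton. -/
lemma gap_avg {n d : ℕ} (hdn : d < n) (c : Fin n → Euc n) (ρ t : ℝ) (ht : 0 ≤ t)
    (μ : Measure (Euc n)) [SFinite μ] :
    ∫⁻ ω in box c ρ, μ {x | lowGap d (coords ω x) ≤ t} ≤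
      2 ^ n * ENNReal.ofReal (3 * t) ^ (d + 1) * volume (box c ρ) * μ univ := by
  have h1 := Measure.prod_apply (μ := volume.restrict (box c ρ)) (ν := μ) (gap_measurable hdn t)
  have h2 := Measure.prod_apply_symm (μ := volume.restrict (box c ρ)) (ν := μ)
    (gap_measurable hdn t)
  change _ = ∫⁻ ω in box c ρ, μ {x | lowGap d (coords ω x) ≤ t} at h1
  rw [← h1, h2, ← lintegral_const]
  refine lintegral_mono fun x => ?_
  rw [Measure.restrict_apply' (box_measurable c ρ)]
  refine (measure_mono ?_).trans (gap_box hdn c ρ t ht x)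
  exact fun ω hω => ⟨hω.2, hω.1⟩

lemma gap_section_measurable {n d : ℕ} (hdn : d < n) (t : ℝ) (μ : Measure (Euc n)) [SFinite μ] :
    Measurable fun ω : Frame n => μ {x | lowGap d (coords ω x) ≤ t} :=
  measurable_measure_prodMk_left (gap_measurable hdn t)

/-! ### A minimal set carries no purely unrectifiable part -/

/-- Cost of a map whose local Lipschitz constant is controlled by `1 / g`. -/
lemma cost_le {n d : ℕ} (φ : Euc n → Euc n) (g : Euc n → ℝ) (hg1 : ∀ x, g x ≤ 1) {C : ℝ}
    (hC : 0 ≤ C) (k0 : ℕ)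
    (hlip : ∀ x y, dist (φ x) (φ y) ≤
      C / max (max (g x) ((1 / 2) ^ k0)) (max (g y) ((1 / 2) ^ k0)) * dist x y)
    (A : Set (Euc n)) :
    μH[(d : ℝ)] (φ '' A) ≤ ∑ k ∈ Finset.range (k0 + 1),
      ENNReal.ofReal ((C * 2 ^ (k + 1)) ^ d) * μH[(d : ℝ)] (A ∩ {x | g x ≤ (1 / 2) ^ k}) := by
  set Ak : ℕ → Set (Euc n) := fun k =>
    {x ∈ A | g x ≤ (1 / 2) ^ k ∧ (1 / 2) ^ (k + 1) < max (g x) ((1 / 2) ^ k0)} with hAk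
  have hcov : φ '' A ⊆ ⋃ k ∈ Finset.range (k0 + 1), φ '' Ak k := by
    rintro _ ⟨x, hx, rfl⟩
    have h0 : (0 : ℝ) < (1 / 2) ^ k0 := by positivity
    obtain ⟨k, hk1, hk2⟩ := exists_nat_pow_near_of_lt_one
      (h0.trans_le (le_max_right (g x) _))
      (max_le (hg1 x) (pow_le_one₀ (by norm_num) (by norm_num)))
      (by norm_num : (0 : ℝ) < 1 / 2) (by norm_num)
    refine mem_iUnion₂.2 ⟨k, ?_, x, ⟨hx, (le_max_left _ _).trans hk2, hk1⟩, rfl⟩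
    rw [Finset.mem_range, Nat.lt_succ_iff]
    by_contra hlt
    push Not at hlt
    have := pow_lt_pow_right_of_lt_one₀ (by norm_num : (0 : ℝ) < 1 / 2) (by norm_num) hlt
    exact absurd ((le_max_right (g x) _).trans hk2) (not_le.2 this)
  refine (measure_mono hcov).trans ((measure_biUnion_finset_le _ _).trans
    (Finset.sum_le_sum fun k _ => ?_))
  have h1 := hausdorff_image_le_image φ (id : Euc n → Euc n) (Ak k) (C * 2 ^ (k + 1))
    (by positivity) d (by
      intro x hx y _
      refine (hlip x y).trans ?_
      change _ ≤ C * 2 ^ (k + 1) * dist x y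
      gcongr
      rw [div_eq_mul_inv]
      gcongr
      rw [inv_le_comm₀ (by positivity) (by positivity), ← inv_pow, ← one_div]
      exact hx.2.2.le.trans (le_max_left _ _))
  rw [image_id] at h1
  refine h1.trans ?_
  gcongr
  exact fun x hx => ⟨hx.1, hx.2.1⟩

lemma cost_low {n d : ℕ} (φ : Euc n → Euc n) (g : Euc n → ℝ) {C ε : ℝ}
    (hC : 0 ≤ C) (hε : 0 < ε)
    (hlip : ∀ x y, dist (φ x) (φ y) ≤ C / max (max (g x) ε) (max (g y) ε) * dist x y)
    (A : Set (Euc n)) :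
    μH[(d : ℝ)] (φ '' A) ≤ ENNReal.ofReal ((C / ε) ^ d) * μH[(d : ℝ)] A := by
  have h1 := hausdorff_image_le_image φ (id : Euc n → Euc n) A (C / ε)
    (by positivity) d (by
      intro x _ y _
      refine (hlip x y).trans ?_
      change _ ≤ C / ε * dist x y
      gcongr
      exact (le_max_right _ _).trans (le_max_left _ _))
  rwa [image_id] at h1

/-- The average cost of the retractions over the box of frames. -/
lemma avg_cost {n d : ℕ} (hdn : d < n) (c : Fin n → Euc n) (ρ : ℝ) {C : ℝ} (hC : 0 ≤ C) (k0 : ℕ)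
    (μ ν : Measure (Euc n)) [SFinite μ] [SFinite ν] {Q : ℝ}
    (hQ : Q = 2 ^ n * 3 ^ (d + 1) * (2 * C) ^ d) :
    ∫⁻ ω in box c ρ, (2 * (ENNReal.ofReal ((C / (1 / 2) ^ k0) ^ d) *
        μ {x | lowGap d (coords ω x) ≤ (1 / 2) ^ k0}) +
      ∑ k ∈ Finset.range (k0 + 1), ENNReal.ofReal ((C * 2 ^ (k + 1)) ^ d) *
        ν {x | lowGap d (coords ω x) ≤ (1 / 2) ^ k}) ≤
    volume (box c ρ) * (ENNReal.ofReal (2 * Q * (1 / 2) ^ k0) * μ univ +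
      ENNReal.ofReal (2 * Q) * ν univ) := by
  have hQ0 : 0 ≤ Q := by rw [hQ]; positivity
  have hm : ∀ (t : ℝ) (κ : Measure (Euc n)) [SFinite κ],
      Measurable fun ω : Frame n => κ {x | lowGap d (coords ω x) ≤ t} :=
    fun t κ _ => gap_section_measurable hdn t κ
  -- one term of the sum
  have hterm : ∀ (a t s : ℝ) (κ : Measure (Euc n)) [SFinite κ], 0 ≤ a → 0 ≤ t →
      2 ^ n * (a * (3 * t) ^ (d + 1)) ≤ s →
      ∫⁻ ω in box c ρ, ENNReal.ofReal a * κ {x | lowGap d (coords ω x) ≤ t} ≤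
        volume (box c ρ) * (ENNReal.ofReal s * κ univ) := by
    intro a t s κ _ ha ht hs
    rw [lintegral_const_mul _ (hm t κ)]
    calc ENNReal.ofReal a * ∫⁻ ω in box c ρ, κ {x | lowGap d (coords ω x) ≤ t}
        ≤ ENNReal.ofReal a * (2 ^ n * ENNReal.ofReal (3 * t) ^ (d + 1) * volume (box c ρ) *
            κ univ) := by gcongr; exact gap_avg hdn c ρ t ht κ
      _ = volume (box c ρ) * (ENNReal.ofReal (2 ^ n * (a * (3 * t) ^ (d + 1))) * κ univ) := by
          rw [ENNReal.ofReal_mul (by positivity : (0 : ℝ) ≤ 2 ^ n), ENNReal.ofReal_mul ha,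
            ENNReal.ofReal_pow (by norm_num : (0 : ℝ) ≤ 2),
            ENNReal.ofReal_pow (by positivity : 0 ≤ 3 * t), ENNReal.ofReal_ofNat 2]
          ring
      _ ≤ _ := by gcongr
  rw [lintegral_add_left (((hm _ μ).const_mul _).const_mul _), lintegral_const_mul _
    ((hm _ μ).const_mul _), lintegral_finsetSum _ (fun k _ => (hm _ ν).const_mul _), mul_add]
  refine add_le_add ?_ ?_
  · calc 2 * ∫⁻ ω in box c ρ, ENNReal.ofReal ((C / (1 / 2) ^ k0) ^ d) *
          μ {x | lowGap d (coords ω x) ≤ (1 / 2) ^ k0}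
        ≤ 2 * (volume (box c ρ) * (ENNReal.ofReal (Q * (1 / 2) ^ k0) * μ univ)) := by
          gcongr
          refine hterm _ _ _ μ (by positivity) (by positivity) ?_
          rw [hQ]
          have h2 : (1 : ℝ) ≤ 2 ^ d := one_le_pow₀ (by norm_num)
          set e : ℝ := (1 / 2) ^ k0 with he
          have he0 : 0 < e := by positivity
          calc 2 ^ n * ((C / e) ^ d * (3 * e) ^ (d + 1)) =
                1 * (2 ^ n * 3 ^ (d + 1) * C ^ d * e) := by
                rw [div_pow, mul_pow, pow_succ e d]; field_simp
            _ ≤ 2 ^ d * (2 ^ n * 3 ^ (d + 1) * C ^ d * e) := by gcongr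
            _ = _ := by rw [mul_pow]; ring
      _ = _ := by
          rw [show 2 * Q * (1 / 2 : ℝ) ^ k0 = 2 * (Q * (1 / 2) ^ k0) by ring,
            ENNReal.ofReal_mul (by norm_num : (0 : ℝ) ≤ 2), ENNReal.ofReal_ofNat]
          ring
  · calc ∑ k ∈ Finset.range (k0 + 1), ∫⁻ ω in box c ρ, ENNReal.ofReal ((C * 2 ^ (k + 1)) ^ d) *
          ν {x | lowGap d (coords ω x) ≤ (1 / 2) ^ k}
        ≤ ∑ k ∈ Finset.range (k0 + 1),
            volume (box c ρ) * (ENNReal.ofReal (Q * (1 / 2) ^ k) * ν univ) := by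
          refine Finset.sum_le_sum fun k _ => ?_
          refine hterm _ _ _ ν (by positivity) (by positivity) ?_
          rw [hQ]
          refine le_of_eq ?_
          have h1 : (2 : ℝ) ^ k * (1 / 2) ^ k = 1 := by rw [← mul_pow]; norm_num
          calc 2 ^ n * ((C * 2 ^ (k + 1)) ^ d * (3 * (1 / 2 : ℝ) ^ k) ^ (d + 1))
              = 2 ^ n * 3 ^ (d + 1) * (2 * C) ^ d * (1 / 2) ^ k * (2 ^ k * (1 / 2) ^ k) ^ d := by
                rw [pow_succ (2 : ℝ) k]; ring
            _ = _ := by rw [h1, one_pow, mul_one]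
      _ = volume (box c ρ) * (ENNReal.ofReal (∑ k ∈ Finset.range (k0 + 1), Q * (1 / 2) ^ k) *
            ν univ) := by
          rw [ENNReal.ofReal_sum_of_nonneg fun k _ => by positivity, ← Finset.mul_sum,
            ← Finset.sum_mul]
      _ ≤ _ := by
          gcongr
          rw [← Finset.mul_sum, mul_comm 2 Q]
          gcongr
          exact sum_geometric_two_le _

lemma goodFrame_shift_ae {n d : ℕ} (hd : 1 ≤ d) (K : Set (Euc n)) (hK : IsCompact K)
    (hfin : μH[(d : ℝ)] K ≠ ⊤)
    (hgr : ∀ P, GraphPiece n d P → P ⊆ K → μH[(d : ℝ)] P = 0) :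
    ∀ᵐ ω : Frame n, ∀ k, GoodFrame n d K (shiftF ω k) := by
  have := frame_isAddHaar n
  rw [ae_all_iff]
  intro k
  set v : Frame n := fun i => (0, -(2 * (k i : ℝ))) with hv
  have h := (measurePreserving_add_right (volume : Measure (Frame n)) v).quasiMeasurePreserving.ae
    (goodFrame_ae hd K hK hfin hgr)
  filter_upwards [h] with ω hω
  have : ω + v = shiftF ω k := by
    funext i
    simp [hv, shiftF, Prod.ext_iff, sub_eq_add_neg]
  rwa [this] at hω

lemma exists_coord {n : ℕ} (hn : 0 < n) (w : Euc n) : ∃ s, ‖w‖ ≤ n * |w s| := by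
  have : Nonempty (Fin n) := ⟨⟨0, hn⟩⟩
  obtain ⟨s, hs⟩ := Finite.exists_max fun s => |w s|
  refine ⟨s, ?_⟩
  rw [EuclideanSpace.norm_eq]
  refine Real.sqrt_le_iff.2 ⟨by positivity, ?_⟩
  have hn1 : (1 : ℝ) ≤ n := by exact_mod_cast hn
  calc ∑ i, ‖w i‖ ^ 2 ≤ ∑ _i : Fin n, |w s| ^ 2 := by
        refine Finset.sum_le_sum fun i _ => ?_
        rw [Real.norm_eq_abs]
        have := hs i
        gcongr
    _ = n * |w s| ^ 2 := by simp
    _ ≤ n * (n * |w s| ^ 2) := le_mul_of_one_le_left (by positivity) hn1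
    _ = _ := by ring

lemma box_nonDeg {n : ℕ} (hn : 0 < n) {δ : ℝ} (hδ : 0 < δ) (ω : Frame n)
    (hω : ω ∈ box (fun i => (2 * n / δ) • EuclideanSpace.single i (1 : ℝ)) (1 / δ)) :
    NonDeg ω (1 / δ) ∧ ∀ s, ‖(ω s).1‖ ≤ (2 * n + 1) / δ := by
  have hb : ∀ s, ‖(ω s).1 - (2 * n / δ) • EuclideanSpace.single s (1 : ℝ)‖ < 1 / δ := fun s => by
    have := (hω s (mem_univ s)).1
    rwa [mem_ball, dist_eq_norm] at this
  refine ⟨fun w => ?_, fun s => ?_⟩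
  · obtain ⟨s, hs⟩ := exists_coord hn w
    refine ⟨s, ?_⟩
    set u := (ω s).1 - (2 * n / δ) • EuclideanSpace.single s (1 : ℝ) with hu
    have h1 : ⟪(ω s).1, w⟫_ℝ = ⟪u, w⟫_ℝ + 2 * n / δ * w s := by
      have : (ω s).1 = u + (2 * n / δ) • EuclideanSpace.single s (1 : ℝ) := by rw [hu]; abel
      rw [this, inner_add_left, inner_smul_left, EuclideanSpace.inner_single_left]
      simp
    have h2 : |⟪u, w⟫_ℝ| ≤ 1 / δ * ‖w‖ :=
      (abs_real_inner_le_norm _ _).trans (by gcongr; exact (hb s).le)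
    have h3 : |2 * n / δ * w s| ≤ |⟪(ω s).1, w⟫_ℝ| + |⟪u, w⟫_ℝ| := by
      have : 2 * n / δ * w s = ⟪(ω s).1, w⟫_ℝ - ⟪u, w⟫_ℝ := by rw [h1]; ring
      rw [this]; exact abs_sub _ _
    have h4 : |2 * n / δ * w s| = 2 / δ * (n * |w s|) := by
      rw [abs_mul, abs_of_nonneg (by positivity)]; ring
    have h5 : 2 / δ * ‖w‖ ≤ 2 / δ * (n * |w s|) := by gcongr
    have h6 : 2 / δ * ‖w‖ = 1 / δ * ‖w‖ + 1 / δ * ‖w‖ := by ring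
    linarith
  · have h1 : ‖(2 * n / δ) • EuclideanSpace.single s (1 : ℝ)‖ = 2 * n / δ := by
      rw [norm_smul, EuclideanSpace.norm_single, norm_one, mul_one, Real.norm_eq_abs,
        abs_of_nonneg (by positivity)]
    calc ‖(ω s).1‖ ≤ ‖(2 * n / δ) • EuclideanSpace.single s (1 : ℝ)‖ +
          ‖(ω s).1 - (2 * n / δ) • EuclideanSpace.single s (1 : ℝ)‖ := norm_le_norm_add_norm_sub' _ _
      _ ≤ 2 * n / δ + 1 / δ := by rw [h1]; gcongr; exact (hb s).le
      _ = _ := by ring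

lemma box_volume {n : ℕ} (c : Fin n → Euc n) {ρ : ℝ} (hρ : 0 < ρ) :
    volume (box c ρ) ≠ 0 ∧ volume (box c ρ) ≠ ⊤ := by
  have e : volume (box c ρ) = ∏ i, (volume (ball (c i) ρ) * volume (Ico (0 : ℝ) 2)) := by
    rw [box, volume_pi, Measure.pi_pi]
    exact Finset.prod_congr rfl fun i _ => Measure.prod_prod _ _
  rw [e]
  constructor
  · refine Finset.prod_ne_zero_iff.2 fun i _ => mul_ne_zero (measure_ball_pos _ _ hρ).ne' ?_
    simp
  · refine ENNReal.prod_ne_top fun i _ => ENNReal.mul_ne_top measure_ball_lt_top.ne ?_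
    simp

/-- First moment method: some frame of the box is good and costs no more than the average. -/
lemma exists_frame {n d : ℕ} (hd : 1 ≤ d) (hdn : d < n) (K : Set (Euc n)) (hK : IsCompact K)
    (hfin : μH[(d : ℝ)] K ≠ ⊤)
    (hgr : ∀ P, GraphPiece n d P → P ⊆ K → μH[(d : ℝ)] P = 0)
    (c : Fin n → Euc n) {ρ : ℝ} (hρ : 0 < ρ) {C : ℝ} (hC : 0 ≤ C) (k0 : ℕ)
    (μ ν : Measure (Euc n)) [SFinite μ] [SFinite ν] {Q : ℝ}
    (hQ : Q = 2 ^ n * 3 ^ (d + 1) * (2 * C) ^ d) :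
    ∃ ω ∈ box c ρ, (∀ k, GoodFrame n d K (shiftF ω k)) ∧
      2 * (ENNReal.ofReal ((C / (1 / 2) ^ k0) ^ d) *
        μ {x | lowGap d (coords ω x) ≤ (1 / 2) ^ k0}) +
      ∑ k ∈ Finset.range (k0 + 1), ENNReal.ofReal ((C * 2 ^ (k + 1)) ^ d) *
        ν {x | lowGap d (coords ω x) ≤ (1 / 2) ^ k} ≤
      ENNReal.ofReal (2 * Q * (1 / 2) ^ k0) * μ univ + ENNReal.ofReal (2 * Q) * ν univ := by
  obtain ⟨hv0, hvt⟩ := box_volume c hρ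
  have hae : ∀ᵐ ω ∂(volume.restrict (box c ρ)), ω ∈ box c ρ ∧
      ∀ k, GoodFrame n d K (shiftF ω k) :=
    (ae_restrict_mem (box_measurable c ρ)).and
      (ae_restrict_of_ae (goodFrame_shift_ae hd K hK hfin hgr))
  have hm : ∀ (t : ℝ) (κ : Measure (Euc n)) [SFinite κ],
      Measurable fun ω : Frame n => κ {x | lowGap d (coords ω x) ≤ t} :=
    fun t κ _ => gap_section_measurable hdn t κ
  have : IsFiniteMeasure ((volume : Measure (Frame n)).restrict (box c ρ)) :=
    ⟨by rw [Measure.restrict_apply_univ]; exact hvt.lt_top⟩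
  obtain ⟨ω, hωN, hω⟩ := exists_notMem_null_le_laverage
    (μ := volume.restrict (box c ρ)) (N := {ω | ¬ (ω ∈ box c ρ ∧
      ∀ k, GoodFrame n d K (shiftF ω k))})
    (f := fun ω => 2 * (ENNReal.ofReal ((C / (1 / 2) ^ k0) ^ d) *
        μ {x | lowGap d (coords ω x) ≤ (1 / 2) ^ k0}) +
      ∑ k ∈ Finset.range (k0 + 1), ENNReal.ofReal ((C * 2 ^ (k + 1)) ^ d) *
        ν {x | lowGap d (coords ω x) ≤ (1 / 2) ^ k})
    (by rw [Ne, Measure.restrict_eq_zero]; exact hv0)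
    ((((hm _ μ).const_mul _).const_mul _).add
      (Finset.measurable_sum _ fun k _ => (hm _ ν).const_mul _)).aemeasurable hae
  have hω' := not_not.1 hωN
  refine ⟨ω, hω'.1, hω'.2, hω.trans ?_⟩
  rw [laverage_eq, Measure.restrict_apply_univ]
  exact ENNReal.div_le_of_le_mul' (avg_cost hdn c ρ hC k0 μ ν hQ)

lemma minimal_inter_closed {n d : ℕ} {U E : Set (Euc n)} {h : ℝ → ℝ≥0∞}
    (hmin : IsAAlmostMinimal n d U E h) {z : Euc n} {r : ℝ} (hr : closedBall z r ⊆ U) :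
    IsClosed (E ∩ closedBall z r) := by
  have : E ∩ closedBall z r = closure E ∩ closedBall z r := by
    ext x
    exact ⟨fun hx => ⟨subset_closure hx.1, hx.2⟩, fun hx => ⟨hmin.2.1 ⟨hx.1, hr hx.2⟩, hx.2⟩⟩
  rw [this]
  exact isClosed_closure.inter isClosed_closedBall

/-- The part of a set of finite measure in a thin shell around a closed subset has small measure. -/
lemma exists_shell {n d : ℕ} (F K : Set (Euc n)) (hF : IsClosed F) (hK : IsClosed K)
    (hKne : K.Nonempty) (hFfin : μH[(d : ℝ)] F ≠ ⊤) {a : ℝ} (ha : 0 < a) {η : ℝ≥0∞} (hη : 0 < η) :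
    ∃ δ, 0 < δ ∧ δ ≤ a ∧ μH[(d : ℝ)] ({x ∈ F | infDist x K ≤ δ} \ K) < η := by
  set s : ℕ → Set (Euc n) := fun j => {x ∈ F | infDist x K ≤ 1 / ((j : ℝ) + 1)} \ K with hs
  have hmeas : ∀ δ, MeasurableSet ({x ∈ F | infDist x K ≤ δ} \ K) := fun δ =>
    ((hF.inter (isClosed_le (continuous_infDist_pt K) continuous_const)).measurableSet).diff
      hK.measurableSet
  have hlim := tendsto_measure_iInter_atTop (μ := (μH[(d : ℝ)] : Measure (Euc n))) (s := s)
    (fun j => (hmeas _).nullMeasurableSet)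
    (fun i j hij x hx => ⟨⟨hx.1.1, hx.1.2.trans (Nat.one_div_le_one_div hij)⟩, hx.2⟩)
    ⟨0, ne_top_of_le_ne_top hFfin (measure_mono fun x hx => hx.1.1)⟩
  have hempty : ⋂ j, s j = ∅ := by
    refine eq_empty_of_forall_notMem fun x hx => ?_
    rw [mem_iInter] at hx
    refine (hx 0).2 ((hK.mem_iff_infDist_zero hKne).2 (le_antisymm ?_ infDist_nonneg))
    exact ge_of_tendsto' tendsto_one_div_add_atTop_nhds_zero_nat fun j => (hx j).1.2
  rw [hempty, measure_empty] at hlim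
  obtain ⟨j, hj⟩ := (hlim.eventually (gt_mem_nhds hη)).exists
  refine ⟨min a (1 / ((j : ℝ) + 1)), lt_min ha (by positivity), min_le_left _ _,
    lt_of_le_of_lt (measure_mono ?_) hj⟩
  exact fun x hx => ⟨⟨hx.1.1, hx.1.2.trans (min_le_right _ _)⟩, hx.2⟩

/-- A purely unrectifiable compact part of a minimal set is null: a grid deformation would
otherwise crush it while adding little measure elsewhere. -/
lemma unrect_null {n d : ℕ} (hd : 1 ≤ d) (hdn : d < n) {U E : Set (Euc n)}
    (hmin : IsAAlmostMinimal n d U E (fun _ => 0)) {z : Euc n} {ρ r : ℝ} (hρr : ρ < r)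
    (hr : closedBall z r ⊆ U) (K : Set (Euc n)) (hK : IsCompact K)
    (hKE : K ⊆ E ∩ closedBall z ρ)
    (hgr : ∀ P, GraphPiece n d P → P ⊆ K → μH[(d : ℝ)] P = 0) : μH[(d : ℝ)] K = 0 := by
  by_contra hK0
  have hKne : K.Nonempty := nonempty_of_measure_ne_zero hK0
  have hKF : K ⊆ E ∩ closedBall z r := fun x hx =>
    ⟨(hKE hx).1, closedBall_subset_closedBall hρr.le (hKE hx).2⟩
  have hFfin : μH[(d : ℝ)] (E ∩ closedBall z r) ≠ ⊤ := (hmin.2.2.1 z r hr).ne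
  have hKfin : μH[(d : ℝ)] K ≠ ⊤ := ne_top_of_le_ne_top hFfin (measure_mono hKF)
  have hFc := minimal_inter_closed hmin hr
  set C : ℝ := 2 + 3 * (2 * n + 1) with hC
  have hC0 : 0 < C := by positivity
  set Q : ℝ := 2 ^ n * 3 ^ (d + 1) * (2 * C) ^ d with hQ
  have hQ0 : 0 < Q := by positivity
  obtain ⟨k0, hk0⟩ : ∃ k0 : ℕ, 2 * Q * (1 / 2) ^ k0 ≤ 1 / 4 := by
    obtain ⟨k, hk⟩ := exists_pow_lt_of_lt_one (by positivity : 0 < 1 / 4 / (2 * Q))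
      (by norm_num : (1 / 2 : ℝ) < 1)
    exact ⟨k, by rw [mul_comm]; exact ((lt_div_iff₀ (by positivity)).1 hk).le⟩
  have hQe : ENNReal.ofReal (2 * Q) ≠ 0 := by simpa using hQ0
  obtain ⟨δ, hδ0, hδr, hδ⟩ := exists_shell (d := d) (E ∩ closedBall z r) K hFc hK.isClosed hKne
    hFfin (by linarith : 0 < (r - ρ) / 2)
    (η := ENNReal.ofReal (1 / 4) * μH[(d : ℝ)] K / ENNReal.ofReal (2 * Q))
    (ENNReal.div_pos (mul_ne_zero (by simp) hK0) ENNReal.ofReal_ne_top)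
  set S := {x ∈ E ∩ closedBall z r | infDist x K ≤ δ} \ K with hS
  have hSfin : μH[(d : ℝ)] S ≠ ⊤ := ne_top_of_le_ne_top hFfin (measure_mono fun x hx => hx.1.1)
  have hSm : MeasurableSet S :=
    ((hFc.inter (isClosed_le (continuous_infDist_pt K) continuous_const)).measurableSet).diff
      hK.isClosed.measurableSet
  have : IsFiniteMeasure ((μH[(d : ℝ)] : Measure (Euc n)).restrict K) :=
    ⟨by rw [Measure.restrict_apply_univ]; exact hKfin.lt_top⟩
  have : IsFiniteMeasure ((μH[(d : ℝ)] : Measure (Euc n)).restrict S) :=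
    ⟨by rw [Measure.restrict_apply_univ]; exact hSfin.lt_top⟩
  obtain ⟨ω, hωb, hgood, hcost⟩ := exists_frame hd hdn K hK hKfin hgr
    (fun i => (2 * n / δ) • EuclideanSpace.single i (1 : ℝ)) (by positivity : 0 < 1 / δ) hC0.le k0
    ((μH[(d : ℝ)] : Measure (Euc n)).restrict K) ((μH[(d : ℝ)] : Measure (Euc n)).restrict S) hQ
  obtain ⟨hnd, hV⟩ := box_nonDeg (by omega) hδ0 ω hωb
  obtain ⟨B, hBx, hBn⟩ := frame_inv (by positivity : 0 < 1 / δ) hnd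
  have hB : ∀ u, ‖B u‖ ≤ δ * ‖u‖ := fun u => by
    have := hBn u
    rw [one_div, inv_mul_le_iff₀ hδ0] at this
    exact this
  set χ : Euc n → ℝ := fun x => max 0 (1 - infDist x K / δ) with hχ
  have hχ0 : ∀ x, 0 ≤ χ x := fun x => le_max_left _ _
  have hχ1 : ∀ x, χ x ≤ 1 := fun x => max_le (by norm_num)
    (by have : 0 ≤ infDist x K / δ := div_nonneg infDist_nonneg hδ0.le
        linarith)
  have hχK : ∀ x ∈ K, χ x = 1 := fun x hx => by
    simp [hχ, infDist_zero_of_mem hx]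
  have hχoff : ∀ x, δ ≤ infDist x K → χ x = 0 := fun x hx => by
    apply max_eq_left
    have : 1 ≤ infDist x K / δ := (one_le_div₀ hδ0).2 hx
    linarith
  have hχlip : ∀ x y, |χ x - χ y| ≤ 1 / δ * dist x y := fun x y => by
    have h1 : |infDist x K - infDist y K| ≤ dist x y := by
      simpa [Real.dist_eq] using (lipschitz_infDist_pt K).dist_le_mul x y
    calc |χ x - χ y| ≤ |(1 - infDist x K / δ) - (1 - infDist y K / δ)| := by
          simpa [hχ] using abs_max_sub_max_le_max 0 (1 - infDist x K / δ) 0 (1 - infDist y K / δ)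
      _ = |infDist x K - infDist y K| / δ := by
          rw [← abs_of_pos hδ0, ← abs_div, abs_of_pos hδ0, ← abs_neg]
          congr 1; ring
      _ ≤ _ := by rw [div_mul_eq_mul_div, one_mul]; gcongr
  set ε : ℝ := (1 / 2) ^ k0 with hε
  have hε0 : 0 < ε := by positivity
  have hε1 : ε ≤ 1 := pow_le_one₀ (by norm_num) (by norm_num)
  set φ := defo d ω B χ ε with hφ
  have hlip : ∀ x y, dist (φ x) (φ y) ≤
      C / max (max (lowGap d (coords ω x)) ε) (max (lowGap d (coords ω y)) ε) * dist x y := by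
    intro x y
    have := defo_lip hdn ω B χ hε0 hε1 (by positivity : 0 ≤ (2 * (n : ℝ) + 1) / δ) hV hδ0.le hB
      hχ0 hχ1 (by positivity : 0 ≤ 1 / δ) hχlip x y
    have e : 1 + δ * (1 / δ) + 3 * (δ * ((2 * (n : ℝ) + 1) / δ)) = C := by
      rw [hC]; field_simp; ring
    rwa [e] at this
  have hlip' : LipschitzWith (C / ε).toNNReal φ := LipschitzWith.of_dist_le_mul fun x y => by
    rw [Real.coe_toNNReal _ (by positivity)]
    refine (hlip x y).trans ?_
    gcongr
    exact (le_max_right _ _).trans (le_max_left _ _)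
  have hfix : ∀ x, δ ≤ infDist x K → φ x = x := fun x hx => by
    simp [hφ, defo, hχoff x hx]
  have hdisp : ∀ x, dist (φ x) x ≤ δ :=
    defo_dist hdn ω B χ hε0 hε1 hδ0.le hB hχ0 hχ1
  have hnear : ∀ x, infDist x K < δ → dist x z ≤ ρ + δ := fun x hx => by
    obtain ⟨y, hy, hxy⟩ := (infDist_lt_iff hKne).1 hx
    have := (hKE hy).2
    rw [mem_closedBall] at this
    linarith [dist_triangle x y z]
  have hmin' := minimal_le hmin φ _ hlip' z r hr
    (fun x hx => hfix x (by
      by_contra! h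
      have := hnear x h
      rw [mem_closedBall] at hx
      exact hx (by linarith)))
    (fun x hx => by
      rcases lt_or_ge (infDist x K) δ with h | h
      · have h1 := hnear x h
        have h2 := hdisp x
        rw [mem_closedBall]
        linarith [dist_triangle (φ x) x z]
      · rw [hfix x h]; exact hx)
  set W := {y | φ y ≠ y} with hW
  have hEW : E ∩ W ⊆ K ∪ S := by
    rintro x ⟨hxE, hxW⟩
    have h1 : infDist x K < δ := by
      by_contra! h
      exact hxW (hfix x h)
    by_cases hxK : x ∈ K
    · exact Or.inl hxK
    · exact Or.inr ⟨⟨⟨hxE, by rw [mem_closedBall]; linarith [hnear x h1]⟩, h1.le⟩, hxK⟩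
  have hφS : μH[(d : ℝ)] (φ '' S) ≤ ∑ k ∈ Finset.range (k0 + 1),
      ENNReal.ofReal ((C * 2 ^ (k + 1)) ^ d) *
        (μH[(d : ℝ)] : Measure (Euc n)).restrict S {x | lowGap d (coords ω x) ≤ (1 / 2) ^ k} := by
    refine (cost_le φ (fun x => lowGap d (coords ω x)) (fun x => lowGap_le_one hdn _) hC0.le k0
      hlip S).trans_eq (Finset.sum_congr rfl fun k _ => ?_)
    rw [Measure.restrict_apply' hSm, inter_comm]
  have hφK : μH[(d : ℝ)] (φ '' K) ≤ ENNReal.ofReal ((C / ε) ^ d) *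
      (μH[(d : ℝ)] : Measure (Euc n)).restrict K {x | lowGap d (coords ω x) ≤ ε} := by
    have hsub : φ '' K ⊆ φ '' {x ∈ K | ε < lowGap d (coords ω x)} ∪
        φ '' (K ∩ {x | lowGap d (coords ω x) ≤ ε}) := by
      rw [← image_union]
      refine image_mono fun x hx => ?_
      rcases lt_or_ge ε (lowGap d (coords ω x)) with h | h
      · exact Or.inl ⟨hx, h⟩
      · exact Or.inr ⟨hx, h⟩
    refine (measure_mono hsub).trans ((measure_union_le _ _).trans ?_)
    rw [defo_null hdn ω B hBx χ K hχK hε0 (by positivity : 0 < 1 / δ) hnd hgood, zero_add,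
      Measure.restrict_apply' hK.measurableSet, inter_comm]
    exact cost_low φ (fun x => lowGap d (coords ω x)) hC0.le hε0 hlip _
  have hmain : μH[(d : ℝ)] K ≤ 2 * μH[(d : ℝ)] (φ '' K) + μH[(d : ℝ)] (φ '' S) := by
    have hKW : K ⊆ (E ∩ W) ∪ φ '' K := fun x hx => by
      by_cases hxW : φ x = x
      · exact Or.inr ⟨x, hx, hxW⟩
      · exact Or.inl ⟨(hKE hx).1, hxW⟩
    calc μH[(d : ℝ)] K ≤ μH[(d : ℝ)] (E ∩ W) + μH[(d : ℝ)] (φ '' K) :=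
          (measure_mono hKW).trans (measure_union_le _ _)
      _ ≤ μH[(d : ℝ)] (φ '' (K ∪ S)) + μH[(d : ℝ)] (φ '' K) :=
          add_le_add (hmin'.trans (measure_mono (image_mono hEW))) le_rfl
      _ ≤ (μH[(d : ℝ)] (φ '' K) + μH[(d : ℝ)] (φ '' S)) + μH[(d : ℝ)] (φ '' K) := by
          gcongr
          rw [image_union]; exact measure_union_le _ _
      _ = _ := by ring
  have hbound : ENNReal.ofReal (2 * Q * (1 / 2) ^ k0) * μH[(d : ℝ)] K +
      ENNReal.ofReal (2 * Q) * μH[(d : ℝ)] S ≤ ENNReal.ofReal (1 / 2) * μH[(d : ℝ)] K := by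
    have h1 : ENNReal.ofReal (2 * Q) * μH[(d : ℝ)] S ≤
        ENNReal.ofReal (1 / 4) * μH[(d : ℝ)] K := by
      rw [mul_comm]
      exact ENNReal.mul_le_of_le_div hδ.le
    calc _ ≤ ENNReal.ofReal (1 / 4) * μH[(d : ℝ)] K + ENNReal.ofReal (1 / 4) * μH[(d : ℝ)] K := by
          gcongr
      _ = _ := by
          rw [← add_mul, ← ENNReal.ofReal_add (by norm_num) (by norm_num)]
          norm_num
  rw [Measure.restrict_apply_univ, Measure.restrict_apply_univ] at hcost
  have hfinal : μH[(d : ℝ)] K ≤ ENNReal.ofReal (1 / 2) * μH[(d : ℝ)] K :=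
    hmain.trans ((add_le_add (mul_le_mul_right hφK 2) hφS).trans (hcost.trans hbound))
  have hlt : ENNReal.ofReal (1 / 2) * μH[(d : ℝ)] K < 1 * μH[(d : ℝ)] K :=
    ENNReal.mul_lt_mul_left hK0 hKfin (by
      rw [← ENNReal.ofReal_one]; exact (ENNReal.ofReal_lt_ofReal_iff one_pos).2 (by norm_num))
  rw [one_mul] at hlt
  exact absurd hfinal (not_le.2 hlt)

/-! ### Minimal sets are rectifiable, and the conclusion -/

lemma graphPiece_empty {n d : ℕ} (hdn : d ≤ n) : GraphPiece n d ∅ := by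
  set L : Euc n →ₗ[ℝ] Euc d := (WithLp.linearEquiv 2 ℝ (Fin d → ℝ)).symm.toLinearMap ∘ₗ
    LinearMap.funLeft ℝ ℝ (Fin.castLE hdn) ∘ₗ (WithLp.linearEquiv 2 ℝ (Fin n → ℝ)).toLinearMap
    with hL
  have hs : Function.Surjective L :=
    (WithLp.linearEquiv 2 ℝ (Fin d → ℝ)).symm.surjective.comp
      ((LinearMap.funLeft_surjective_of_injective ℝ ℝ _ (Fin.castLE_injective hdn)).comp
        (WithLp.linearEquiv 2 ℝ (Fin n → ℝ)).surjective)
  exact ⟨LinearMap.toContinuousLinearMap L, hs, 1, one_pos, fun x hx => absurd hx (notMem_empty x)⟩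

/-- A finite measure has a countable union of closed graph pieces of largest measure. -/
lemma exists_exhaust {n d : ℕ} (hdn : d ≤ n) (m : Measure (Euc n)) [IsFiniteMeasure m] :
    ∃ P : ℕ → Set (Euc n), (∀ i, GraphPiece n d (P i)) ∧ (∀ i, IsClosed (P i)) ∧
      ∀ S, GraphPiece n d S → IsClosed S → m (S \ ⋃ i, P i) = 0 := by
  set T : Set ℝ≥0∞ := {t | ∃ P : ℕ → Set (Euc n), (∀ i, GraphPiece n d (P i)) ∧
    (∀ i, IsClosed (P i)) ∧ m (⋃ i, P i) = t} with hT
  have hTne : T.Nonempty := ⟨_, fun _ => ∅, fun _ => graphPiece_empty hdn,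
    fun _ => isClosed_empty, rfl⟩
  obtain ⟨u, -, hu, huT⟩ := exists_seq_tendsto_sSup hTne (OrderTop.bddAbove T)
  choose P hPg hPc hPu using huT
  obtain ⟨e⟩ : Nonempty (ℕ ≃ ℕ × ℕ) := ⟨Nat.pairEquiv.symm⟩
  refine ⟨fun i => P (e i).1 (e i).2, fun i => hPg _ _, fun i => hPc _ _, fun S hSg hSc => ?_⟩
  set N := ⋃ i, P (e i).1 (e i).2 with hN
  have hsup : sSup T ≤ m N := le_of_tendsto' hu fun j => by
    rw [← hPu j]
    refine measure_mono (iUnion_subset fun i => ?_)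
    have := subset_iUnion (fun i => P (e i).1 (e i).2) (e.symm (j, i))
    simpa using this
  have hmem : m (S ∪ N) ∈ T := by
    refine ⟨fun i => Nat.casesOn i S fun i => P (e i).1 (e i).2, ?_, ?_, ?_⟩
    · rintro (_ | i)
      exacts [hSg, hPg _ _]
    · rintro (_ | i)
      exacts [hSc, hPc _ _]
    · congr 1
      ext x
      simp only [mem_iUnion, mem_union, hN]
      constructor
      · rintro ⟨_ | i, hi⟩
        exacts [Or.inl hi, Or.inr ⟨i, hi⟩]
      · rintro (h | ⟨i, hi⟩)
        exacts [⟨0, h⟩, ⟨i + 1, hi⟩]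
  have hle : m (S ∪ N) ≤ m N := (le_sSup hmem).trans hsup
  have hNm : MeasurableSet N := MeasurableSet.iUnion fun i => (hPc _ _).measurableSet
  rw [← sdiff_union_self, measure_union disjoint_sdiff_left hNm] at hle
  by_contra h0
  exact absurd hle (not_le.2 (by
    rw [add_comm]; exact ENNReal.lt_add_right (measure_ne_top m N) h0))

/-- A minimal set is, locally and up to a null set, a countable union of closed graph pieces. -/
lemma minimal_rect {n d : ℕ} (hd : 1 ≤ d) (hdn : d ≤ n) {U E : Set (Euc n)}
    (hmin : IsAAlmostMinimal n d U E (fun _ => 0)) {z : Euc n} {ρ r : ℝ} (hρr : ρ < r)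
    (hr : closedBall z r ⊆ U) :
    ∃ P : ℕ → Set (Euc n), (∀ i, GraphPiece n d (P i)) ∧ (∀ i, IsClosed (P i)) ∧
      μH[(d : ℝ)] ((E ∩ closedBall z ρ) \ ⋃ i, P i) = 0 := by
  rcases hdn.eq_or_lt with rfl | hlt
  · refine ⟨fun _ => univ, fun _ => ⟨ContinuousLinearMap.id ℝ _, Function.surjective_id, 1, one_pos,
      fun x _ y _ => by simp⟩, fun _ => isClosed_univ, ?_⟩
    rw [iUnion_const, sdiff_univ, measure_empty]
  have hρU : closedBall z ρ ⊆ U := (closedBall_subset_closedBall hρr.le).trans hr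
  set A0 := E ∩ closedBall z ρ with hA0
  have hA0c : IsClosed A0 := minimal_inter_closed hmin hρU
  have hfin : μH[(d : ℝ)] A0 ≠ ⊤ := (hmin.2.2.1 z ρ hρU).ne
  set m := (μH[(d : ℝ)] : Measure (Euc n)).restrict A0 with hm
  have : IsFiniteMeasure m := ⟨by rw [hm, Measure.restrict_apply_univ]; exact hfin.lt_top⟩
  obtain ⟨P, hPg, hPc, hP⟩ := exists_exhaust hdn m
  refine ⟨P, hPg, hPc, ?_⟩
  set N := ⋃ i, P i with hN
  have hNm : MeasurableSet N := MeasurableSet.iUnion fun i => (hPc i).measurableSet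
  have hAm : MeasurableSet (A0 \ N) := hA0c.measurableSet.diff hNm
  by_contra h0
  have hmA : m (A0 \ N) = μH[(d : ℝ)] (A0 \ N) :=
    Measure.restrict_eq_self _ sdiff_subset
  obtain ⟨K, hKA, hK, hK0⟩ := hAm.exists_lt_isCompact (μ := m) (r := 0)
    (by rw [hmA]; exact pos_iff_ne_zero.2 h0)
  have hKE : K ⊆ A0 := hKA.trans sdiff_subset
  rw [hm, Measure.restrict_eq_self _ hKE] at hK0
  refine hK0.ne' (unrect_null hd hlt hmin hρr hr K hK hKE fun S hS hSK => ?_)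
  have h1 := hP _ (graphPiece_closure hS) isClosed_closure
  rw [hm, Measure.restrict_apply' hA0c.measurableSet] at h1
  refine measure_mono_null ?_ h1
  exact fun x hx => ⟨⟨subset_closure hx, (hKA (hSK hx)).2⟩, hKE (hSK hx)⟩

/-- The product form of monotonicity, for two radii strictly inside the ball. -/
lemma monotone_inner {n d : ℕ} {U E : Set (Euc n)}
    (hmin : IsAAlmostMinimal n d U E (fun _ => 0)) {x : Euc n} {r₁ r₂ r : ℝ} (h0 : 0 < r₁)
    (h12 : r₁ < r₂) (h2 : r₂ < r) (hr : closedBall x r ⊆ U) :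
    μH[(d : ℝ)] (E ∩ ball x r₁) * ENNReal.ofReal (r₂ ^ d) ≤
      μH[(d : ℝ)] (E ∩ ball x r₂) * ENNReal.ofReal (r₁ ^ d) := by
  rcases Nat.eq_zero_or_pos d with rfl | hd
  · simp only [pow_zero]
    gcongr
  rcases le_or_gt d n with hdn | hnd
  · obtain ⟨P, hPg, hPc, hP⟩ := minimal_rect hd hdn hmin h2 hr
    exact monotone_of_rect hd hmin x r₁ r₂ h0 h12
      ((closedBall_subset_closedBall h2.le).trans hr) P hPg hPc hP
  · -- above the ambient dimension the measure vanishes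
    have hz : μH[(d : ℝ)] (univ : Set (Euc n)) = 0 := by
      have : dimH (univ : Set (Euc n)) < (d : ℝ≥0) := by
        rw [Real.dimH_univ_eq_finrank]
        simpa using hnd
      simpa using hausdorffMeasure_of_dimH_lt this
    rw [measure_mono_null (subset_univ _) hz, zero_mul]
    exact zero_le

/-- **Proposition 5.16.** If `E` is a minimal set of dimension `d` in `U` (an
A-almost-minimal set with gauge function `h = 0`) and `B(x,R) ⊆ U`, then
`r ↦ r^{-d} H^d(E ∩ B(x,r))` is nondecreasing on `(0,R]`. -/
theorem density_monotone_minimal (n d : ℕ) (U E : Set (Euc n)) (hU : IsOpen U)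
    (hmin : IsAAlmostMinimal n d U E (fun _ => 0))
    (x : Euc n) (hx : x ∈ U) (R : ℝ) (hR : 0 < R) (hball : ball x R ⊆ U) :
    ∀ r₁ r₂ : ℝ, 0 < r₁ → r₁ ≤ r₂ → r₂ ≤ R →
      μH[(d:ℝ)] (E ∩ ball x r₁) / ENNReal.ofReal (r₁ ^ d) ≤
        μH[(d:ℝ)] (E ∩ ball x r₂) / ENNReal.ofReal (r₂ ^ d) := by
  intro r₁ r₂ h0 h12 h2R
  rcases h12.eq_or_lt with rfl | h12
  · exact le_rfl
  have hprod : μH[(d:ℝ)] (E ∩ ball x r₁) * ENNReal.ofReal (r₂ ^ d) ≤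
      μH[(d:ℝ)] (E ∩ ball x r₂) * ENNReal.ofReal (r₁ ^ d) := by
    -- closed balls of radius less than `R` lie in `U`; let the larger radius increase to `r₂`
    have hlim : Tendsto (fun s : ℝ => μH[(d:ℝ)] (E ∩ ball x r₁) * ENNReal.ofReal (s ^ d))
        (𝓝[<] r₂) (𝓝 (μH[(d:ℝ)] (E ∩ ball x r₁) * ENNReal.ofReal (r₂ ^ d))) := by
      refine ENNReal.Tendsto.const_mul (ENNReal.tendsto_ofReal
        (((continuous_pow d).tendsto r₂).mono_left nhdsWithin_le_nhds)) (Or.inl ?_)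
      exact (ENNReal.ofReal_pos.2 (pow_pos (h0.trans h12) d)).ne'
    refine le_of_tendsto hlim ?_
    filter_upwards [Ioo_mem_nhdsLT h12] with s hs
    obtain ⟨t, hst, ht⟩ := exists_between hs.2
    refine (monotone_inner hmin h0 hs.1 hst
      ((closedBall_subset_ball (ht.trans_le h2R)).trans hball)).trans ?_
    exact mul_le_mul_left (measure_mono (inter_subset_inter_right _ (ball_subset_ball hs.2.le))) _
  have e1 : ENNReal.ofReal (r₁ ^ d) ≠ 0 := (ENNReal.ofReal_pos.2 (pow_pos h0 d)).ne'
  have e2 : ENNReal.ofReal (r₂ ^ d) ≠ 0 := (ENNReal.ofReal_pos.2 (pow_pos (h0.trans h12) d)).ne'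
  rw [ENNReal.div_le_iff e1 ENNReal.ofReal_ne_top, ENNReal.mul_comm_div, ← mul_div_assoc,
    ENNReal.le_div_iff_mul_le (Or.inl e2) (Or.inl ENNReal.ofReal_ne_top)]
  exact hprod
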